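/- arXiv:1609.00290 — 3 statements merged into one kernel-verified Lean document; each statement's English description precedes it below -/
import Mathlib

section
/- Fix integers k1 ≥ 2, k2 ≥ 2 and set k := min{k1,k2}. Fix reals ε > 0 and C1 > max{k1,k2} + ε. Let C_{k1,k2}(N,M) denote the number of (k1,k2)-dicores on vertex set {1,…,N} with M edges that are k-strongly connected, and let D_{k1,k2}(N,M) denote the total number of (k1,k2)-dicores on {1,…,N} with M edges. Then there is a constant C > 0 such that for all positive integers N, M with (max{k1,k2}+ε)·N ≤ M ≤ C1·N one has |C_{k1,k2}(N,M)/D_{k1,k2}(N,M) − 1| ≤ C · N^{-(k-1)}. -/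
/-- A `(k1,k2)`-dicore on vertex set `Fin N` with `M` edges: a simple digraph
(edges are ordered pairs of distinct vertices; a `Finset` has no repeated edges)
with exactly `M` edges, minimum in-degree `≥ k1` and minimum out-degree `≥ k2`. -/
def IsDicore (k1 k2 N M : ℕ) (E : Finset (Fin N × Fin N)) : Prop :=
  E.card = M ∧ (∀ e ∈ E, e.1 ≠ e.2) ∧
    ∀ v : Fin N,
      k1 ≤ (E.filter (fun e => e.2 = v)).card ∧
      k2 ≤ (E.filter (fun e => e.1 = v)).card

/-- A digraph on `N` vertices is `k`-strongly connected if `N > k` and, for every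
set `T` of fewer than `k` vertices, every ordered pair of remaining vertices is
joined by a directed path avoiding `T`. -/
def KStronglyConnected {N : ℕ} (k : ℕ) (E : Finset (Fin N × Fin N)) : Prop :=
  k < N ∧ ∀ T : Finset (Fin N), T.card < k →
    ∀ u v : Fin N, u ∉ T → v ∉ T →
      Relation.ReflTransGen (fun a b => a ∉ T ∧ b ∉ T ∧ (a, b) ∈ E) u v

/-!
The proof is by switching. Moves that change a few edges compare the numbers of dicores with
nearby edge sets, and redirecting a prescribed edge shows that a fixed set `F` of few edges lies
in at most a fraction `(C / N) ^ #F` of the dicores. A first moment bound over dense spots then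
shows that small sets of vertices expand, in both directions and after deleting fewer than `k`
vertices, in all but a fraction `O(N ^ (-(k - 1)))` of the dicores, and merging an edge into a
vertex of minimum in-degree with an edge out of a vertex of minimum out-degree shows that nearly
all dicores have linearly many removable edges.

An expanding dicore `E` that is not `k`-strongly connected, and has many removable edges, is
destroyed by resampling: remove a set `X` of about `√N` removable edges. Expansion leaves a set of
linear size reachable in `E \ X` from one vertex and a set of linear size from which another
vertex can be reached, and no edge of `X` joins the first set to the second. A random set of `√N`
non-edges has this property only with probability exponentially small in `√N`, and a weighted
double count of the pairs `(E, X)` transfers this bound to the dicores themselves.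
-/

namespace Dicore

open Finset

section DoubleCounting

lemma card_mul_le_card_mul_of_moves {α β γ : Type*} (X : Finset α) (Y : Finset β)
    (out : α → Finset γ) (f : α → γ → β) (back : β → Finset γ) (inv : β → γ → α) {a b : ℝ}
    (ha : ∀ x ∈ X, a ≤ #(out x)) (hb : ∀ y ∈ Y, (#(back y) : ℝ) ≤ b)
    (hf : ∀ x ∈ X, ∀ g ∈ out x, f x g ∈ Y ∧ g ∈ back (f x g) ∧ inv (f x g) g = x) :
    a * #X ≤ b * #Y := by
  have hcard : #(X.sigma out) ≤ #(Y.sigma back) := by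
    refine card_le_card_of_injOn (fun p => ⟨f p.1 p.2, p.2⟩) ?_ ?_
    · rintro ⟨x, g⟩ hp
      simp only [coe_sigma, Set.mem_sigma_iff, mem_coe] at hp ⊢
      exact ⟨(hf x hp.1 g hp.2).1, (hf x hp.1 g hp.2).2.1⟩
    · rintro ⟨x, g⟩ hp ⟨x', g'⟩ hp' h
      simp only [coe_sigma, Set.mem_sigma_iff, mem_coe] at hp hp'
      obtain ⟨hxx', rfl⟩ : f x g = f x' g' ∧ g = g' := by simpa using h
      rw [← (hf x hp.1 g hp.2).2.2, hxx', (hf x' hp'.1 g hp'.2).2.2]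
  rw [card_sigma, card_sigma] at hcard
  calc a * #X ≤ ∑ x ∈ X, (#(out x) : ℝ) := by
        simpa [mul_comm] using card_nsmul_le_sum _ _ _ ha
    _ ≤ ∑ y ∈ Y, (#(back y) : ℝ) := mod_cast hcard
    _ ≤ b * #Y := by simpa [mul_comm] using sum_le_card_nsmul _ _ _ hb

end DoubleCounting

section Reverse

variable {V : Type*}

/-- The digraph obtained by reversing every edge; it exchanges in-degrees and out-degrees. -/
def reverse (E : Finset (V × V)) : Finset (V × V) := E.map (Equiv.prodComm V V).toEmbedding

@[simp] lemma mk_mem_reverse {E : Finset (V × V)} {a b : V} : (a, b) ∈ reverse E ↔ (b, a) ∈ E := by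
  simp [reverse]

@[simp] lemma reverse_reverse (E : Finset (V × V)) : reverse (reverse E) = E := by
  ext ⟨a, b⟩
  simp

@[simp] lemma card_reverse (E : Finset (V × V)) : #(reverse E) = #E := card_map _

lemma card_filter_reverse (E : Finset (V × V)) (p : V × V → Prop) [DecidablePred p] :
    #{e ∈ reverse E | p e} = #{e ∈ E | p e.swap} := by
  rw [reverse, filter_map, card_map]
  rfl

lemma reverse_subset_reverse {E E' : Finset (V × V)} : reverse E ⊆ reverse E' ↔ E ⊆ E' :=
  map_subset_map

variable [DecidableEq V]

lemma reverse_erase (E : Finset (V × V)) (e : V × V) :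
    reverse (E.erase e) = (reverse E).erase e.swap := map_erase _ _ _

lemma reverse_sdiff (E X : Finset (V × V)) : reverse (E \ X) = reverse E \ reverse X := by
  ext ⟨a, b⟩
  simp

end Reverse

section Degrees

variable {V : Type*} [DecidableEq V] {E E' : Finset (V × V)} {e : V × V}

/-- The out-degree of `v` in the digraph with edge set `E`. -/
def outdeg (E : Finset (V × V)) (v : V) : ℕ := #{e ∈ E | e.1 = v}

/-- The in-degree of `v` in the digraph with edge set `E`. -/
def indeg (E : Finset (V × V)) (v : V) : ℕ := #{e ∈ E | e.2 = v}

@[simp] lemma outdeg_reverse (E : Finset (V × V)) (v : V) : outdeg (reverse E) v = indeg E v :=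
  card_filter_reverse E _

@[simp] lemma indeg_reverse (E : Finset (V × V)) (v : V) : indeg (reverse E) v = outdeg E v := by
  rw [← outdeg_reverse, reverse_reverse]

lemma outdeg_mono (h : E ⊆ E') (v : V) : outdeg E v ≤ outdeg E' v :=
  card_le_card (filter_subset_filter _ h)

lemma indeg_mono (h : E ⊆ E') (v : V) : indeg E v ≤ indeg E' v :=
  card_le_card (filter_subset_filter _ h)

lemma outdeg_insert (he : e ∉ E) (v : V) :
    outdeg (insert e E) v = outdeg E v + if e.1 = v then 1 else 0 := by
  unfold outdeg
  rw [filter_insert]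
  split_ifs <;> simp [he]

lemma indeg_insert (he : e ∉ E) (v : V) :
    indeg (insert e E) v = indeg E v + if e.2 = v then 1 else 0 := by
  unfold indeg
  rw [filter_insert]
  split_ifs <;> simp [he]

lemma outdeg_erase_add (he : e ∈ E) (v : V) :
    outdeg (E.erase e) v + (if e.1 = v then 1 else 0) = outdeg E v := by
  rw [← outdeg_insert (notMem_erase e E), insert_erase he]

lemma indeg_erase_add (he : e ∈ E) (v : V) :
    indeg (E.erase e) v + (if e.2 = v then 1 else 0) = indeg E v := by
  rw [← indeg_insert (notMem_erase e E), insert_erase he]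

variable [Fintype V]

lemma card_filter_mk_mem_left (E : Finset (V × V)) (a : V) : #{d | (a, d) ∈ E} = outdeg E a := by
  refine card_bij (fun d _ => (a, d)) ?_ ?_ ?_
  · intro d hd
    simpa using hd
  · intro d _ d' _ h
    simpa using h
  · rintro ⟨a, d⟩ h
    obtain ⟨had, rfl⟩ := mem_filter.1 h
    exact ⟨d, by simpa using had, rfl⟩

lemma card_filter_mk_mem_right (E : Finset (V × V)) (b : V) : #{c | (c, b) ∈ E} = indeg E b := by
  simpa using card_filter_mk_mem_left (reverse E) b

lemma card_le_card_newHeads (E : Finset (V × V)) (a : V) :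
    Fintype.card V ≤ #{d | d ≠ a ∧ (a, d) ∉ E} + 1 + outdeg E a := by
  have hsub : ({d | (a, d) ∉ E} : Finset V) ⊆
      insert a ({d | d ≠ a ∧ (a, d) ∉ E} : Finset V) := by
    intro d hd
    simp only [mem_insert, mem_filter, mem_univ, true_and] at hd ⊢
    tauto
  rw [← card_filter_mk_mem_left, ← card_univ,
    ← card_filter_add_card_filter_not (fun d => (a, d) ∈ E), add_comm]
  gcongr
  exact (card_le_card hsub).trans (card_insert_le _ _)

lemma card_filter_outdeg_le (k : ℕ) (E : Finset (V × V)) :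
    #{e ∈ E | outdeg E e.1 ≤ k} ≤ k * Fintype.card V := by
  refine card_le_mul_card_image_of_maps_to (f := Prod.fst) (fun _ _ => mem_univ _) k fun v _ => ?_
  by_cases hv : outdeg E v ≤ k
  · refine (card_le_card fun e he => ?_).trans hv
    simp only [mem_filter] at he ⊢
    exact ⟨he.1.1, he.2⟩
  · rw [filter_false_of_mem, card_empty]
    · exact Nat.zero_le _
    · rintro e he rfl
      exact hv (mem_filter.1 he).2

end Degrees

section NonEdges

variable {V : Type*} [DecidableEq V] [Fintype V] {E : Finset (V × V)} {e : V × V}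

/-- The pairs of distinct vertices that are not edges of `E`, i.e. the edges that can be added. -/
def nonEdges (E : Finset (V × V)) : Finset (V × V) := {e | e.1 ≠ e.2 ∧ e ∉ E}

lemma mem_nonEdges : e ∈ nonEdges E ↔ e.1 ≠ e.2 ∧ e ∉ E := by simp [nonEdges]

lemma card_nonEdges_add (hE : ∀ e ∈ E, e.1 ≠ e.2) :
    #(nonEdges E) + #E = Fintype.card V * (Fintype.card V - 1) := by
  have hoff : nonEdges E = (univ : Finset V).offDiag \ E := by
    ext e
    simp [mem_nonEdges, mem_offDiag]
  have hsub : E ⊆ (univ : Finset V).offDiag := fun e he => by simpa [mem_offDiag] using hE e he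
  rw [hoff, card_sdiff_add_card_eq_card hsub, offDiag_card, card_univ, Nat.mul_sub_one]

end NonEdges

section Surplus

variable {V : Type*} [DecidableEq V] {k1 k2 : ℕ} {E E' : Finset (V × V)} {e : V × V}

/-- The edges that can be removed without bringing an in-degree below `k1` or an out-degree
below `k2`. -/
def surplus (k1 k2 : ℕ) (E : Finset (V × V)) : Finset (V × V) :=
  {e ∈ E | k1 < indeg E e.2 ∧ k2 < outdeg E e.1}

/-- The edges whose tail has an out-degree above the minimum `k2` and whose head has exactly the
minimum in-degree `k1`. -/
def tailSurplus (k1 k2 : ℕ) (E : Finset (V × V)) : Finset (V × V) :=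
  {e ∈ E | indeg E e.2 = k1 ∧ k2 < outdeg E e.1}

/-- The edges whose head has an in-degree above the minimum `k1` and whose tail has exactly the
minimum out-degree `k2`. -/
def headSurplus (k1 k2 : ℕ) (E : Finset (V × V)) : Finset (V × V) :=
  {e ∈ E | k1 < indeg E e.2 ∧ outdeg E e.1 = k2}

lemma mem_surplus : e ∈ surplus k1 k2 E ↔ e ∈ E ∧ k1 < indeg E e.2 ∧ k2 < outdeg E e.1 :=
  mem_filter

lemma mem_tailSurplus : e ∈ tailSurplus k1 k2 E ↔ e ∈ E ∧ indeg E e.2 = k1 ∧ k2 < outdeg E e.1 :=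
  mem_filter

lemma mem_headSurplus : e ∈ headSurplus k1 k2 E ↔ e ∈ E ∧ k1 < indeg E e.2 ∧ outdeg E e.1 = k2 :=
  mem_filter

lemma card_surplus_reverse (k1 k2 : ℕ) (E : Finset (V × V)) :
    #(surplus k2 k1 (reverse E)) = #(surplus k1 k2 E) := by
  simp only [surplus, card_filter_reverse, indeg_reverse, outdeg_reverse, Prod.fst_swap,
    Prod.snd_swap, and_comm]

lemma card_tailSurplus_reverse (k1 k2 : ℕ) (E : Finset (V × V)) :
    #(tailSurplus k2 k1 (reverse E)) = #(headSurplus k1 k2 E) := by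
  simp only [tailSurplus, headSurplus, card_filter_reverse, indeg_reverse, outdeg_reverse,
    Prod.fst_swap, Prod.snd_swap, and_comm]

lemma surplus_mono (k1 k2 : ℕ) (h : E ⊆ E') : surplus k1 k2 E ⊆ surplus k1 k2 E' := by
  intro e he
  rw [mem_surplus] at he ⊢
  exact ⟨h he.1, he.2.1.trans_le (indeg_mono h _), he.2.2.trans_le (outdeg_mono h _)⟩

lemma card_filter_outdeg_erase_le (k : ℕ) (E : Finset (V × V)) (e : V × V) :
    #{x ∈ E | k < outdeg E x.1 ∧ outdeg (E.erase e) x.1 ≤ k} ≤ k + 1 := by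
  by_cases he : e ∈ E
  · have hstar : {x ∈ E | k < outdeg E x.1 ∧ outdeg (E.erase e) x.1 ≤ k} ⊆
        {x ∈ E | x.1 = e.1 ∧ outdeg E e.1 = k + 1} := by
      intro x hx
      simp only [mem_filter] at hx ⊢
      have hdeg := outdeg_erase_add he x.1
      split_ifs at hdeg with h
      · exact ⟨hx.1, h.symm, by rw [h]; omega⟩
      · omega
    refine (card_le_card hstar).trans ?_
    by_cases hk : outdeg E e.1 = k + 1
    · simp only [hk, and_true]
      exact hk.le
    · simp [hk]
  · rw [erase_eq_of_notMem he, filter_false_of_mem fun x _ => by omega, card_empty]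
    exact Nat.zero_le _

lemma card_filter_indeg_erase_le (k : ℕ) (E : Finset (V × V)) (e : V × V) :
    #{x ∈ E | k < indeg E x.2 ∧ indeg (E.erase e) x.2 ≤ k} ≤ k + 1 := by
  simpa [card_filter_reverse, ← reverse_erase] using
    card_filter_outdeg_erase_le k (reverse E) e.swap

lemma card_surplus_le_erase (k1 k2 : ℕ) (E : Finset (V × V)) (e : V × V) :
    #(surplus k1 k2 E) ≤ #(surplus k1 k2 (E.erase e)) + (k1 + k2 + 3) := by
  have hsub : surplus k1 k2 E ⊆ insert e (surplus k1 k2 (E.erase e)) ∪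
      ({x ∈ E | k1 < indeg E x.2 ∧ indeg (E.erase e) x.2 ≤ k1} ∪
        {x ∈ E | k2 < outdeg E x.1 ∧ outdeg (E.erase e) x.1 ≤ k2}) := by
    intro x hx
    rw [mem_surplus] at hx
    simp only [mem_union, mem_insert, mem_surplus, mem_erase, mem_filter, hx, true_and]
    by_cases hxe : x = e
    · exact Or.inl (Or.inl hxe)
    · simp only [ne_eq, hxe, not_false_eq_true, true_and, false_or]
      omega
  have hunion := (card_le_card hsub).trans <|
    (card_union_le _ _).trans (add_le_add (card_insert_le _ _) (card_union_le _ _))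
  have hin := card_filter_indeg_erase_le k1 E e
  have hout := card_filter_outdeg_erase_le k2 E e
  omega

lemma card_surplus_insert_le (k1 k2 : ℕ) (E : Finset (V × V)) (e : V × V) :
    #(surplus k1 k2 (insert e E)) ≤ #(surplus k1 k2 E) + (k1 + k2 + 3) := by
  refine (card_surplus_le_erase k1 k2 (insert e E) e).trans ?_
  gcongr
  exact surplus_mono k1 k2 (erase_insert_eq_erase E e ▸ erase_subset e E)

lemma card_surplus_le_sdiff (k1 k2 : ℕ) (E X : Finset (V × V)) :
    #(surplus k1 k2 E) ≤ #(surplus k1 k2 (E \ X)) + #X * (k1 + k2 + 3) := by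
  induction X using Finset.induction_on with
  | empty => simp
  | insert e X he ih =>
    have herase := card_surplus_le_erase k1 k2 (E \ X) e
    rw [← sdiff_insert] at herase
    rw [card_insert_of_notMem he]
    linarith

variable [Fintype V]

lemma card_le_tailSurplus_add (hE : ∀ v, k1 ≤ indeg E v) :
    #E ≤ #(tailSurplus k1 k2 E) + #(surplus k1 k2 E) + k2 * Fintype.card V := by
  have hsub : E ⊆ tailSurplus k1 k2 E ∪ surplus k1 k2 E ∪ {e ∈ E | outdeg E e.1 ≤ k2} := by
    intro e he
    have := hE e.2
    simp only [mem_union, mem_tailSurplus, mem_surplus, mem_filter, he, true_and]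
    omega
  exact (card_le_card hsub).trans <| (card_union_le _ _).trans <|
    add_le_add (card_union_le _ _) (card_filter_outdeg_le k2 E)

lemma card_le_headSurplus_add (hE : ∀ v, k2 ≤ outdeg E v) :
    #E ≤ #(headSurplus k1 k2 E) + #(surplus k1 k2 E) + k1 * Fintype.card V := by
  simpa [card_tailSurplus_reverse, card_surplus_reverse] using
    card_le_tailSurplus_add (k1 := k2) (k2 := k1) (E := reverse E) (by simpa using hE)

end Surplus

section Merge

variable {V : Type*} [DecidableEq V] {k1 k2 : ℕ} {E F : Finset (V × V)} {p : (V × V) × (V × V)}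

/-- The pairs of a tail-surplus edge `(a, b)` and a head-surplus edge `(c, d)` outside `F` that may
be replaced by the single edge `(c, b)`. -/
def mergePairs (k1 k2 : ℕ) (F E : Finset (V × V)) : Finset ((V × V) × (V × V)) :=
  {p ∈ (tailSurplus k1 k2 E \ F) ×ˢ (headSurplus k1 k2 E \ F) | p.2.1 ≠ p.1.2 ∧ (p.2.1, p.1.2) ∉ E}

/-- The digraph in which the edges `p.1 = (a, b)` and `p.2 = (c, d)` are replaced by `(c, b)`. -/
def merge (E : Finset (V × V)) (p : (V × V) × (V × V)) : Finset (V × V) :=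
  insert (p.2.1, p.1.2) ((E.erase p.1).erase p.2)

lemma mem_mergePairs : p ∈ mergePairs k1 k2 F E ↔
    (p.1 ∈ tailSurplus k1 k2 E ∧ p.1 ∉ F) ∧ (p.2 ∈ headSurplus k1 k2 E ∧ p.2 ∉ F) ∧
      p.2.1 ≠ p.1.2 ∧ (p.2.1, p.1.2) ∉ E := by
  simp only [mergePairs, mem_filter, mem_product, mem_sdiff, and_assoc]

lemma left_mem_of_mem_mergePairs (hp : p ∈ mergePairs k1 k2 F E) : p.1 ∈ E :=
  (mem_tailSurplus.1 (mem_mergePairs.1 hp).1.1).1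

lemma right_mem_erase_of_mem_mergePairs (hp : p ∈ mergePairs k1 k2 F E) : p.2 ∈ E.erase p.1 := by
  obtain ⟨⟨htail, -⟩, ⟨hhead, -⟩, -⟩ := mem_mergePairs.1 hp
  rw [mem_tailSurplus] at htail
  rw [mem_headSurplus] at hhead
  refine mem_erase.2 ⟨fun h => ?_, hhead.1⟩
  rw [h] at hhead
  omega

lemma notMem_erase_erase_of_mem_mergePairs (hp : p ∈ mergePairs k1 k2 F E) :
    (p.2.1, p.1.2) ∉ (E.erase p.1).erase p.2 :=
  fun h => (mem_mergePairs.1 hp).2.2.2 (mem_of_mem_erase (mem_of_mem_erase h))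

lemma card_merge_add_one (hp : p ∈ mergePairs k1 k2 F E) : #(merge E p) + 1 = #E := by
  have h1 := card_erase_add_one (left_mem_of_mem_mergePairs hp)
  have h2 := card_erase_add_one (right_mem_erase_of_mem_mergePairs hp)
  rw [merge, card_insert_of_notMem (notMem_erase_erase_of_mem_mergePairs hp)]
  omega

lemma indeg_merge_add (hp : p ∈ mergePairs k1 k2 F E) (v : V) :
    indeg (merge E p) v + (if p.2.2 = v then 1 else 0) = indeg E v := by
  have h1 := indeg_erase_add (left_mem_of_mem_mergePairs hp) v
  have h2 := indeg_erase_add (right_mem_erase_of_mem_mergePairs hp) v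
  rw [merge, indeg_insert (notMem_erase_erase_of_mem_mergePairs hp)]
  dsimp only
  omega

lemma outdeg_merge_add (hp : p ∈ mergePairs k1 k2 F E) (v : V) :
    outdeg (merge E p) v + (if p.1.1 = v then 1 else 0) = outdeg E v := by
  have h1 := outdeg_erase_add (left_mem_of_mem_mergePairs hp) v
  have h2 := outdeg_erase_add (right_mem_erase_of_mem_mergePairs hp) v
  rw [merge, outdeg_insert (notMem_erase_erase_of_mem_mergePairs hp)]
  dsimp only
  omega

lemma subset_merge (hF : F ⊆ E) (hp : p ∈ mergePairs k1 k2 F E) : F ⊆ merge E p := by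
  obtain ⟨⟨-, h1⟩, ⟨-, h2⟩, -⟩ := mem_mergePairs.1 hp
  exact (subset_erase.2 ⟨subset_erase.2 ⟨hF, h1⟩, h2⟩).trans (subset_insert _ _)

lemma insert_insert_erase_merge (hp : p ∈ mergePairs k1 k2 F E) :
    insert p.1 (insert p.2 ((merge E p).erase (p.2.1, p.1.2))) = E := by
  rw [merge, erase_insert (notMem_erase_erase_of_mem_mergePairs hp),
    insert_erase (right_mem_erase_of_mem_mergePairs hp),
    insert_erase (left_mem_of_mem_mergePairs hp)]

lemma card_surplus_merge_le (k1 k2 : ℕ) (E : Finset (V × V)) (p : (V × V) × (V × V)) :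
    #(surplus k1 k2 (merge E p)) ≤ #(surplus k1 k2 E) + (k1 + k2 + 3) := by
  refine (card_surplus_insert_le _ _ _ _).trans ?_
  gcongr
  exact surplus_mono _ _ ((erase_subset _ _).trans (erase_subset _ _))

lemma card_filter_headSurplus_le (k2 : ℕ) (E : Finset (V × V)) (b : V) :
    #{x ∈ headSurplus k1 k2 E | x.1 = b ∨ (x.1, b) ∈ E} ≤ k2 * (indeg E b + 1) := by
  have htails : #(insert b ({x ∈ E | x.2 = b}.image Prod.fst)) ≤ indeg E b + 1 :=
    (card_insert_le _ _).trans (Nat.succ_le_succ card_image_le)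
  refine (card_le_mul_card_image_of_maps_to (f := Prod.fst) ?_ k2 fun c _ => ?_).trans
    (Nat.mul_le_mul_left _ htails)
  · intro x hx
    simpa using (mem_filter.1 hx).2
  · by_cases hc : outdeg E c = k2
    · rw [← hc]
      refine card_le_card fun x hx => ?_
      simp only [mem_filter, mem_headSurplus] at hx ⊢
      exact ⟨hx.1.1.1, hx.2⟩
    · rw [filter_false_of_mem, card_empty]
      · exact Nat.zero_le _
      · rintro x hx rfl
        exact hc (mem_headSurplus.1 (mem_filter.1 hx).1).2.2

lemma card_mul_card_le_mergePairs_add (k1 k2 : ℕ) (F E : Finset (V × V)) :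
    #(tailSurplus k1 k2 E \ F) * #(headSurplus k1 k2 E \ F) ≤
      #(mergePairs k1 k2 F E) + k2 * (k1 + 1) * #(tailSurplus k1 k2 E \ F) := by
  rw [← card_product,
    ← card_filter_add_card_filter_not (fun p => p.2.1 ≠ p.1.2 ∧ (p.2.1, p.1.2) ∉ E)]
  refine Nat.add_le_add_left (card_le_mul_card_image_of_maps_to (f := Prod.fst) ?_ _ ?_) _
  · intro p hp
    exact (mem_product.1 (mem_filter.1 hp).1).1
  · intro e he
    have hstar := card_filter_headSurplus_le (k1 := k1) k2 E e.2
    rw [(mem_tailSurplus.1 (mem_sdiff.1 he).1).2.1] at hstar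
    refine le_trans (card_le_card_of_injOn Prod.snd ?_ ?_) hstar
    · rintro ⟨x, y⟩ hp
      simp only [coe_filter, mem_filter, mem_product, mem_sdiff, Set.mem_ofPred_eq] at hp ⊢
      obtain ⟨⟨⟨-, hy, -⟩, hxy⟩, rfl⟩ := hp
      exact ⟨hy, by tauto⟩
    · rintro ⟨x, y⟩ hp ⟨x', y'⟩ hp' h
      simp only [coe_filter, Set.mem_ofPred_eq] at hp hp'
      exact Prod.ext (hp.2.trans hp'.2.symm) h

variable [Fintype V]

lemma card_filter_merged_mem (E : Finset (V × V)) :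
    #{p : (V × V) × (V × V) | (p.2.1, p.1.2) ∈ E} = #E * Fintype.card V ^ 2 := by
  have himage : #{p : (V × V) × (V × V) | (p.2.1, p.1.2) ∈ E} = #(E ×ˢ (univ : Finset (V × V))) :=
    card_bij' (fun p _ => ((p.2.1, p.1.2), p.1.1, p.2.2))
      (fun q _ => ((q.2.1, q.1.2), q.1.1, q.2.2))
      (by simp) (by simp) (by simp) (by simp)
  rw [himage, card_product, card_univ, Fintype.card_prod, sq]

end Merge

section Dicores

variable {N k1 k2 M : ℕ} {ε C1 : ℝ} {E F : Finset (Fin N × Fin N)} {e : Fin N × Fin N}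
  {p : (Fin N × Fin N) × (Fin N × Fin N)}

/-- The range of edge numbers of the theorem: `M` exceeds both `k1 * N` and `k2 * N` by a linear
amount and is itself linear in `N`. -/
structure InRange (k1 k2 : ℕ) (ε C1 : ℝ) (N M : ℕ) : Prop where
  in_le : (k1 + ε) * N ≤ M
  out_le : (k2 + ε) * N ≤ M
  le : (M : ℝ) ≤ C1 * N

lemma InRange.swap (h : InRange k1 k2 ε C1 N M) : InRange k2 k1 ε C1 N M :=
  ⟨h.out_le, h.in_le, h.le⟩

/-- The size requirements on `N` under which the switching estimates below hold. -/
structure IsLarge (k1 k2 : ℕ) (ε C1 : ℝ) (N : ℕ) : Prop where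
  mul_le : ((k1 + 1) * (k2 + 1) : ℝ) ≤ ε / 4 * N
  add_le : 2 * (k1 + k2 + 1) ≤ N
  edge_le : 2 * (C1 + 1) ≤ N

lemma IsLarge.pos (h : IsLarge k1 k2 ε C1 N) : 0 < N := by
  have := h.add_le
  omega

lemma InRange.pos (hM : InRange k1 k2 ε C1 N M) (hε : 0 < ε) (hN : 0 < N) : 0 < M := by
  have hpos : (0 : ℝ) < (k1 + ε) * N := by positivity
  exact_mod_cast hpos.trans_le hM.in_le

lemma InRange.add_le (hM : InRange k1 k2 ε C1 N M) (hN : IsLarge k1 k2 ε C1 N) :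
    (M : ℝ) + N ≤ N ^ 2 / 2 := by
  nlinarith [hM.le, hN.edge_le, (Nat.cast_nonneg N : (0 : ℝ) ≤ N)]

lemma isDicore_iff : IsDicore k1 k2 N M E ↔
    #E = M ∧ (∀ e ∈ E, e.1 ≠ e.2) ∧ ∀ v, k1 ≤ indeg E v ∧ k2 ≤ outdeg E v := Iff.rfl

lemma _root_.IsDicore.card_eq (hE : IsDicore k1 k2 N M E) : #E = M := hE.1

lemma _root_.IsDicore.ne (hE : IsDicore k1 k2 N M E) (he : e ∈ E) : e.1 ≠ e.2 := hE.2.1 e he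

lemma _root_.IsDicore.le_indeg (hE : IsDicore k1 k2 N M E) (v : Fin N) : k1 ≤ indeg E v :=
  (hE.2.2 v).1

lemma _root_.IsDicore.le_outdeg (hE : IsDicore k1 k2 N M E) (v : Fin N) : k2 ≤ outdeg E v :=
  (hE.2.2 v).2

lemma _root_.IsDicore.reverse (hE : IsDicore k1 k2 N M E) : IsDicore k2 k1 N M (reverse E) := by
  refine isDicore_iff.2 ⟨by rw [card_reverse, hE.card_eq], ?_, fun v => ?_⟩
  · rintro ⟨a, b⟩ h
    exact (hE.ne (mk_mem_reverse.1 h)).symm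
  · rw [indeg_reverse, outdeg_reverse]
    exact ⟨hE.le_outdeg v, hE.le_indeg v⟩

lemma _root_.IsDicore.insert (hE : IsDicore k1 k2 N M E) (he : e ∈ nonEdges E) :
    IsDicore k1 k2 N (M + 1) (insert e E) := by
  rw [mem_nonEdges] at he
  refine isDicore_iff.2 ⟨by rw [card_insert_of_notMem he.2, hE.card_eq], ?_, fun v =>
    ⟨(hE.le_indeg v).trans (indeg_mono (subset_insert _ _) v),
      (hE.le_outdeg v).trans (outdeg_mono (subset_insert _ _) v)⟩⟩
  intro x hx
  rcases mem_insert.1 hx with rfl | hx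
  · exact he.1
  · exact hE.ne hx

lemma _root_.IsDicore.erase (hE : IsDicore k1 k2 N (M + 1) E) (he : e ∈ surplus k1 k2 E) :
    IsDicore k1 k2 N M (E.erase e) := by
  rw [mem_surplus] at he
  refine isDicore_iff.2 ⟨by rw [card_erase_of_mem he.1, hE.card_eq, Nat.add_sub_cancel],
    fun x hx => hE.ne (mem_of_mem_erase hx), fun v => ⟨?_, ?_⟩⟩
  · have hdeg := indeg_erase_add he.1 v
    split_ifs at hdeg with h
    · rw [h] at he
      omega
    · exact (hE.le_indeg v).trans_eq hdeg.symm
  · have hdeg := outdeg_erase_add he.1 v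
    split_ifs at hdeg with h
    · rw [h] at he
      omega
    · exact (hE.le_outdeg v).trans_eq hdeg.symm

lemma _root_.IsDicore.merge (hE : IsDicore k1 k2 N (M + 1) E) (hp : p ∈ mergePairs k1 k2 F E) :
    IsDicore k1 k2 N M (merge E p) := by
  obtain ⟨⟨htail, -⟩, ⟨hhead, -⟩, hne, -⟩ := mem_mergePairs.1 hp
  rw [mem_tailSurplus] at htail
  rw [mem_headSurplus] at hhead
  refine isDicore_iff.2 ⟨?_, fun e he => ?_, fun v => ⟨?_, ?_⟩⟩
  · have := card_merge_add_one hp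
    rw [hE.card_eq] at this
    omega
  · rcases mem_insert.1 he with rfl | he
    · exact hne
    · exact hE.ne (mem_of_mem_erase (mem_of_mem_erase he))
  · have hdeg := indeg_merge_add hp v
    split_ifs at hdeg with h
    · rw [h] at hhead
      omega
    · exact (hE.le_indeg v).trans_eq hdeg.symm
  · have hdeg := outdeg_merge_add hp v
    split_ifs at hdeg with h
    · rw [h] at htail
      omega
    · exact (hE.le_outdeg v).trans_eq hdeg.symm

lemma mem_surplus_insert (hE : IsDicore k1 k2 N M E) (he : e ∈ nonEdges E) :
    e ∈ surplus k1 k2 (insert e E) := by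
  rw [mem_nonEdges] at he
  rw [mem_surplus, indeg_insert he.2, outdeg_insert he.2, if_pos rfl, if_pos rfl, Nat.lt_succ_iff,
    Nat.lt_succ_iff]
  exact ⟨mem_insert_self _ _, hE.le_indeg _, hE.le_outdeg _⟩

lemma le_card_nonEdges (hE : IsDicore k1 k2 N M E) (hM : (M : ℝ) + N ≤ N ^ 2 / 2) :
    (N ^ 2 / 2 : ℝ) ≤ #(nonEdges E) := by
  have hcard : #(nonEdges E) + M + N = N * N := by
    rw [← hE.card_eq, card_nonEdges_add hE.2.1, Fintype.card_fin, Nat.mul_sub_one,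
      Nat.sub_add_cancel (Nat.le_mul_self N)]
  have : (#(nonEdges E) + M + N : ℝ) = N * N := mod_cast hcard
  linarith

lemma le_card_mergePairs (hε : 0 < ε) (hE : IsDicore k1 k2 N M E) (hin : (k1 + ε) * N ≤ M)
    (hout : (k2 + ε) * N ≤ M) (hF : (#(surplus k1 k2 E) : ℝ) + #F ≤ ε / 2 * N)
    (hN : ((k1 + 1) * (k2 + 1) : ℝ) ≤ ε / 4 * N) :
    ε ^ 2 / 8 * N ^ 2 ≤ #(mergePairs k1 k2 F E) := by
  have htail : (M : ℝ) ≤ #(tailSurplus k1 k2 E) + #(surplus k1 k2 E) + k2 * N := by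
    have := card_le_tailSurplus_add (k2 := k2) hE.le_indeg
    rw [hE.card_eq, Fintype.card_fin] at this
    exact_mod_cast this
  have hhead : (M : ℝ) ≤ #(headSurplus k1 k2 E) + #(surplus k1 k2 E) + k1 * N := by
    have := card_le_headSurplus_add (k1 := k1) hE.le_outdeg
    rw [hE.card_eq, Fintype.card_fin] at this
    exact_mod_cast this
  have htailF : (#(tailSurplus k1 k2 E) : ℝ) ≤ #(tailSurplus k1 k2 E \ F) + #F :=
    mod_cast card_le_card_sdiff_add_card
  have hheadF : (#(headSurplus k1 k2 E) : ℝ) ≤ #(headSurplus k1 k2 E \ F) + #F :=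
    mod_cast card_le_card_sdiff_add_card
  have hpairs : (#(tailSurplus k1 k2 E \ F) : ℝ) * #(headSurplus k1 k2 E \ F) ≤
      #(mergePairs k1 k2 F E) + k2 * (k1 + 1) * #(tailSurplus k1 k2 E \ F) :=
    mod_cast card_mul_card_le_mergePairs_add k1 k2 F E
  have hmul : ε / 2 * N * (ε / 4 * N) ≤
      #(tailSurplus k1 k2 E \ F) * (#(headSurplus k1 k2 E \ F) - k2 * (k1 + 1) : ℝ) :=
    mul_le_mul (by linarith) (by linarith) (by positivity) (by positivity)
  linarith

open scoped Classical in
/-- The finset of all `(k1,k2)`-dicores on `Fin N` with `M` edges. -/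
noncomputable def dicores (k1 k2 N M : ℕ) : Finset (Finset (Fin N × Fin N)) :=
  {E | IsDicore k1 k2 N M E}

/-- The `(k1,k2)`-dicores with `M` edges that contain all edges of `F`. -/
noncomputable def dicoresOver (k1 k2 M : ℕ) (F : Finset (Fin N × Fin N)) :
    Finset (Finset (Fin N × Fin N)) :=
  {E ∈ dicores k1 k2 N M | F ⊆ E}

lemma mem_dicores : E ∈ dicores k1 k2 N M ↔ IsDicore k1 k2 N M E := by simp [dicores]

lemma mem_dicoresOver : E ∈ dicoresOver k1 k2 M F ↔ IsDicore k1 k2 N M E ∧ F ⊆ E := by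
  simp [dicoresOver, mem_dicores]

lemma dicoresOver_empty : dicoresOver k1 k2 M (∅ : Finset (Fin N × Fin N)) = dicores k1 k2 N M :=
  filter_true_of_mem fun _ _ => empty_subset _

lemma card_filter_dicores_reverse (k1 k2 N M : ℕ) (P : Finset (Fin N × Fin N) → Prop)
    [DecidablePred P] :
    #{E ∈ dicores k1 k2 N M | P (reverse E)} = #{E ∈ dicores k2 k1 N M | P E} := by
  refine card_bij' (fun E _ => reverse E) (fun E _ => reverse E) ?_ ?_ ?_ ?_
  all_goals
    intro E hE
    simp only [mem_filter, mem_dicores, reverse_reverse] at hE ⊢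
  · exact ⟨hE.1.reverse, hE.2⟩
  · exact ⟨hE.1.reverse, hE.2⟩

lemma card_dicores_swap (k1 k2 N M : ℕ) : #(dicores k1 k2 N M) = #(dicores k2 k1 N M) := by
  simpa using card_filter_dicores_reverse k1 k2 N M fun _ => True

lemma card_dicoresOver_le_succ (k1 k2 : ℕ) (F : Finset (Fin N × Fin N))
    (hM : (M : ℝ) + N ≤ N ^ 2 / 2) :
    N ^ 2 / 2 * (#(dicoresOver k1 k2 M F) : ℝ) ≤ (M + 1) * #(dicoresOver k1 k2 (M + 1) F) := by
  refine card_mul_le_card_mul_of_moves _ _ nonEdges (fun E e => insert e E) id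
    (fun E e => E.erase e) ?_ ?_ ?_
  · intro E hE
    exact le_card_nonEdges (mem_dicoresOver.1 hE).1 hM
  · intro E hE
    simp [(mem_dicoresOver.1 hE).1.card_eq]
  · intro E hE e he
    obtain ⟨hE, hF⟩ := mem_dicoresOver.1 hE
    exact ⟨mem_dicoresOver.2 ⟨hE.insert he, hF.trans (subset_insert _ _)⟩,
      mem_insert_self _ _, erase_insert (mem_nonEdges.1 he).2⟩

lemma card_filter_manySurplus_le (k1 k2 M : ℕ) (F : Finset (Fin N × Fin N)) (c : ℝ) :
    c * #{E ∈ dicoresOver k1 k2 (M + 1) F | c ≤ #(surplus k1 k2 E \ F)} ≤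
      N ^ 2 * #(dicoresOver k1 k2 M F) := by
  refine card_mul_le_card_mul_of_moves _ _ (fun E => surplus k1 k2 E \ F)
    (fun E e => E.erase e) (fun _ => univ) (fun E e => insert e E) ?_ ?_ ?_
  · intro E hE
    exact (mem_filter.1 hE).2
  · intro E _
    simp [sq]
  · intro E hE e he
    obtain ⟨hE, hF⟩ := mem_dicoresOver.1 (mem_filter.1 hE).1
    rw [mem_sdiff] at he
    exact ⟨mem_dicoresOver.2 ⟨hE.erase he.1, subset_erase.2 ⟨hF, he.2⟩⟩, mem_univ _,
      insert_erase (mem_surplus.1 he.1).1⟩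

lemma card_le_mul_card_of_merge (hε : 0 < ε) (hN : IsLarge k1 k2 ε C1 N)
    (hin : (k1 + ε) * N ≤ M + 1) (hout : (k2 + ε) * N ≤ M + 1) (hM : M ≤ C1 * N)
    (F : Finset (Fin N × Fin N)) {X Y : Finset (Finset (Fin N × Fin N))}
    (hX : ∀ E ∈ X, IsDicore k1 k2 N (M + 1) E ∧ (#(surplus k1 k2 E) : ℝ) + #F ≤ ε / 2 * N)
    (hXY : ∀ E ∈ X, ∀ p ∈ mergePairs k1 k2 F E, merge E p ∈ Y) (hY : ∀ E ∈ Y, #E = M) :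
    (#X : ℝ) ≤ 8 * C1 / ε ^ 2 * N * #Y := by
  have hcount : ε ^ 2 / 8 * N ^ 2 * (#X : ℝ) ≤ M * N ^ 2 * #Y := by
    refine card_mul_le_card_mul_of_moves X Y (mergePairs k1 k2 F) merge
      (fun E => {p | (p.2.1, p.1.2) ∈ E})
      (fun E p => insert p.1 (insert p.2 (E.erase (p.2.1, p.1.2)))) ?_ ?_ ?_
    · intro E hE
      exact le_card_mergePairs hε (hX E hE).1 (mod_cast hin) (mod_cast hout) (hX E hE).2 hN.mul_le
    · intro E hE
      rw [card_filter_merged_mem, hY E hE, Fintype.card_fin]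
      push_cast
      rfl
    · intro E hE p hp
      refine ⟨hXY E hE p hp, ?_, insert_insert_erase_merge hp⟩
      rw [mem_filter]
      exact ⟨mem_univ _, mem_insert_self _ _⟩
  have hpos : (0 : ℝ) < ε ^ 2 / 8 * N ^ 2 := by
    have := hN.pos
    positivity
  refine le_of_mul_le_mul_left (hcount.trans ?_) hpos
  calc (M * N ^ 2 * #Y : ℝ) ≤ C1 * N * N ^ 2 * #Y := by gcongr
    _ = ε ^ 2 / 8 * N ^ 2 * (8 * C1 / ε ^ 2 * N * #Y) := by
      field_simp

lemma card_dicoresOver_succ_le (hε : 0 < ε) (hN : IsLarge k1 k2 ε C1 N)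
    (hM : InRange k1 k2 ε C1 N M) (hF : (#F : ℝ) ≤ ε / 8 * N) :
    (#(dicoresOver k1 k2 (M + 1) F) : ℝ) ≤
      (8 / ε + 8 * C1 / ε ^ 2) * N * #(dicoresOver k1 k2 M F) := by
  have hmany : (#{E ∈ dicoresOver k1 k2 (M + 1) F | ε / 8 * N ≤ #(surplus k1 k2 E \ F)} : ℝ) ≤
      8 / ε * N * #(dicoresOver k1 k2 M F) := by
    have hpos : (0 : ℝ) < ε / 8 * N := by
      have := hN.pos
      positivity
    refine le_of_mul_le_mul_left ((card_filter_manySurplus_le k1 k2 M F _).trans_eq ?_) hpos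
    field_simp
  have hfew : (#{E ∈ dicoresOver k1 k2 (M + 1) F | ¬ε / 8 * N ≤ #(surplus k1 k2 E \ F)} : ℝ) ≤
      8 * C1 / ε ^ 2 * N * #(dicoresOver k1 k2 M F) := by
    refine card_le_mul_card_of_merge hε hN (by linarith [hM.in_le]) (by linarith [hM.out_le])
      hM.le F (fun E hE => ?_) (fun E hE p hp => ?_)
      fun E hE => (mem_dicoresOver.1 hE).1.card_eq
    · rw [mem_filter, mem_dicoresOver] at hE
      have : (#(surplus k1 k2 E) : ℝ) ≤ #(surplus k1 k2 E \ F) + #F :=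
        mod_cast card_le_card_sdiff_add_card
      exact ⟨hE.1.1, by linarith⟩
    · rw [mem_filter, mem_dicoresOver] at hE
      exact mem_dicoresOver.2 ⟨hE.1.1.merge hp, subset_merge hE.1.2 hp⟩
  have hsplit := card_filter_add_card_filter_not (s := dicoresOver k1 k2 (M + 1) F)
    fun E => ε / 8 * N ≤ #(surplus k1 k2 E \ F)
  rw [← hsplit]
  push_cast
  linarith

end Dicores

section Redirect

variable {V : Type*} [DecidableEq V] {E : Finset (V × V)} {a b c d : V}

/-- The digraph in which the head of the edge `(a, b)` is moved to `d`. -/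
def redirectHead (E : Finset (V × V)) (a b d : V) : Finset (V × V) :=
  insert (a, d) (E.erase (a, b))

/-- The digraph in which the edge `(a, b)` is replaced by the two edges `(a, d)` and `(c, b)`, so
that no degree decreases and the degrees at `a` and `b` are kept. -/
def splitEdge (E : Finset (V × V)) (a b c d : V) : Finset (V × V) :=
  insert (c, b) (redirectHead E a b d)

lemma card_redirectHead (hab : (a, b) ∈ E) (had : (a, d) ∉ E) : #(redirectHead E a b d) = #E := by
  rw [redirectHead, card_insert_of_notMem (notMem_mono (erase_subset _ _) had),
    card_erase_add_one hab]

lemma outdeg_redirectHead (hab : (a, b) ∈ E) (had : (a, d) ∉ E) (v : V) :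
    outdeg (redirectHead E a b d) v = outdeg E v := by
  rw [redirectHead, outdeg_insert (notMem_mono (erase_subset _ _) had), ← outdeg_erase_add hab v]

lemma indeg_redirectHead_add (hab : (a, b) ∈ E) (had : (a, d) ∉ E) (v : V) :
    indeg (redirectHead E a b d) v + (if b = v then 1 else 0) =
      indeg E v + if d = v then 1 else 0 := by
  rw [redirectHead, indeg_insert (notMem_mono (erase_subset _ _) had), ← indeg_erase_add hab v]
  dsimp only
  omega

lemma redirectHead_redirectHead (hab : (a, b) ∈ E) (had : (a, d) ∉ E) :
    redirectHead (redirectHead E a b d) a d b = E := by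
  rw [redirectHead, redirectHead, erase_insert (notMem_mono (erase_subset _ _) had),
    insert_erase hab]

lemma erase_subset_redirectHead {F : Finset (V × V)} (hF : F ⊆ E) (a b d : V) :
    F.erase (a, b) ⊆ redirectHead E a b d :=
  (erase_subset_erase _ hF).trans (subset_insert _ _)

lemma ne_of_mem_redirectHead (hE : ∀ e ∈ E, e.1 ≠ e.2) (hda : d ≠ a) :
    ∀ e ∈ redirectHead E a b d, e.1 ≠ e.2 := by
  intro e he
  rcases mem_insert.1 he with rfl | he
  · exact hda.symm
  · exact hE e (mem_of_mem_erase he)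

lemma notMem_redirectHead (hab : (a, b) ∈ E) (hcb : (c, b) ∉ E) :
    (c, b) ∉ redirectHead E a b d := by
  intro h
  rcases mem_insert.1 h with h | h
  · obtain ⟨rfl, -⟩ := Prod.mk.inj h
    exact hcb hab
  · exact hcb (mem_of_mem_erase h)

lemma outdeg_splitEdge (hab : (a, b) ∈ E) (hcb : (c, b) ∉ E) (had : (a, d) ∉ E) (v : V) :
    outdeg (splitEdge E a b c d) v = outdeg E v + if c = v then 1 else 0 := by
  rw [splitEdge, outdeg_insert (notMem_redirectHead hab hcb), outdeg_redirectHead hab had]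

lemma indeg_splitEdge (hab : (a, b) ∈ E) (hcb : (c, b) ∉ E) (had : (a, d) ∉ E) (v : V) :
    indeg (splitEdge E a b c d) v = indeg E v + if d = v then 1 else 0 := by
  rw [splitEdge, indeg_insert (notMem_redirectHead hab hcb), indeg_redirectHead_add hab had]

end Redirect

section FixedEdges

variable {N k1 k2 M : ℕ} {ε C1 : ℝ} {E F : Finset (Fin N × Fin N)} {e : Fin N × Fin N}
  {a b c d : Fin N}

lemma _root_.IsDicore.redirectHead (hE : IsDicore k1 k2 N M E) (hab : (a, b) ∈ E)
    (hda : d ≠ a) (had : (a, d) ∉ E) (hb : k1 < indeg E b) :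
    IsDicore k1 k2 N M (redirectHead E a b d) := by
  refine isDicore_iff.2 ⟨by rw [card_redirectHead hab had, hE.card_eq],
    ne_of_mem_redirectHead hE.2.1 hda, fun v => ⟨?_, ?_⟩⟩
  · have hdeg := indeg_redirectHead_add hab had v
    have := hE.le_indeg v
    by_cases hbv : b = v
    · subst hbv
      rw [if_pos rfl] at hdeg
      omega
    · rw [if_neg hbv] at hdeg
      omega
  · rw [outdeg_redirectHead hab had]
    exact hE.le_outdeg v

lemma _root_.IsDicore.splitEdge (hE : IsDicore k1 k2 N M E) (hab : (a, b) ∈ E) (hcb : c ≠ b)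
    (hcb' : (c, b) ∉ E) (hda : d ≠ a) (had : (a, d) ∉ E) :
    IsDicore k1 k2 N (M + 1) (splitEdge E a b c d) := by
  refine isDicore_iff.2 ⟨?_, fun e he => ?_, fun v => ?_⟩
  · rw [Dicore.splitEdge, card_insert_of_notMem (notMem_redirectHead hab hcb'),
      card_redirectHead hab had, hE.card_eq]
  · rcases mem_insert.1 he with rfl | he
    · exact hcb
    · exact ne_of_mem_redirectHead hE.2.1 hda e he
  · rw [indeg_splitEdge hab hcb' had, outdeg_splitEdge hab hcb' had]
    exact ⟨(hE.le_indeg v).trans (Nat.le_add_right _ _),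
      (hE.le_outdeg v).trans (Nat.le_add_right _ _)⟩

lemma half_le_card_newHeads (hN : 2 * (outdeg E a + 1) ≤ N) :
    (N / 2 : ℝ) ≤ #{d | d ≠ a ∧ (a, d) ∉ E} := by
  have hheads := card_le_card_newHeads E a
  rw [Fintype.card_fin] at hheads
  have hle : N ≤ #{d | d ≠ a ∧ (a, d) ∉ E} * 2 := by omega
  rw [div_le_iff₀ two_pos]
  exact_mod_cast hle

lemma half_le_card_newTails (hN : 2 * (indeg E b + 1) ≤ N) :
    (N / 2 : ℝ) ≤ #{c | c ≠ b ∧ (c, b) ∉ E} := by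
  simpa using half_le_card_newHeads (E := reverse E) (a := b) (by simpa using hN)

lemma card_filter_dicoresOver_reverse (k1 k2 M : ℕ) (F : Finset (Fin N × Fin N))
    (P : Finset (Fin N × Fin N) → Prop) [DecidablePred P] :
    #{E ∈ dicoresOver k1 k2 M F | P (reverse E)} =
      #{E ∈ dicoresOver k2 k1 M (reverse F) | P E} := by
  simp only [dicoresOver, filter_filter]
  rw [← card_filter_dicores_reverse k1 k2 N M fun E => reverse F ⊆ E ∧ P E]
  simp only [reverse_subset_reverse]

lemma card_filter_mem_surplus_le (he : (a, b) ∈ F) :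
    #{E ∈ dicoresOver k1 k2 (M + 1) F | k1 < indeg E b ∧ k2 < outdeg E a} ≤
      #(dicoresOver k1 k2 M (F.erase (a, b))) := by
  have hmem : ∀ E ∈ {E ∈ dicoresOver k1 k2 (M + 1) F | k1 < indeg E b ∧ k2 < outdeg E a},
      IsDicore k1 k2 N (M + 1) E ∧ F ⊆ E ∧ (a, b) ∈ surplus k1 k2 E := by
    intro E hE
    rw [mem_filter, mem_dicoresOver] at hE
    exact ⟨hE.1.1, hE.1.2, mem_surplus.2 ⟨hE.1.2 he, hE.2⟩⟩
  refine card_le_card_of_injOn (fun E => E.erase (a, b)) (fun E hE => ?_)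
    fun E hE E' hE' h => ?_
  · obtain ⟨hE, hF, hab⟩ := hmem E hE
    exact mem_dicoresOver.2 ⟨hE.erase hab, erase_subset_erase _ hF⟩
  · simpa only [insert_erase ((hmem E hE).2.1 he), insert_erase ((hmem E' hE').2.1 he)] using
      congrArg (insert (a, b)) h

lemma card_filter_outdeg_tight_le (hN : 2 * (k2 + 1) ≤ N) (he : (a, b) ∈ F) :
    (N / 2 : ℝ) * #{E ∈ dicoresOver k1 k2 M F | k1 < indeg E b ∧ outdeg E a = k2} ≤
      k2 * #(dicoresOver k1 k2 M (F.erase (a, b))) := by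
  refine (card_mul_le_card_mul_of_moves _
    {E ∈ dicoresOver k1 k2 M (F.erase (a, b)) | outdeg E a = k2}
    (fun E => {d | d ≠ a ∧ (a, d) ∉ E}) (fun E d => redirectHead E a b d)
    (fun E => {d | (a, d) ∈ E}) (fun E d => redirectHead E a d b) ?_ (b := k2) ?_ ?_).trans ?_
  · intro E hE
    exact half_le_card_newHeads (by rwa [(mem_filter.1 hE).2.2])
  · intro E hE
    rw [card_filter_mk_mem_left, (mem_filter.1 hE).2]
  · intro E hE d hd
    simp only [mem_filter, mem_dicoresOver, mem_univ, true_and] at hE hd ⊢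
    obtain ⟨⟨hE, hF⟩, hb, ha⟩ := hE
    have hab := hF he
    exact ⟨⟨⟨hE.redirectHead hab hd.1 hd.2 hb, erase_subset_redirectHead hF a b d⟩,
      (outdeg_redirectHead hab hd.2 a).trans ha⟩, mem_insert_self _ _,
      redirectHead_redirectHead hab hd.2⟩
  · gcongr
    exact filter_subset _ _

lemma card_filter_indeg_tight_le (hN : 2 * (k1 + 1) ≤ N) (he : (a, b) ∈ F) :
    (N / 2 : ℝ) * #{E ∈ dicoresOver k1 k2 M F | indeg E b = k1 ∧ k2 < outdeg E a} ≤
      k1 * #(dicoresOver k1 k2 M (F.erase (a, b))) := by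
  have hrev := card_filter_outdeg_tight_le (k1 := k2) (M := M) hN (mk_mem_reverse.2 he)
  have herase : #(dicoresOver k2 k1 M ((reverse F).erase (b, a))) =
      #(dicoresOver k1 k2 M (F.erase (a, b))) := by
    simpa [reverse_erase] using
      (card_filter_dicoresOver_reverse k1 k2 M (F.erase (a, b)) fun _ => True).symm
  rw [herase, ← card_filter_dicoresOver_reverse] at hrev
  simpa only [indeg_reverse, outdeg_reverse, and_comm] using hrev

lemma card_filter_tight_le (hN : 2 * (k1 + k2 + 1) ≤ N) (he : (a, b) ∈ F) :
    (N / 2 * (N / 2) : ℝ) * #{E ∈ dicoresOver k1 k2 M F | indeg E b = k1 ∧ outdeg E a = k2} ≤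
      k1 * k2 * #(dicoresOver k1 k2 (M + 1) (F.erase (a, b))) := by
  refine (card_mul_le_card_mul_of_moves _
    {E ∈ dicoresOver k1 k2 (M + 1) (F.erase (a, b)) | indeg E b = k1 ∧ outdeg E a = k2}
    (fun E => ({c | c ≠ b ∧ (c, b) ∉ E} : Finset _) ×ˢ ({d | d ≠ a ∧ (a, d) ∉ E} : Finset _))
    (fun E g => splitEdge E a b g.1 g.2)
    (fun E => ({c | (c, b) ∈ E} : Finset _) ×ˢ ({d | (a, d) ∈ E} : Finset _))
    (fun E g => redirectHead (E.erase (g.1, b)) a g.2 b) ?_ (b := k1 * k2) ?_ ?_).trans ?_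
  · intro E hE
    obtain ⟨-, hb, ha⟩ := mem_filter.1 hE
    rw [card_product]
    push_cast
    gcongr
    · exact half_le_card_newTails (by omega)
    · exact half_le_card_newHeads (by omega)
  · intro E hE
    obtain ⟨-, hb, ha⟩ := mem_filter.1 hE
    rw [card_product, card_filter_mk_mem_right, card_filter_mk_mem_left, hb, ha, Nat.cast_mul]
  · rintro E hE ⟨c, d⟩ hg
    simp only [mem_filter, mem_dicoresOver, mem_univ, true_and, mem_product] at hE hg ⊢
    obtain ⟨⟨hE, hF⟩, hb, ha⟩ := hE
    obtain ⟨⟨hcb, hcb'⟩, hda, had⟩ := hg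
    have hab := hF he
    have hca : c ≠ a := fun h => hcb' (h ▸ hab)
    have hdb : d ≠ b := fun h => had (h ▸ hab)
    refine ⟨⟨⟨hE.splitEdge hab hcb hcb' hda had,
      (erase_subset_redirectHead hF a b d).trans (subset_insert _ _)⟩, ?_, ?_⟩,
      ⟨mem_insert_self _ _, mem_insert_of_mem (mem_insert_self _ _)⟩, ?_⟩
    · rw [indeg_splitEdge hab hcb' had, if_neg hdb, hb, add_zero]
    · rw [outdeg_splitEdge hab hcb' had, if_neg hca, ha, add_zero]
    · rw [splitEdge, erase_insert (notMem_redirectHead hab hcb'), redirectHead_redirectHead hab had]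
  · gcongr
    exact filter_subset _ _

lemma card_dicoresOver_le_add_tight (M : ℕ) (F : Finset (Fin N × Fin N)) (a b : Fin N) :
    #(dicoresOver k1 k2 M F) ≤
      #{E ∈ dicoresOver k1 k2 M F | k1 < indeg E b ∧ k2 < outdeg E a} +
      #{E ∈ dicoresOver k1 k2 M F | k1 < indeg E b ∧ outdeg E a = k2} +
      #{E ∈ dicoresOver k1 k2 M F | indeg E b = k1 ∧ k2 < outdeg E a} +
      #{E ∈ dicoresOver k1 k2 M F | indeg E b = k1 ∧ outdeg E a = k2} := by
  have hsub : dicoresOver k1 k2 M F ⊆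
      {E ∈ dicoresOver k1 k2 M F | k1 < indeg E b ∧ k2 < outdeg E a} ∪
      {E ∈ dicoresOver k1 k2 M F | k1 < indeg E b ∧ outdeg E a = k2} ∪
      {E ∈ dicoresOver k1 k2 M F | indeg E b = k1 ∧ k2 < outdeg E a} ∪
      {E ∈ dicoresOver k1 k2 M F | indeg E b = k1 ∧ outdeg E a = k2} := by
    intro E hE
    have hb := (mem_dicoresOver.1 hE).1.le_indeg b
    have ha := (mem_dicoresOver.1 hE).1.le_outdeg a
    simp only [mem_union, mem_filter, hE, true_and]
    omega
  refine (card_le_card hsub).trans ?_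
  grw [card_union_le, card_union_le, card_union_le]

lemma card_dicoresOver_le_of_succ (hN : IsLarge k1 k2 ε C1 N)
    (hM : InRange k1 k2 ε C1 N (M + 1)) (F : Finset (Fin N × Fin N)) :
    (#(dicoresOver k1 k2 M F) : ℝ) ≤ 2 * C1 / N * #(dicoresOver k1 k2 (M + 1) F) := by
  have hpos : (0 : ℝ) < N := mod_cast hN.pos
  have hup : (M : ℝ) + 1 ≤ C1 * N := mod_cast hM.le
  have hadd := hM.add_le hN
  push_cast at hadd
  refine le_of_mul_le_mul_left
    ((card_dicoresOver_le_succ k1 k2 F (by linarith)).trans ?_)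
    (by positivity : (0 : ℝ) < N ^ 2 / 2)
  calc ((M : ℝ) + 1) * #(dicoresOver k1 k2 (M + 1) F)
      ≤ C1 * N * #(dicoresOver k1 k2 (M + 1) F) := by gcongr
    _ = N ^ 2 / 2 * (2 * C1 / N * #(dicoresOver k1 k2 (M + 1) F)) := by field_simp

/-- The constant `C` such that any few edges belong simultaneously to a random dicore with
probability at most `C / N` each, see `card_dicoresOver_le`. -/
noncomputable def edgeConst (k1 k2 : ℕ) (ε C1 : ℝ) : ℝ :=
  max 1 (2 * C1 + 2 * k2 + 2 * k1 + 4 * k1 * k2 * (8 / ε + 8 * C1 / ε ^ 2))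

lemma one_le_edgeConst (k1 k2 : ℕ) (ε C1 : ℝ) : 1 ≤ edgeConst k1 k2 ε C1 := le_max_left _ _

lemma card_dicoresOver_le_erase (hε : 0 < ε) (hN : IsLarge k1 k2 ε C1 N)
    (hM : InRange k1 k2 ε C1 N (M + 1)) (hF : (#F : ℝ) ≤ ε / 8 * N) (he : e ∈ F) :
    (#(dicoresOver k1 k2 (M + 1) F) : ℝ) ≤
      edgeConst k1 k2 ε C1 / N * #(dicoresOver k1 k2 (M + 1) (F.erase e)) := by
  obtain ⟨a, b⟩ := e
  have hpos : (0 : ℝ) < N := mod_cast hN.pos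
  have hadd := hN.add_le
  have hFe : (#(F.erase (a, b)) : ℝ) ≤ ε / 8 * N := le_trans (mod_cast card_erase_le) hF
  set Y := dicoresOver k1 k2 (M + 1) (F.erase (a, b)) with hY
  have hsurplus : (#{E ∈ dicoresOver k1 k2 (M + 1) F | k1 < indeg E b ∧ k2 < outdeg E a} : ℝ) ≤
      2 * C1 / N * #Y :=
    le_trans (mod_cast card_filter_mem_surplus_le he) (card_dicoresOver_le_of_succ hN hM _)
  have hout : (#{E ∈ dicoresOver k1 k2 (M + 1) F | k1 < indeg E b ∧ outdeg E a = k2} : ℝ) ≤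
      2 * k2 / N * #Y := by
    have := card_filter_outdeg_tight_le (k1 := k1) (M := M + 1) (by omega : 2 * (k2 + 1) ≤ N) he
    rw [← hY, mul_comm, ← le_div_iff₀ (by positivity)] at this
    exact this.trans_eq (by field_simp)
  have hin : (#{E ∈ dicoresOver k1 k2 (M + 1) F | indeg E b = k1 ∧ k2 < outdeg E a} : ℝ) ≤
      2 * k1 / N * #Y := by
    have := card_filter_indeg_tight_le (k2 := k2) (M := M + 1) (by omega : 2 * (k1 + 1) ≤ N) he
    rw [← hY, mul_comm, ← le_div_iff₀ (by positivity)] at this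
    exact this.trans_eq (by field_simp)
  have htight : (#{E ∈ dicoresOver k1 k2 (M + 1) F | indeg E b = k1 ∧ outdeg E a = k2} : ℝ) ≤
      4 * k1 * k2 * (8 / ε + 8 * C1 / ε ^ 2) / N * #Y := by
    have := card_filter_tight_le (M := M + 1) hadd he
    grw [card_dicoresOver_succ_le hε hN hM hFe] at this
    rw [← hY, mul_comm, ← le_div_iff₀ (by positivity)] at this
    exact this.trans_eq (by field_simp; norm_num)
  refine (Nat.cast_le.2 (card_dicoresOver_le_add_tight (M + 1) F a b)).trans ?_
  calc _ ≤ 2 * C1 / N * #Y + 2 * k2 / N * #Y + 2 * k1 / N * #Y +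
        4 * k1 * k2 * (8 / ε + 8 * C1 / ε ^ 2) / N * #Y := by
        push_cast
        gcongr
    _ = (2 * C1 + 2 * k2 + 2 * k1 + 4 * k1 * k2 * (8 / ε + 8 * C1 / ε ^ 2)) / N * #Y := by ring
    _ ≤ edgeConst k1 k2 ε C1 / N * #Y := by
        gcongr
        exact le_max_right _ _

lemma card_dicoresOver_le (hε : 0 < ε) (hN : IsLarge k1 k2 ε C1 N) (hM : InRange k1 k2 ε C1 N M)
    (hF : (#F : ℝ) ≤ ε / 8 * N) :
    (#(dicoresOver k1 k2 M F) : ℝ) ≤ (edgeConst k1 k2 ε C1 / N) ^ #F * #(dicores k1 k2 N M) := by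
  have hpos := hM.pos hε hN.pos
  obtain ⟨m, rfl⟩ := Nat.exists_eq_succ_of_ne_zero hpos.ne'
  induction F using Finset.induction_on with
  | empty => simp [dicoresOver_empty]
  | insert e F he ih =>
    have hF' : (#F : ℝ) ≤ ε / 8 * N := le_trans (mod_cast card_le_card (subset_insert e F)) hF
    have herase := card_dicoresOver_le_erase hε hN hM hF (mem_insert_self e F)
    rw [erase_insert he] at herase
    have hconst : 0 ≤ edgeConst k1 k2 ε C1 := zero_le_one.trans (one_le_edgeConst ..)
    rw [card_insert_of_notMem he, pow_succ', mul_assoc]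
    exact herase.trans (by grw [ih hF'])

end FixedEdges

section Eventually

lemma eventually_le_mul (c : ℝ) {a : ℝ} (ha : 0 < a) : ∀ᶠ N : ℕ in Filter.atTop, c ≤ a * N :=
  (tendsto_natCast_atTop_atTop.const_mul_atTop ha).eventually_ge_atTop c

lemma eventually_mul_sqrt_le (c : ℝ) {a : ℝ} (ha : 0 < a) :
    ∀ᶠ N : ℕ in Filter.atTop, c * Nat.sqrt N ≤ a * N := by
  have hsqrt : Filter.Tendsto Nat.sqrt Filter.atTop Filter.atTop :=
    Filter.tendsto_atTop.2 fun b => (Filter.eventually_ge_atTop (b * b)).mono fun N hN =>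
      Nat.le_sqrt.2 hN
  filter_upwards [hsqrt.eventually (eventually_le_mul c ha)] with N hN
  calc c * Nat.sqrt N ≤ a * Nat.sqrt N * Nat.sqrt N := by gcongr
    _ = a * (Nat.sqrt N * Nat.sqrt N : ℕ) := by
      push_cast
      ring
    _ ≤ a * N := by
      gcongr
      exact Nat.sqrt_le N

lemma eventually_isLarge (k1 k2 : ℕ) {ε : ℝ} (hε : 0 < ε) (C1 : ℝ) :
    ∀ᶠ N in Filter.atTop, IsLarge k1 k2 ε C1 N := by
  filter_upwards [eventually_le_mul ((k1 + 1) * (k2 + 1)) (by positivity : 0 < ε / 4),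
    Filter.eventually_ge_atTop (2 * (k1 + k2 + 1)), eventually_le_mul (2 * (C1 + 1)) one_pos]
    with N hmul hadd hedge
  exact ⟨hmul, hadd, by linarith⟩

end Eventually

section FewSurplus

variable {N k1 k2 M i : ℕ} {ε C1 : ℝ} {E : Finset (Fin N × Fin N)}

/-- The dicores with at most `i` surplus edges. -/
noncomputable def fewSurplus (k1 k2 N M i : ℕ) : Finset (Finset (Fin N × Fin N)) :=
  {E ∈ dicores k1 k2 N M | #(surplus k1 k2 E) ≤ i}

lemma mem_fewSurplus :
    E ∈ fewSurplus k1 k2 N M i ↔ IsDicore k1 k2 N M E ∧ #(surplus k1 k2 E) ≤ i := by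
  rw [fewSurplus, mem_filter, mem_dicores]

lemma card_fewSurplus_succ_le (hε : 0 < ε) (hN : IsLarge k1 k2 ε C1 N)
    (hM : InRange k1 k2 ε C1 N (M + 1)) (hi : (i : ℝ) ≤ ε / 2 * N) :
    (#(fewSurplus k1 k2 N (M + 1) i) : ℝ) ≤
      8 * C1 / ε ^ 2 * N * #(fewSurplus k1 k2 N M (i + (k1 + k2 + 3))) := by
  refine card_le_mul_card_of_merge hε hN (mod_cast hM.in_le) (mod_cast hM.out_le) ?_ ∅
    (fun E hE => ?_) (fun E hE p hp => ?_) fun E hE => (mem_fewSurplus.1 hE).1.card_eq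
  · exact (Nat.cast_le.2 M.le_succ).trans hM.le
  · obtain ⟨hE, hle⟩ := mem_fewSurplus.1 hE
    refine ⟨hE, ?_⟩
    rw [card_empty, Nat.cast_zero, add_zero]
    exact (Nat.cast_le.2 hle).trans hi
  · obtain ⟨hE, hle⟩ := mem_fewSurplus.1 hE
    exact mem_fewSurplus.2 ⟨hE.merge hp,
      (card_surplus_merge_le k1 k2 E p).trans (Nat.add_le_add_right hle _)⟩

lemma card_fewSurplus_le_succ (hM : (M : ℝ) + N ≤ N ^ 2 / 2) :
    (N ^ 2 / 2 : ℝ) * #(fewSurplus k1 k2 N M i) ≤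
      (i + (k1 + k2 + 3) : ℕ) * #(fewSurplus k1 k2 N (M + 1) (i + (k1 + k2 + 3))) := by
  refine card_mul_le_card_mul_of_moves _ _ nonEdges (fun E e => insert e E) (surplus k1 k2)
    (fun E e => E.erase e) ?_ ?_ ?_
  · intro E hE
    exact le_card_nonEdges (mem_fewSurplus.1 hE).1 hM
  · intro E hE
    exact Nat.cast_le.2 (mem_fewSurplus.1 hE).2
  · intro E hE e he
    obtain ⟨hE, hle⟩ := mem_fewSurplus.1 hE
    exact ⟨mem_fewSurplus.2 ⟨hE.insert he,
      (card_surplus_insert_le k1 k2 E e).trans (Nat.add_le_add_right hle _)⟩,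
      mem_surplus_insert hE he, erase_insert (mem_nonEdges.1 he).2⟩

/-- The threshold `η` such that few dicores have fewer than `η / 2 * N` surplus edges, see
`card_filter_surplus_lt_le`. -/
noncomputable def surplusRate (ε C1 : ℝ) : ℝ := min (ε / 2) (ε ^ 2 / (32 * C1))

lemma surplusRate_pos (hε : 0 < ε) (hC1 : 0 < C1) : 0 < surplusRate ε C1 := by
  unfold surplusRate
  positivity

lemma card_fewSurplus_le_half (hε : 0 < ε) (hC1 : 0 < C1) (hN : IsLarge k1 k2 ε C1 N)
    (hM : InRange k1 k2 ε C1 N M)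
    (hi : ((i + 2 * (k1 + k2 + 3) : ℕ) : ℝ) ≤ surplusRate ε C1 * N) :
    (#(fewSurplus k1 k2 N M i) : ℝ) ≤
      1 / 2 * #(fewSurplus k1 k2 N M (i + 2 * (k1 + k2 + 3))) := by
  obtain ⟨m, rfl⟩ := Nat.exists_eq_succ_of_ne_zero (hM.pos hε hN.pos).ne'
  have hpos : (0 : ℝ) < N := mod_cast hN.pos
  have hadd : (m : ℝ) + N ≤ N ^ 2 / 2 := by
    have := hM.add_le hN
    push_cast at this
    linarith
  have hmerge : (#(fewSurplus k1 k2 N (m + 1) i) : ℝ) ≤ _ :=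
    card_fewSurplus_succ_le hε hN hM <|
    calc (i : ℝ) ≤ (i + 2 * (k1 + k2 + 3) : ℕ) := Nat.cast_le.2 (Nat.le_add_right _ _)
      _ ≤ surplusRate ε C1 * N := hi
      _ ≤ ε / 2 * N := by
        gcongr
        exact min_le_left _ _
  have hinsert := card_fewSurplus_le_succ (k1 := k1) (k2 := k2) (i := i + (k1 + k2 + 3)) hadd
  rw [add_assoc i, ← two_mul, mul_comm, ← le_div_iff₀ (by positivity)] at hinsert
  set Z := fewSurplus k1 k2 N (m + 1) (i + 2 * (k1 + k2 + 3))
  calc (#(fewSurplus k1 k2 N (m + 1) i) : ℝ)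
      ≤ 8 * C1 / ε ^ 2 * N * ((i + 2 * (k1 + k2 + 3) : ℕ) * #Z / (N ^ 2 / 2)) := by
        grw [hmerge, hinsert]
    _ ≤ 8 * C1 / ε ^ 2 * N * (ε ^ 2 / (32 * C1) * N * #Z / (N ^ 2 / 2)) := by
        grw [hi, surplusRate, min_le_right]
    _ = 1 / 2 * #Z := by
        field_simp
        ring

lemma card_fewSurplus_le_pow (hε : 0 < ε) (hC1 : 0 < C1) (hN : IsLarge k1 k2 ε C1 N)
    (hM : InRange k1 k2 ε C1 N M) (t : ℕ) :
    ∀ i : ℕ, ((i + t * (2 * (k1 + k2 + 3)) : ℕ) : ℝ) ≤ surplusRate ε C1 * N →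
      (#(fewSurplus k1 k2 N M i) : ℝ) ≤ (1 / 2) ^ t * #(dicores k1 k2 N M) := by
  induction t with
  | zero =>
    intro i _
    rw [pow_zero, one_mul]
    exact_mod_cast card_filter_le _ _
  | succ t ih =>
    intro i hi
    have hi' : ((i + 2 * (k1 + k2 + 3) + t * (2 * (k1 + k2 + 3)) : ℕ) : ℝ) ≤
        surplusRate ε C1 * N := by
      rwa [add_assoc, add_comm (2 * _), ← Nat.succ_mul]
    have hle : ((i + 2 * (k1 + k2 + 3) : ℕ) : ℝ) ≤
        (i + 2 * (k1 + k2 + 3) + t * (2 * (k1 + k2 + 3)) : ℕ) :=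
      Nat.cast_le.2 (Nat.le_add_right _ _)
    have hstep := card_fewSurplus_le_half hε hC1 hN hM (hle.trans hi')
    rw [pow_succ', mul_assoc]
    exact hstep.trans (by grw [ih _ hi'])

lemma card_filter_surplus_lt_le (k1 k2 : ℕ) (hε : 0 < ε) (hC1 : 0 < C1) :
    ∀ᶠ N : ℕ in Filter.atTop, ∀ M, InRange k1 k2 ε C1 N M →
      (#{E ∈ dicores k1 k2 N M | (#(surplus k1 k2 E) : ℝ) < surplusRate ε C1 / 2 * N} : ℝ) ≤
        (1 / 2) ^ Nat.sqrt N * #(dicores k1 k2 N M) := by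
  have hη := surplusRate_pos hε hC1
  filter_upwards [eventually_isLarge k1 k2 hε C1,
    eventually_mul_sqrt_le (2 * (k1 + k2 + 3)) (half_pos hη)] with N hN hsqrt M hM
  have hfloor := Nat.floor_le (by positivity : 0 ≤ surplusRate ε C1 / 2 * N)
  refine le_trans (Nat.cast_le.2 (card_le_card ?_)) <|
    card_fewSurplus_le_pow hε hC1 hN hM (Nat.sqrt N) ⌊surplusRate ε C1 / 2 * N⌋₊ ?_
  · intro E hE
    rw [mem_filter, mem_dicores] at hE
    exact mem_fewSurplus.2 ⟨hE.1, Nat.le_floor hE.2.le⟩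
  · push_cast
    linarith

end FewSurplus

section Expansion

lemma card_filter_card_lt_le (V : Type*) [Fintype V] [Nonempty V] (k : ℕ) :
    #{T : Finset V | #T < k} ≤ k * Fintype.card V ^ (k - 1) := by
  classical
  have hsub : ({T | #T < k} : Finset (Finset V)) ⊆
      (range k).biUnion fun i => powersetCard i univ := by
    intro T hT
    simpa [mem_powersetCard] using hT
  calc #{T : Finset V | #T < k}
      ≤ #(range k) * Fintype.card V ^ (k - 1) := by
        refine (card_le_card hsub).trans (card_biUnion_le_card_mul _ _ _ fun i hi => ?_)
        rw [card_powersetCard, card_univ]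
        exact (Nat.choose_le_pow _ i).trans
          (Nat.pow_le_pow_right Fintype.card_pos (Nat.le_sub_one_of_lt (mem_range.1 hi)))
    _ = k * Fintype.card V ^ (k - 1) := by rw [card_range]

variable {V : Type*} [DecidableEq V] {E : Finset (V × V)} {k : ℕ} {δ δ' : ℝ}

/-- The edges that leave `W` and do not end in `T`. -/
def boundary (E : Finset (V × V)) (T W : Finset V) : Finset (V × V) :=
  {e ∈ E | e.1 ∈ W ∧ e.2 ∉ W ∧ e.2 ∉ T}

lemma card_filter_fst_mem (E : Finset (V × V)) (W : Finset V) :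
    #{e ∈ E | e.1 ∈ W} = ∑ v ∈ W, outdeg E v := by
  rw [card_eq_sum_card_fiberwise (f := Prod.fst) (t := W) fun e he => mem_coe.2 (mem_filter.1 he).2]
  refine sum_congr rfl fun v hv => ?_
  rw [outdeg, filter_filter]
  congr 1
  ext e
  simp only [mem_filter]
  grind

lemma mul_card_le_card_inner_add_card_boundary (hE : ∀ v, k ≤ outdeg E v) (T W : Finset V) :
    k * #W ≤ #{e ∈ E | e.1 ∈ W ∧ e.2 ∈ W ∪ T} + #(boundary E T W) := by
  have hout : k * #W ≤ #{e ∈ E | e.1 ∈ W} := by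
    rw [card_filter_fst_mem, mul_comm, ← smul_eq_mul]
    exact card_nsmul_le_sum _ _ _ fun v _ => hE v
  refine hout.trans ((card_le_card fun e he => ?_).trans (card_union_le _ _))
  simp only [boundary, mem_union, mem_filter] at he ⊢
  tauto

lemma card_inner_singleton_le (hE : ∀ e ∈ E, e.1 ≠ e.2) (T : Finset V) (v : V) :
    #{e ∈ E | e.1 ∈ ({v} : Finset V) ∧ e.2 ∈ {v} ∪ T} ≤ #T := by
  refine card_le_card_of_injOn Prod.snd (fun e he => ?_) fun e he e' he' h => ?_
  · simp only [coe_filter, mem_union, mem_singleton, Set.mem_ofPred_eq] at he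
    exact he.2.2.resolve_left fun h => hE e he.1 (he.2.1.trans h.symm)
  · simp only [coe_filter, mem_singleton, Set.mem_ofPred_eq] at he he'
    exact Prod.ext (he.2.1.trans he'.2.1.symm) h

variable [Fintype V]

/-- Vertex expansion of small sets, robust under the deletion of a set `T` of fewer than `k`
vertices: the number of edges that leave a nonempty set `W` of at most `δ * |V|` vertices and do not
end in `T` is at least `(|W| - 1) / 2` and at least one. -/
def Expands (k : ℕ) (δ : ℝ) (E : Finset (V × V)) : Prop :=
  ∀ T W : Finset V, #T < k → W.Nonempty → (#W : ℝ) ≤ δ * Fintype.card V →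
    (boundary E T W).Nonempty ∧ #W ≤ 2 * #(boundary E T W) + 1

lemma Expands.mono (h : Expands k δ E) (hδ : δ' ≤ δ) : Expands k δ' E := fun T W hT hW hc =>
  h T W hT hW (hc.trans (by gcongr))

/-- The sets of `m` edges spanned by a set `W` of `s` vertices and a set `T` of fewer than `k`
vertices, all of them starting in `W`. -/
def denseSubgraphs (V : Type*) [DecidableEq V] [Fintype V] (k s m : ℕ) :
    Finset (Finset (V × V)) :=
  (({T | #T < k} : Finset (Finset V)) ×ˢ powersetCard s univ).biUnion fun p =>
    powersetCard m (p.2 ×ˢ (p.2 ∪ p.1))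

lemma mem_denseSubgraphs {s m : ℕ} {F : Finset (V × V)} : F ∈ denseSubgraphs V k s m ↔
    ∃ T W : Finset V, #T < k ∧ #W = s ∧ F ⊆ W ×ˢ (W ∪ T) ∧ #F = m := by
  simp only [denseSubgraphs, mem_biUnion, mem_product, mem_filter, mem_univ, true_and,
    mem_powersetCard, subset_univ, Prod.exists, and_assoc, exists_and_left]

lemma exists_mem_denseSubgraphs (hne : ∀ e ∈ E, e.1 ≠ e.2) (hE : ∀ v, k ≤ outdeg E v)
    (hexp : ¬ Expands k δ E) :
    ∃ q : ℕ, (q + 2 : ℝ) ≤ δ * Fintype.card V ∧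
      ∃ F ∈ denseSubgraphs V k (q + 2) (k * (q + 2) - q / 2), F ⊆ E := by
  simp only [Expands, not_forall] at hexp
  obtain ⟨T, W, hT, hW, hWδ, hb⟩ := hexp
  rw [← card_pos] at hb
  have hinner := mul_card_le_card_inner_add_card_boundary hE T W
  have htwo : 2 ≤ #W := by
    by_contra! h
    have hone : #W = 1 := by have := hW.card_pos; omega
    obtain ⟨v, rfl⟩ := card_eq_one.1 hone
    have := card_inner_singleton_le hne T v
    rw [hone] at hb hinner
    omega
  obtain ⟨q, hq⟩ := Nat.exists_eq_add_of_le' htwo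
  rw [hq] at hb hinner hWδ
  obtain ⟨F, hF, hFc⟩ := exists_subset_card_eq
    (by omega : k * (q + 2) - q / 2 ≤ #{e ∈ E | e.1 ∈ W ∧ e.2 ∈ W ∪ T})
  refine ⟨q, mod_cast hWδ, F, mem_denseSubgraphs.2 ⟨T, W, hT, hq, fun e he => ?_, hFc⟩,
    hF.trans (filter_subset _ _)⟩
  exact mem_product.2 (mem_filter.1 (hF he)).2

variable (V) in
lemma card_denseSubgraphs_le [Nonempty V] {s : ℕ} (hk : 2 ≤ k) (hs : 2 ≤ s) (m : ℕ) :
    #(denseSubgraphs V k s m) ≤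
      k * Fintype.card V ^ (k - 1) * ((Fintype.card V).choose s * (k * s * s).choose m) := by
  rw [← mul_assoc]
  refine (card_biUnion_le_card_mul _ _ _ fun p hp => ?_).trans <| Nat.mul_le_mul_right
    ((k * s * s).choose m) ?_
  · simp only [mem_product, mem_filter, mem_univ, true_and, mem_powersetCard, subset_univ] at hp
    rw [card_powersetCard, card_product, hp.2]
    refine Nat.choose_le_choose _ ?_
    have hunion : #(p.2 ∪ p.1) ≤ k * s := by
      calc #(p.2 ∪ p.1) ≤ s + k := (card_union_le _ _).trans (by omega)
        _ ≤ k * s := by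
          obtain ⟨a, rfl⟩ := Nat.exists_eq_add_of_le hk
          obtain ⟨b, rfl⟩ := Nat.exists_eq_add_of_le hs
          nlinarith
    calc s * #(p.2 ∪ p.1) ≤ s * (k * s) := Nat.mul_le_mul_left _ hunion
      _ = k * s * s := mul_comm _ _
  · rw [card_product, card_powersetCard, card_univ]
    exact Nat.mul_le_mul_right _ (card_filter_card_lt_le V k)

end Expansion

section DenseEstimates

lemma pow_div_factorial_le_div_pow {x : ℝ} (hx : 0 ≤ x) (n : ℕ) :
    x ^ n / n.factorial ≤ (x / n) ^ n * Real.exp 1 ^ n := by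
  rcases n.eq_zero_or_pos with rfl | hn
  · simp
  calc x ^ n / n.factorial = (x / n) ^ n * ((n : ℝ) ^ n / n.factorial) := by
        rw [div_pow]
        field_simp
    _ ≤ (x / n) ^ n * Real.exp 1 ^ n := by
        rw [← Real.exp_nat_mul, mul_one]
        gcongr
        exact Real.pow_div_factorial_le_exp (n : ℝ) n.cast_nonneg n

lemma choose_le_div_pow_mul_exp (n r : ℕ) :
    (n.choose r : ℝ) ≤ (n / r : ℝ) ^ r * Real.exp 1 ^ r :=
  (Nat.choose_le_pow_div r n).trans (pow_div_factorial_le_div_pow n.cast_nonneg r)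

/-- The factor per vertex of `W` in the first moment bound for dense subgraphs on `W`, see
`choose_mul_choose_le`. -/
noncomputable def denseBase (k : ℕ) (C : ℝ) : ℝ := Real.exp 1 * (Real.exp 1 * k * C) ^ k

variable {k s f q N : ℕ} {C γ : ℝ}

lemma one_le_exp_mul_mul (hk : 1 ≤ k) (hC : 1 ≤ C) : 1 ≤ Real.exp 1 * k * C :=
  one_le_mul_of_one_le_of_one_le
    (one_le_mul_of_one_le_of_one_le (Real.one_le_exp zero_le_one) (mod_cast hk)) hC

lemma one_le_denseBase (hk : 1 ≤ k) (hC : 1 ≤ C) : 1 ≤ denseBase k C :=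
  one_le_mul_of_one_le_of_one_le (Real.one_le_exp zero_le_one)
    (one_le_pow₀ (one_le_exp_mul_mul hk hC))

lemma choose_mul_choose_le (hs : 0 < s) (hk : 1 ≤ k) (hsf : s ≤ f) (hfk : f ≤ k * s) (hN : 0 < N)
    (hC : 1 ≤ C) :
    (N.choose s : ℝ) * (k * s * s).choose f * (C / N) ^ f ≤
      denseBase k C ^ s * (s / N : ℝ) ^ (f - s) := by
  have hsf' : (s : ℝ) ≤ f := mod_cast hsf
  have hf : (0 : ℝ) < f := mod_cast hs.trans_le hsf
  have hbase := one_le_exp_mul_mul hk hC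
  have hchoose : ((k * s * s).choose f : ℝ) ≤ (k * s : ℝ) ^ f * Real.exp 1 ^ f := by
    refine (choose_le_div_pow_mul_exp _ f).trans ?_
    push_cast
    gcongr
    rw [div_le_iff₀ hf]
    gcongr
  have hpow : (s / N : ℝ) ^ f = (s / N : ℝ) ^ s * (s / N : ℝ) ^ (f - s) := by
    rw [← pow_add, Nat.add_sub_of_le hsf]
  have hcancel : (N / s : ℝ) * (s / N) = 1 := by field_simp
  calc (N.choose s : ℝ) * (k * s * s).choose f * (C / N) ^ f
      ≤ ((N / s : ℝ) ^ s * Real.exp 1 ^ s) * ((k * s : ℝ) ^ f * Real.exp 1 ^ f) * (C / N) ^ f := by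
        gcongr
        exact choose_le_div_pow_mul_exp N s
    _ = Real.exp 1 ^ s * (Real.exp 1 * k * C) ^ f * ((N / s : ℝ) ^ s * (s / N : ℝ) ^ f) := by
        simp only [mul_pow, div_pow C, div_pow (s : ℝ) (N : ℝ) f]
        ring
    _ = Real.exp 1 ^ s * (Real.exp 1 * k * C) ^ f * (s / N : ℝ) ^ (f - s) := by
        rw [hpow, ← mul_assoc ((N / s : ℝ) ^ s), ← mul_pow, hcancel, one_pow, one_mul]
    _ ≤ Real.exp 1 ^ s * (Real.exp 1 * k * C) ^ (k * s) * (s / N : ℝ) ^ (f - s) := by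
        gcongr
    _ = denseBase k C ^ s * (s / N : ℝ) ^ (f - s) := by
        rw [denseBase, mul_pow (Real.exp 1) _ s, ← pow_mul]

lemma exists_dense_exponent (hk : 2 ≤ k) (q : ℕ) :
    ∃ g, k * (q + 2) - q / 2 = q + 2 + (2 * (k - 1) + g) ∧ q ≤ 2 * g := by
  obtain ⟨j, rfl⟩ := Nat.exists_eq_add_of_le' hk
  have : (j + 2) * (q + 2) = j * q + 2 * j + 2 * q + 4 := by ring
  exact ⟨j * q + q - q / 2, by omega, by omega⟩

lemma pow_mul_dense_le (hk : 2 ≤ k) (hN : 0 < N) {B : ℝ} (hB : 0 ≤ B) (hγ : 0 ≤ γ) (hγ1 : γ ≤ 1)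
    (hBγ : B * γ = 1 / 2) (hq : (q + 2 : ℝ) ≤ γ ^ 2 * N) :
    (k * N ^ (k - 1) : ℝ) * (B ^ (q + 2) *
        ((q + 2 : ℕ) / N : ℝ) ^ (k * (q + 2) - q / 2 - (q + 2))) ≤
      k * B ^ 2 / N ^ (k - 1) * (((q + 2 : ℕ) : ℝ) ^ (2 * (k - 1)) * (1 / 2) ^ q) := by
  obtain ⟨g, hg, hgq⟩ := exists_dense_exponent hk q
  set x : ℝ := (q + 2 : ℕ) / N with hx
  have hxγ : x ≤ γ ^ 2 := by
    rw [hx, div_le_iff₀ (mod_cast hN)]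
    exact_mod_cast hq
  have hxg : x ^ g ≤ γ ^ q :=
    calc x ^ g ≤ (γ ^ 2) ^ g := by gcongr
      _ = γ ^ (2 * g) := by rw [pow_mul]
      _ ≤ γ ^ q := pow_le_pow_of_le_one hγ hγ1 hgq
  have hsq : (N : ℝ) ^ (2 * (k - 1)) = N ^ (k - 1) * N ^ (k - 1) := by rw [two_mul, pow_add]
  rw [hg, Nat.add_sub_cancel_left, pow_add x]
  calc (k * N ^ (k - 1) : ℝ) * (B ^ (q + 2) * (x ^ (2 * (k - 1)) * x ^ g))
      ≤ (k * N ^ (k - 1) : ℝ) * (B ^ (q + 2) * (x ^ (2 * (k - 1)) * γ ^ q)) := by gcongr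
    _ = k * B ^ 2 / N ^ (k - 1) * (((q + 2 : ℕ) : ℝ) ^ (2 * (k - 1)) * (1 / 2) ^ q) := by
        rw [← hBγ, mul_pow B γ q, hx, div_pow, pow_add B q 2, hsq]
        field_simp

lemma summable_add_two_pow_mul_half_pow (m : ℕ) :
    Summable fun q : ℕ => ((q + 2 : ℕ) : ℝ) ^ m * (1 / 2) ^ q := by
  have h : Summable fun n : ℕ => (n : ℝ) ^ m * (1 / 2 : ℝ) ^ n :=
    summable_pow_mul_geometric_of_norm_lt_one _ (by norm_num)
  refine (((summable_nat_add_iff 2).2 h).mul_left 4).congr fun q => ?_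
  rw [pow_add (1 / 2 : ℝ) q 2]
  ring

end DenseEstimates

section Rare

variable {k1 k2 r : ℕ} {ε C1 : ℝ} {P Q : ∀ N, Finset (Fin N × Fin N) → Prop}

open scoped Classical in
/-- The digraph property `P` holds for only a fraction `O(N ^ (-r))` of the dicores in the range of
edge numbers given by `ε` and `C1`. -/
def IsRare (k1 k2 : ℕ) (ε C1 : ℝ) (r : ℕ) (P : ∀ N, Finset (Fin N × Fin N) → Prop) : Prop :=
  ∃ K : ℝ, ∀ᶠ N : ℕ in Filter.atTop, ∀ M, InRange k1 k2 ε C1 N M →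
    (#{E ∈ dicores k1 k2 N M | P N E} : ℝ) ≤ K / N ^ r * #(dicores k1 k2 N M)

lemma isRare_of_eventually_le [∀ N, DecidablePred (P N)] {K : ℝ}
    (h : ∀ᶠ N : ℕ in Filter.atTop, ∀ M, InRange k1 k2 ε C1 N M →
      (#{E ∈ dicores k1 k2 N M | P N E} : ℝ) ≤ K / N ^ r * #(dicores k1 k2 N M)) :
    IsRare k1 k2 ε C1 r P := by
  refine ⟨K, h.mono fun N hN M hM => ?_⟩
  convert hN M hM

lemma IsRare.mono (hQ : IsRare k1 k2 ε C1 r Q) (h : ∀ᶠ N in Filter.atTop, ∀ E, P N E → Q N E) :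
    IsRare k1 k2 ε C1 r P := by
  classical
  obtain ⟨K, hK⟩ := hQ
  refine ⟨K, ?_⟩
  filter_upwards [hK, h] with N hK h M hM
  refine le_trans (Nat.cast_le.2 (card_le_card fun E hE => ?_)) (hK M hM)
  rw [mem_filter] at hE ⊢
  exact ⟨hE.1, h E hE.2⟩

lemma IsRare.or (hP : IsRare k1 k2 ε C1 r P) (hQ : IsRare k1 k2 ε C1 r Q) :
    IsRare k1 k2 ε C1 r fun N E => P N E ∨ Q N E := by
  classical
  obtain ⟨K, hK⟩ := hP
  obtain ⟨L, hL⟩ := hQ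
  refine ⟨K + L, ?_⟩
  filter_upwards [hK, hL] with N hK hL M hM
  rw [add_div, add_mul]
  refine le_trans ?_ (add_le_add (hK M hM) (hL M hM))
  rw [← Nat.cast_add]
  refine Nat.cast_le.2 ((card_le_card fun E hE => ?_).trans (card_union_le _ _))
  simp only [mem_union, mem_filter] at hE ⊢
  tauto

lemma IsRare.reverse (hP : IsRare k2 k1 ε C1 r P) :
    IsRare k1 k2 ε C1 r fun N E => P N (reverse E) := by
  classical
  obtain ⟨K, hK⟩ := hP
  refine ⟨K, hK.mono fun N hK M hM => ?_⟩
  rw [card_filter_dicores_reverse k1 k2 N M (P N), card_dicores_swap]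
  exact hK M hM.swap

end Rare

section SmallSetsExpand

variable {N M k k1 k2 q : ℕ} {ε C1 γ δ : ℝ}

lemma card_biUnion_dicoresOver_le (hε : 0 < ε) (hN : IsLarge k1 k2 ε C1 N)
    (hM : InRange k1 k2 ε C1 N M) {m : ℕ} (hm : (m : ℝ) ≤ ε / 8 * N)
    {𝓕 : Finset (Finset (Fin N × Fin N))} (h𝓕 : ∀ F ∈ 𝓕, #F = m) :
    (#(𝓕.biUnion (dicoresOver k1 k2 M)) : ℝ) ≤
      #𝓕 * ((edgeConst k1 k2 ε C1 / N) ^ m * #(dicores k1 k2 N M)) := by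
  calc (#(𝓕.biUnion (dicoresOver k1 k2 M)) : ℝ)
      ≤ ∑ F ∈ 𝓕, (#(dicoresOver k1 k2 M F) : ℝ) := mod_cast card_biUnion_le
    _ ≤ ∑ _F ∈ 𝓕, (edgeConst k1 k2 ε C1 / N) ^ m * #(dicores k1 k2 N M) := by
        refine sum_le_sum fun F hF => ?_
        rw [← h𝓕 F hF] at hm ⊢
        exact card_dicoresOver_le hε hN hM hm
    _ = #𝓕 * ((edgeConst k1 k2 ε C1 / N) ^ m * #(dicores k1 k2 N M)) := by
        rw [sum_const, nsmul_eq_mul]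

lemma card_filter_dense_le (hk : 2 ≤ k) (hε : 0 < ε) (hN : IsLarge k1 k2 ε C1 N)
    (hM : InRange k1 k2 ε C1 N M) (hγ : 0 ≤ γ) (hγ1 : γ ≤ 1)
    (hBγ : denseBase k (edgeConst k1 k2 ε C1) * γ = 1 / 2) (hqγ : (q + 2 : ℝ) ≤ γ ^ 2 * N)
    (hqε : k * (q + 2 : ℝ) ≤ ε / 8 * N) :
    (#((denseSubgraphs (Fin N) k (q + 2) (k * (q + 2) - q / 2)).biUnion
        (dicoresOver k1 k2 M)) : ℝ) ≤
      k * denseBase k (edgeConst k1 k2 ε C1) ^ 2 / N ^ (k - 1) *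
        (((q + 2 : ℕ) : ℝ) ^ (2 * (k - 1)) * (1 / 2) ^ q) * #(dicores k1 k2 N M) := by
  set C := edgeConst k1 k2 ε C1
  set D := (#(dicores k1 k2 N M) : ℝ)
  set f := k * (q + 2) - q / 2
  have hC : 1 ≤ C := one_le_edgeConst ..
  have hB : 0 ≤ denseBase k C := zero_le_one.trans (one_le_denseBase (by omega) hC)
  have : NeZero N := ⟨hN.pos.ne'⟩
  obtain ⟨g, hg, -⟩ := exists_dense_exponent hk q
  have hfk : f ≤ k * (q + 2) := Nat.sub_le _ _
  have hfε : (f : ℝ) ≤ ε / 8 * N := le_trans (mod_cast hfk) hqε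
  have hcard : (#(denseSubgraphs (Fin N) k (q + 2) f) : ℝ) ≤
      k * N ^ (k - 1) * (N.choose (q + 2) * (k * (q + 2) * (q + 2)).choose f) := by
    have := card_denseSubgraphs_le (Fin N) hk (Nat.le_add_left 2 q) f
    rw [Fintype.card_fin] at this
    exact_mod_cast this
  calc _ ≤ #(denseSubgraphs (Fin N) k (q + 2) f) * ((C / N) ^ f * D) :=
        card_biUnion_dicoresOver_le hε hN hM hfε fun F hF => by
          obtain ⟨-, -, -, -, -, h⟩ := mem_denseSubgraphs.1 hF
          exact h
    _ ≤ k * N ^ (k - 1) * (N.choose (q + 2) * (k * (q + 2) * (q + 2)).choose f) *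
        ((C / N) ^ f * D) := by gcongr
    _ = k * N ^ (k - 1) *
        (N.choose (q + 2) * (k * (q + 2) * (q + 2)).choose f * (C / N) ^ f) * D := by ring
    _ ≤ k * N ^ (k - 1) *
        (denseBase k C ^ (q + 2) * ((q + 2 : ℕ) / N : ℝ) ^ (f - (q + 2))) * D := by
        refine mul_le_mul_of_nonneg_right (mul_le_mul_of_nonneg_left ?_ (by positivity))
          (by positivity)
        exact choose_mul_choose_le (by omega) (by omega) (by omega) hfk hN.pos hC
    _ ≤ _ := mul_le_mul_of_nonneg_right (pow_mul_dense_le hk hN.pos hB hγ hγ1 hBγ hqγ)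
        (Nat.cast_nonneg _)

lemma card_filter_not_expands_le [DecidablePred fun E : Finset (Fin N × Fin N) => ¬ Expands k δ E]
    (hk : 2 ≤ k) (hk2 : k ≤ k2) (hε : 0 < ε)
    (hN : IsLarge k1 k2 ε C1 N) (hM : InRange k1 k2 ε C1 N M) (hγ : 0 ≤ γ) (hγ1 : γ ≤ 1)
    (hBγ : denseBase k (edgeConst k1 k2 ε C1) * γ = 1 / 2) (hδγ : δ ≤ γ ^ 2)
    (hδε : k * δ ≤ ε / 8) :
    (#{E ∈ dicores k1 k2 N M | ¬ Expands k δ E} : ℝ) ≤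
      (k * denseBase k (edgeConst k1 k2 ε C1) ^ 2 *
        ∑' q : ℕ, ((q + 2 : ℕ) : ℝ) ^ (2 * (k - 1)) * (1 / 2) ^ q) / N ^ (k - 1) *
        #(dicores k1 k2 N M) := by
  set B := denseBase k (edgeConst k1 k2 ε C1)
  set D := (#(dicores k1 k2 N M) : ℝ)
  set a : ℕ → ℝ := fun q => ((q + 2 : ℕ) : ℝ) ^ (2 * (k - 1)) * (1 / 2) ^ q
  set Q : Finset ℕ := {q ∈ range N | (q + 2 : ℝ) ≤ δ * N}
  have hsub : {E ∈ dicores k1 k2 N M | ¬ Expands k δ E} ⊆ Q.biUnion fun q =>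
      (denseSubgraphs (Fin N) k (q + 2) (k * (q + 2) - q / 2)).biUnion (dicoresOver k1 k2 M) := by
    intro E hE
    rw [mem_filter, mem_dicores] at hE
    obtain ⟨q, hq, F, hF, hFE⟩ :=
      exists_mem_denseSubgraphs hE.1.2.1 (fun v => hk2.trans (hE.1.le_outdeg v)) hE.2
    rw [Fintype.card_fin] at hq
    have hqN : (q : ℝ) < N := by
      nlinarith [hδγ.trans (pow_le_one₀ hγ hγ1), (Nat.cast_nonneg N : (0 : ℝ) ≤ N)]
    exact mem_biUnion.2 ⟨q, mem_filter.2 ⟨mem_range.2 (mod_cast hqN), hq⟩,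
      mem_biUnion.2 ⟨F, hF, mem_dicoresOver.2 ⟨hE.1, hFE⟩⟩⟩
  calc (#{E ∈ dicores k1 k2 N M | ¬ Expands k δ E} : ℝ)
      ≤ ∑ q ∈ Q, (#((denseSubgraphs (Fin N) k (q + 2) (k * (q + 2) - q / 2)).biUnion
          (dicoresOver k1 k2 M)) : ℝ) := by
        exact_mod_cast (card_le_card hsub).trans card_biUnion_le
    _ ≤ ∑ q ∈ Q, k * B ^ 2 / N ^ (k - 1) * a q * D := by
        refine sum_le_sum fun q hq => ?_
        have hq : (q + 2 : ℝ) ≤ δ * N := (mem_filter.1 hq).2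
        refine card_filter_dense_le hk hε hN hM hγ hγ1 hBγ (hq.trans (by gcongr)) ?_
        calc k * (q + 2 : ℝ) ≤ k * δ * N := by grw [hq, mul_assoc]
          _ ≤ ε / 8 * N := by gcongr
    _ = k * B ^ 2 * (∑ q ∈ Q, a q) / N ^ (k - 1) * D := by
        rw [mul_sum, sum_div, sum_mul]
        exact sum_congr rfl fun q _ => by ring
    _ ≤ k * B ^ 2 * (∑' q, a q) / N ^ (k - 1) * D := by
        gcongr
        exact (summable_add_two_pow_mul_half_pow _).sum_le_tsum _ fun q _ => by positivity

lemma exists_isRare_not_expands (hk : 2 ≤ k) (hk2 : k ≤ k2) (hε : 0 < ε) (k1 : ℕ) (C1 : ℝ) :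
    ∃ δ > 0, IsRare k1 k2 ε C1 (k - 1) fun _ E => ¬ Expands k δ E := by
  have hB : 1 ≤ denseBase k (edgeConst k1 k2 ε C1) :=
    one_le_denseBase (by omega) (one_le_edgeConst ..)
  have : (0 : ℝ) < k := mod_cast (by omega : 0 < k)
  obtain ⟨γ, hγ, hγ1, hBγ⟩ :
      ∃ γ : ℝ, 0 < γ ∧ γ ≤ 1 ∧ denseBase k (edgeConst k1 k2 ε C1) * γ = 1 / 2 := by
    refine ⟨1 / (2 * denseBase k (edgeConst k1 k2 ε C1)), by positivity, ?_, by field_simp⟩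
    rw [div_le_one (by positivity)]
    linarith
  have hδε : k * min (γ ^ 2) (ε / (8 * k)) ≤ ε / 8 := by
    grw [min_le_right]
    exact (by field_simp : k * (ε / (8 * k)) = ε / 8).le
  classical
  exact ⟨min (γ ^ 2) (ε / (8 * k)), by positivity, isRare_of_eventually_le <|
    (eventually_isLarge k1 k2 hε C1).mono fun N hN M hM =>
      card_filter_not_expands_le hk hk2 hε hN hM hγ.le hγ1 hBγ (min_le_left _ _) hδε⟩

end SmallSetsExpand

section Reachability

variable {V : Type*} [Fintype V] {E E' : Finset (V × V)} {T : Finset V} {a b u v w : V}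

open scoped Classical in
/-- The vertices that can be reached from `u` along edges of `E` avoiding `T`. -/
noncomputable def reachSet (E : Finset (V × V)) (T : Finset V) (u : V) : Finset V :=
  {w | Relation.ReflTransGen (fun a b => a ∉ T ∧ b ∉ T ∧ (a, b) ∈ E) u w}

lemma mem_reachSet : w ∈ reachSet E T u ↔
    Relation.ReflTransGen (fun a b => a ∉ T ∧ b ∉ T ∧ (a, b) ∈ E) u w := by
  simp [reachSet]

lemma self_mem_reachSet (E : Finset (V × V)) (T : Finset V) (u : V) : u ∈ reachSet E T u :=
  mem_reachSet.2 .refl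

lemma notMem_of_mem_reachSet (hu : u ∉ T) (hw : w ∈ reachSet E T u) : w ∉ T := by
  rcases (mem_reachSet.1 hw).cases_tail with rfl | ⟨_, _, hc⟩
  · exact hu
  · exact hc.2.1

lemma mem_reachSet_of_mk_mem (hu : u ∉ T) (ha : a ∈ reachSet E T u) (hb : b ∉ T)
    (hab : (a, b) ∈ E) : b ∈ reachSet E T u :=
  mem_reachSet.2 ((mem_reachSet.1 ha).tail ⟨notMem_of_mem_reachSet hu ha, hb, hab⟩)

lemma reachSet_subset (hE : E' ⊆ E) (hw : w ∈ reachSet E T u) :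
    reachSet E' T w ⊆ reachSet E T u := by
  intro x hx
  rw [mem_reachSet] at hw hx ⊢
  exact hw.trans (Relation.ReflTransGen.mono (fun a b h => ⟨h.1, h.2.1, hE h.2.2⟩) _ _ hx)

lemma mem_reachSet_reverse : v ∈ reachSet (reverse E) T u ↔ u ∈ reachSet E T v := by
  have hswap : (fun a b => a ∉ T ∧ b ∉ T ∧ (a, b) ∈ reverse E) =
      Function.swap fun a b => a ∉ T ∧ b ∉ T ∧ (a, b) ∈ E := by
    ext a b
    simp only [mk_mem_reverse, Function.swap, and_left_comm]
  rw [mem_reachSet, mem_reachSet, hswap, Relation.reflTransGen_swap]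

end Reachability

section RobustReachability

variable {V : Type*} [DecidableEq V] {E X : Finset (V × V)} {T W W' : Finset V} {u v : V}
  {k j : ℕ} {δ : ℝ}

lemma boundary_union_eq_empty (hW : boundary E T W = ∅) (hW' : boundary E T W' = ∅) :
    boundary E T (W ∪ W') = ∅ := by
  refine filter_eq_empty_iff.2 fun e he h => ?_
  have hWe := filter_eq_empty_iff.1 hW he
  have hWe' := filter_eq_empty_iff.1 hW' he
  simp only [mem_union] at h
  tauto

lemma boundary_subset_of_boundary_sdiff_eq_empty (h : boundary (E \ X) T W = ∅) :
    boundary E T W ⊆ X := by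
  intro e he
  by_contra hx
  rw [boundary, mem_filter] at he
  exact filter_eq_empty_iff.1 h (mem_sdiff.2 ⟨he.1, hx⟩) he.2

variable [Fintype V]

lemma boundary_reachSet (hu : u ∉ T) : boundary E T (reachSet E T u) = ∅ :=
  filter_eq_empty_iff.2 fun _ he h => h.2.1 (mem_reachSet_of_mk_mem hu h.1 h.2.2 he)

lemma Expands.card_le_of_boundary_sdiff (hexp : Expands k δ E) (hT : #T < k) (hX : #X ≤ j)
    (hW : #W ≤ δ * Fintype.card V) (hb : boundary (E \ X) T W = ∅) : #W ≤ 2 * j + 1 := by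
  rcases W.eq_empty_or_nonempty with rfl | hne
  · simp
  have hcard := (hexp T W hT hne hW).2
  have := card_le_card (boundary_subset_of_boundary_sdiff_eq_empty hb)
  omega

lemma Expands.card_biUnion_reachSet_le (hexp : Expands k δ E) (hT : #T < k) (hX : #X ≤ j)
    (hj : (4 * j + 2 : ℝ) ≤ δ * Fintype.card V)
    (hW : ∀ w ∈ W, w ∉ T ∧ #(reachSet (E \ X) T w) ≤ δ * Fintype.card V) :
    #(W.biUnion (reachSet (E \ X) T)) ≤ 2 * j + 1 ∧
      boundary (E \ X) T (W.biUnion (reachSet (E \ X) T)) = ∅ := by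
  induction W using Finset.induction with
  | empty => simp [boundary]
  | insert w W _ ih =>
    obtain ⟨hcard, hbd⟩ := ih fun x hx => hW x (mem_insert_of_mem hx)
    obtain ⟨hwT, hw⟩ := hW w (mem_insert_self w W)
    have hbd' := boundary_reachSet (E := E \ X) hwT
    have hcard' := hexp.card_le_of_boundary_sdiff hT hX hw hbd'
    have hunion := boundary_union_eq_empty hbd' hbd
    rw [biUnion_insert]
    refine ⟨hexp.card_le_of_boundary_sdiff hT hX (le_trans ?_ hj) hunion, hunion⟩
    exact_mod_cast (card_union_le _ _).trans (by omega)

-- Otherwise the reach sets in `E \ X` of all vertices reached from `u` in `E` would have fewer than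
-- `2 * j + 2` elements in total, and so `u` would reach only few vertices in `E`.
lemma Expands.exists_lt_card_reachSet_sdiff (hexp : Expands k δ E) (hT : #T < k) (hX : #X ≤ j)
    (hu : u ∉ T) (hj : (4 * j + 2 : ℝ) ≤ δ * Fintype.card V) :
    ∃ w ∈ reachSet E T u, δ * Fintype.card V < #(reachSet (E \ X) T w) := by
  by_contra! hcon
  have hsmall := (hexp.card_biUnion_reachSet_le hT hX hj fun w hw =>
    ⟨notMem_of_mem_reachSet hu hw, hcon w hw⟩).1
  have hsub : reachSet E T u ⊆ (reachSet E T u).biUnion (reachSet (E \ X) T) := fun w hw =>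
    mem_biUnion.2 ⟨w, hw, self_mem_reachSet _ _ _⟩
  have hcard : (#(reachSet E T u) : ℝ) ≤ δ * Fintype.card V :=
    le_trans (mod_cast ((card_le_card hsub).trans hsmall).trans (by omega)) hj
  have hne := (hexp _ _ hT ⟨u, self_mem_reachSet E T u⟩ hcard).1
  rw [boundary_reachSet hu] at hne
  exact not_nonempty_empty hne

lemma exists_lt_card_reachSet_sdiff_of_notMem (hexp : Expands k δ E)
    (hexp' : Expands k δ (reverse E)) (hT : #T < k) (hu : u ∉ T) (hv : v ∉ T)
    (huv : v ∉ reachSet E T u) (hXE : X ⊆ E) (hX : #X ≤ j)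
    (hj : (4 * j + 2 : ℝ) ≤ δ * Fintype.card V) :
    ∃ u' v', δ * Fintype.card V < #(reachSet (E \ X) T u') ∧
      δ * Fintype.card V < #(reachSet (reverse (E \ X)) T v') ∧
      Disjoint X (reachSet (E \ X) T u' ×ˢ reachSet (reverse (E \ X)) T v') := by
  obtain ⟨u', hu', hcu⟩ := hexp.exists_lt_card_reachSet_sdiff hT hX hu hj
  obtain ⟨v', hv', hcv⟩ := hexp'.exists_lt_card_reachSet_sdiff (X := reverse X) hT
    (by rwa [card_reverse]) hv hj
  rw [← reverse_sdiff] at hcv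
  refine ⟨u', v', hcu, hcv, disjoint_left.2 ?_⟩
  rintro ⟨a, b⟩ hab hmem
  rw [mem_product] at hmem
  have ha : a ∈ reachSet E T u := reachSet_subset sdiff_subset hu' hmem.1
  have hb : b ∈ reachSet (reverse E) T v :=
    reachSet_subset (reverse_subset_reverse.2 sdiff_subset) hv' hmem.2
  have hbu := mem_reachSet_of_mk_mem hu ha (notMem_of_mem_reachSet hv hb) (hXE hab)
  exact huv (reachSet_subset Subset.rfl hbu (mem_reachSet_reverse.1 hb))

end RobustReachability

section Removable

variable {N k1 k2 M i j : ℕ} {E X : Finset (Fin N × Fin N)}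

open scoped Classical in
/-- The sets of `j` edges whose removal leaves a `(k1,k2)`-dicore with `M` edges. -/
noncomputable def removable (k1 k2 M j : ℕ) (E : Finset (Fin N × Fin N)) :
    Finset (Finset (Fin N × Fin N)) :=
  {X ∈ powersetCard j E | IsDicore k1 k2 N M (E \ X)}

lemma mem_removable :
    X ∈ removable k1 k2 M j E ↔ (X ⊆ E ∧ #X = j) ∧ IsDicore k1 k2 N M (E \ X) := by
  simp [removable, mem_powersetCard]

lemma removable_subset_powersetCard_surplus (k1 k2 M j : ℕ) (E : Finset (Fin N × Fin N)) :
    removable k1 k2 M j E ⊆ powersetCard j (surplus k1 k2 E) := by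
  intro X hX
  rw [mem_removable] at hX
  refine mem_powersetCard.2 ⟨fun e he => ?_, hX.1.2⟩
  have heE := hX.1.1 he
  have hsub : E \ X ⊆ E.erase e := fun x hx => by
    rw [mem_sdiff] at hx
    exact mem_erase.2 ⟨by rintro rfl; exact hx.2 he, hx.1⟩
  have hin := (hX.2.le_indeg e.2).trans (indeg_mono hsub e.2)
  have hout := (hX.2.le_outdeg e.1).trans (outdeg_mono hsub e.1)
  have hin' := indeg_erase_add heE e.2
  have hout' := outdeg_erase_add heE e.1
  rw [if_pos rfl] at hin' hout'
  exact mem_surplus.2 ⟨heE, by omega, by omega⟩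

lemma card_removable_le (k1 k2 M j : ℕ) (E : Finset (Fin N × Fin N)) :
    (#(removable k1 k2 M j E) : ℝ) ≤ (#(surplus k1 k2 E) : ℝ) ^ j / j.factorial := by
  refine le_trans ?_ (Nat.choose_le_pow_div j _)
  rw [← card_powersetCard]
  exact_mod_cast card_le_card (removable_subset_powersetCard_surplus k1 k2 M j E)

lemma mul_card_removable_le (k1 k2 M i : ℕ) (E : Finset (Fin N × Fin N)) :
    (#(surplus k1 k2 E) - i * (k1 + k2 + 3) : ℝ) * #(removable k1 k2 (M + 1) i E) ≤
      ((i + 1 : ℕ) : ℝ) * #(removable k1 k2 M (i + 1) E) := by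
  refine card_mul_le_card_mul_of_moves _ _ (fun X => surplus k1 k2 (E \ X)) (fun X e => insert e X)
    id (fun Y e => Y.erase e) ?_ ?_ ?_
  · intro X hX
    have hcard := card_surplus_le_sdiff k1 k2 E X
    rw [(mem_removable.1 hX).1.2] at hcard
    rw [sub_le_iff_le_add]
    exact_mod_cast hcard
  · intro Y hY
    rw [id, (mem_removable.1 hY).1.2]
  · intro X hX e he
    rw [mem_removable] at hX
    have he' := mem_sdiff.1 (mem_surplus.1 he).1
    refine ⟨mem_removable.2 ⟨⟨insert_subset he'.1 hX.1.1, ?_⟩, ?_⟩, mem_insert_self _ _,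
      erase_insert he'.2⟩
    · rw [card_insert_of_notMem he'.2, hX.1.2]
    · rw [sdiff_insert]
      exact hX.2.erase he

lemma pow_le_factorial_mul_card_removable {r : ℝ} (hr : 0 ≤ r) (hE : IsDicore k1 k2 N (M + j) E)
    (hrE : r + j * (k1 + k2 + 3) ≤ #(surplus k1 k2 E)) :
    r ^ j ≤ j.factorial * (#(removable k1 k2 M j E) : ℝ) := by
  induction j generalizing M with
  | zero =>
    have hmem : ∅ ∈ removable k1 k2 M 0 E := mem_removable.2 (by simpa using hE)
    simpa using card_pos.2 ⟨_, hmem⟩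
  | succ i ih =>
    push_cast at hrE
    have : (0 : ℝ) ≤ k1 + k2 + 3 := by positivity
    have hri : r ≤ #(surplus k1 k2 E) - i * (k1 + k2 + 3) := by linarith
    calc r ^ (i + 1) = r * r ^ i := pow_succ' _ _
      _ ≤ r * (i.factorial * #(removable k1 k2 (M + 1) i E)) := by
          grw [ih (M := M + 1) (by rwa [add_right_comm, add_assoc]) (by linarith)]
      _ = i.factorial * (r * #(removable k1 k2 (M + 1) i E)) := by ring
      _ ≤ i.factorial * (((i + 1 : ℕ) : ℝ) * #(removable k1 k2 M (i + 1) E)) := by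
          grw [hri, mul_card_removable_le]
      _ = (i + 1).factorial * (#(removable k1 k2 M (i + 1) E) : ℝ) := by
          rw [Nat.factorial_succ]
          push_cast
          ring

lemma disjoint_of_subset_nonEdges (hX : X ⊆ nonEdges E) : Disjoint E X :=
  disjoint_right.2 fun _ hx => (mem_nonEdges.1 (hX hx)).2

lemma _root_.IsDicore.union (hE : IsDicore k1 k2 N M E) (hX : X ⊆ nonEdges E) :
    IsDicore k1 k2 N (M + #X) (E ∪ X) := by
  refine isDicore_iff.2 ⟨?_, fun e he => ?_, fun v => ?_⟩
  · rw [card_union_of_disjoint (disjoint_of_subset_nonEdges hX), hE.card_eq]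
  · rcases mem_union.1 he with he | he
    · exact hE.ne he
    · exact (mem_nonEdges.1 (hX he)).1
  · exact ⟨(hE.le_indeg v).trans (indeg_mono subset_union_left v),
      (hE.le_outdeg v).trans (outdeg_mono subset_union_left v)⟩

open scoped Classical in
lemma mem_sigma_removable_iff {𝓑 : Finset (Finset (Fin N × Fin N))}
    (h𝓑 : 𝓑 ⊆ dicores k1 k2 N (M + j)) :
    (E ∈ 𝓑 ∧ X ∈ removable k1 k2 M j E) ↔
      X ⊆ E ∧ E \ X ∈ dicores k1 k2 N M ∧
        X ∈ {Y ∈ powersetCard j (nonEdges (E \ X)) | E \ X ∪ Y ∈ 𝓑} := by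
  simp only [mem_removable, mem_filter, mem_powersetCard, mem_dicores]
  constructor
  · rintro ⟨hE, ⟨hXE, hX⟩, hD⟩
    refine ⟨hXE, hD, ⟨fun e he => mem_nonEdges.2 ⟨?_, fun h => (mem_sdiff.1 h).2 he⟩, hX⟩, ?_⟩
    · exact (mem_dicores.1 (h𝓑 hE)).ne (hXE he)
    · rwa [sdiff_union_of_subset hXE]
  · rintro ⟨hXE, hD, ⟨-, hX⟩, hE⟩
    rw [sdiff_union_of_subset hXE] at hE
    exact ⟨hE, ⟨hXE, hX⟩, hD⟩

open scoped Classical in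
lemma sum_sum_removable {𝓑 : Finset (Finset (Fin N × Fin N))}
    (h𝓑 : 𝓑 ⊆ dicores k1 k2 N (M + j)) (w : Finset (Fin N × Fin N) → ℝ) :
    ∑ E ∈ 𝓑, ∑ X ∈ removable k1 k2 M j E, w (E \ X) =
      ∑ E ∈ dicores k1 k2 N M, #{X ∈ powersetCard j (nonEdges E) | E ∪ X ∈ 𝓑} * w E := by
  simp only [← nsmul_eq_mul, ← sum_const]
  rw [sum_sigma', sum_sigma']
  refine sum_bij' (fun p _ => ⟨p.1 \ p.2, p.2⟩) (fun p _ => ⟨p.1 ∪ p.2, p.2⟩) ?_ ?_ ?_ ?_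
    fun _ _ => rfl
  · rintro ⟨E, X⟩ hp
    exact mem_sigma.2 ((mem_sigma_removable_iff h𝓑).1 (mem_sigma.1 hp)).2
  · rintro ⟨E, X⟩ hp
    rw [mem_sigma] at hp ⊢
    have hd := disjoint_of_subset_nonEdges (mem_powersetCard.1 (mem_filter.1 hp.2).1).1
    refine (mem_sigma_removable_iff h𝓑).2 ⟨subset_union_right, ?_⟩
    rwa [union_sdiff_cancel_right hd]
  · rintro ⟨E, X⟩ hp
    have hXE := ((mem_sigma_removable_iff h𝓑).1 (mem_sigma.1 hp)).1
    simp only [sdiff_union_of_subset hXE]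
  · rintro ⟨E, X⟩ hp
    have hd := disjoint_of_subset_nonEdges
      (mem_powersetCard.1 (mem_filter.1 (mem_sigma.1 hp).2).1).1
    simp only [union_sdiff_cancel_right hd]

end Removable

section Transfer

variable {N k1 k2 M j : ℕ} {E X : Finset (Fin N × Fin N)} {s x y : ℝ}

/-- The weight of a dicore in the double count of the pairs `(E, X)` with `X` in `removable E`:
about the inverse of the number of sets `X` for a given `E`, and zero if there are fewer than `s`
surplus edges. -/
noncomputable def removalWeight (k1 k2 j : ℕ) (s x : ℝ) (E : Finset (Fin N × Fin N)) : ℝ :=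
  if s ≤ #(surplus k1 k2 E) then j.factorial / (#(surplus k1 k2 E) - x) ^ j else 0

lemma removalWeight_nonneg (k1 k2 j : ℕ) (hx : x ≤ s) (E : Finset (Fin N × Fin N)) :
    0 ≤ removalWeight k1 k2 j s x E := by
  unfold removalWeight
  split_ifs with h
  · have : 0 ≤ (#(surplus k1 k2 E) : ℝ) - x := by linarith
    positivity
  · rfl

lemma card_surplus_le_of_mem_removable (hX : X ∈ removable k1 k2 M j E) :
    (#(surplus k1 k2 E) : ℝ) ≤ #(surplus k1 k2 (E \ X)) + j * (k1 + k2 + 3) := by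
  have h := card_surplus_le_sdiff k1 k2 E X
  rw [(mem_removable.1 hX).1.2] at h
  exact_mod_cast h

lemma card_surplus_sdiff_le (k1 k2 : ℕ) (E X : Finset (Fin N × Fin N)) :
    (#(surplus k1 k2 (E \ X)) : ℝ) ≤ #(surplus k1 k2 E) :=
  Nat.cast_le.2 (card_le_card (surplus_mono k1 k2 sdiff_subset))

lemma one_le_sum_removalWeight (hE : IsDicore k1 k2 N (M + j) E)
    (hxs : j * (k1 + k2 + 3) < s) (hs : s + j * (k1 + k2 + 3) ≤ #(surplus k1 k2 E)) :
    1 ≤ ∑ X ∈ removable k1 k2 M j E, removalWeight k1 k2 j s (j * (k1 + k2 + 3)) (E \ X) := by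
  set x : ℝ := j * (k1 + k2 + 3)
  have hx : 0 ≤ x := by positivity
  have hpos : 0 < #(surplus k1 k2 E) - x := by linarith
  have hweight : ∀ X ∈ removable k1 k2 M j E,
      j.factorial / (#(surplus k1 k2 E) - x) ^ j ≤ removalWeight k1 k2 j s x (E \ X) := by
    intro X hX
    have hX' := card_surplus_le_of_mem_removable hX
    have hle : s ≤ #(surplus k1 k2 (E \ X)) := by linarith
    rw [removalWeight, if_pos hle]
    have : 0 < #(surplus k1 k2 (E \ X)) - x := by linarith
    gcongr
    exact surplus_mono k1 k2 sdiff_subset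
  refine le_trans ?_ (card_nsmul_le_sum _ _ _ hweight)
  rw [nsmul_eq_mul, mul_div_assoc', le_div_iff₀ (by positivity), one_mul, mul_comm]
  exact pow_le_factorial_mul_card_removable hpos.le hE (by rw [sub_add_cancel])

lemma div_sub_pow_le_exp {r : ℝ} (hx : 0 ≤ x) (hr : 0 < r) (hxr : 4 * x ≤ r) (j : ℕ) :
    (r / (r - 2 * x)) ^ j ≤ Real.exp (j * (4 * x / r)) := by
  have hpos : 0 < r - 2 * x := by linarith
  have hle : r / (r - 2 * x) ≤ 4 * x / r + 1 := by
    have hsq : 0 ≤ 2 * x * (r - 4 * x) := mul_nonneg (by linarith) (by linarith)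
    rw [div_add_one hr.ne', div_le_div_iff₀ hpos hr]
    linarith
  rw [Real.exp_nat_mul]
  gcongr
  exact hle.trans (Real.add_one_le_exp _)

lemma sum_removalWeight_le (hs : 0 < s) (hxs : 4 * (j * (k1 + k2 + 3)) ≤ s)
    (hy : j * (4 * (j * (k1 + k2 + 3))) ≤ y * s) (M : ℕ) (E : Finset (Fin N × Fin N)) :
    ∑ X ∈ removable k1 k2 M j E, removalWeight k1 k2 j s (j * (k1 + k2 + 3)) (E \ X) ≤
      Real.exp y := by
  have hbound (X) (hX : X ∈ removable k1 k2 M j E) := card_surplus_le_of_mem_removable hX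
  set x : ℝ := j * (k1 + k2 + 3)
  set r := (#(surplus k1 k2 E) : ℝ)
  have hx : 0 ≤ x := by positivity
  rcases lt_or_ge r s with hrs | hrs
  · have hzero : ∀ X ∈ removable k1 k2 M j E, removalWeight k1 k2 j s x (E \ X) = 0 := fun X _ =>
      if_neg ((card_surplus_sdiff_le k1 k2 E X).trans_lt hrs).not_ge
    rw [sum_eq_zero hzero]
    positivity
  have hpos : 0 < r - 2 * x := by linarith
  have hweight : ∀ X ∈ removable k1 k2 M j E,
      removalWeight k1 k2 j s x (E \ X) ≤ j.factorial / (r - 2 * x) ^ j := by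
    intro X hX
    have := hbound X hX
    unfold removalWeight
    split_ifs
    · exact div_le_div_of_nonneg_left (by positivity) (by positivity)
        (pow_le_pow_left₀ hpos.le (by linarith) j)
    · positivity
  calc ∑ X ∈ removable k1 k2 M j E, removalWeight k1 k2 j s x (E \ X)
      ≤ #(removable k1 k2 M j E) * (j.factorial / (r - 2 * x) ^ j) := by
        rw [← nsmul_eq_mul]
        exact sum_le_card_nsmul _ _ _ hweight
    _ ≤ r ^ j / j.factorial * (j.factorial / (r - 2 * x) ^ j) := by
        grw [card_removable_le]
    _ = (r / (r - 2 * x)) ^ j := by rw [div_pow]; field_simp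
    _ ≤ Real.exp (j * (4 * x / r)) := div_sub_pow_le_exp hx (by linarith) (by linarith) j
    _ ≤ Real.exp (j * (4 * x / s)) := by gcongr
    _ ≤ Real.exp y := by
        rw [Real.exp_le_exp, mul_div_assoc', div_le_iff₀ hs]
        exact hy

open scoped Classical in
lemma card_le_of_card_filter_union_le {𝓑 : Finset (Finset (Fin N × Fin N))} {p : ℝ} (hp : 0 ≤ p)
    (hs : 0 < s) (hxs : 4 * (j * (k1 + k2 + 3)) ≤ s)
    (hy : j * (4 * (j * (k1 + k2 + 3))) ≤ y * s) (h𝓑 : 𝓑 ⊆ dicores k1 k2 N (M + j))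
    (hsurplus : ∀ E ∈ 𝓑, 2 * s ≤ #(surplus k1 k2 E))
    (hcard : ∀ E ∈ dicores k1 k2 N M, (#{X ∈ powersetCard j (nonEdges E) | E ∪ X ∈ 𝓑} : ℝ) ≤
      p * (#(nonEdges E)).choose j) :
    (#𝓑 : ℝ) ≤ p * Real.exp y * #(dicores k1 k2 N (M + j)) := by
  set w : Finset (Fin N × Fin N) → ℝ := removalWeight k1 k2 j s (j * (k1 + k2 + 3))
  have hx : (0 : ℝ) ≤ j * (k1 + k2 + 3) := by positivity
  have hall : ∀ E ∈ dicores k1 k2 N M, (#{X ∈ powersetCard j (nonEdges E) |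
      E ∪ X ∈ dicores k1 k2 N (M + j)} : ℝ) = (#(nonEdges E)).choose j := by
    intro E hE
    rw [filter_true_of_mem, card_powersetCard]
    intro X hX
    obtain ⟨hXE, rfl⟩ := mem_powersetCard.1 hX
    exact mem_dicores.2 ((mem_dicores.1 hE).union hXE)
  calc (#𝓑 : ℝ) = ∑ _E ∈ 𝓑, (1 : ℝ) := by simp
    _ ≤ ∑ E ∈ 𝓑, ∑ X ∈ removable k1 k2 M j E, w (E \ X) := by
        refine sum_le_sum fun E hE => ?_
        have := hsurplus E hE
        exact one_le_sum_removalWeight (mem_dicores.1 (h𝓑 hE)) (by linarith) (by linarith)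
    _ = ∑ E ∈ dicores k1 k2 N M, #{X ∈ powersetCard j (nonEdges E) | E ∪ X ∈ 𝓑} * w E :=
        sum_sum_removable h𝓑 w
    _ ≤ ∑ E ∈ dicores k1 k2 N M, p * (#{X ∈ powersetCard j (nonEdges E) |
          E ∪ X ∈ dicores k1 k2 N (M + j)} * w E) := by
        refine sum_le_sum fun E hE => ?_
        rw [hall E hE, ← mul_assoc]
        exact mul_le_mul_of_nonneg_right (hcard E hE) (removalWeight_nonneg _ _ _ (by linarith) E)
    _ = p * ∑ E ∈ dicores k1 k2 N (M + j), ∑ X ∈ removable k1 k2 M j E, w (E \ X) := by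
        rw [sum_sum_removable Subset.rfl w, mul_sum]
    _ ≤ p * (#(dicores k1 k2 N (M + j)) * Real.exp y) := by
        grw [sum_le_card_nsmul _ _ _ fun E _ => sum_removalWeight_le hs hxs hy M E, nsmul_eq_mul]
    _ = p * Real.exp y * #(dicores k1 k2 N (M + j)) := by ring

end Transfer

section Choose

variable {a n : ℕ}

lemma choose_mul_pow_le_pow_mul_choose (han : a ≤ n) (j : ℕ) :
    a.choose j * n ^ j ≤ a ^ j * n.choose j := by
  induction j with
  | zero => simp
  | succ j ih =>
    have hstep : (a - j) * n ≤ a * (n - j) := by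
      rw [Nat.sub_mul, Nat.mul_sub, mul_comm a j]
      exact Nat.sub_le_sub_left (Nat.mul_le_mul_left j han) _
    refine Nat.le_of_mul_le_mul_right ?_ j.succ_pos
    calc a.choose (j + 1) * n ^ (j + 1) * (j + 1)
        = a.choose (j + 1) * (j + 1) * n ^ (j + 1) := by ring
      _ = a.choose j * n ^ j * ((a - j) * n) := by
          rw [Nat.choose_succ_right_eq]
          ring
      _ ≤ a ^ j * n.choose j * (a * (n - j)) := Nat.mul_le_mul ih hstep
      _ = a ^ (j + 1) * (n.choose j * (n - j)) := by ring
      _ = a ^ (j + 1) * n.choose (j + 1) * (j + 1) := by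
          rw [← Nat.choose_succ_right_eq]
          ring

lemma choose_le_pow_mul_choose {c : ℝ} (han : a ≤ n) (hc : (a : ℝ) ≤ c * n) (j : ℕ) :
    (a.choose j : ℝ) ≤ c ^ j * n.choose j := by
  rcases n.eq_zero_or_pos with rfl | hn
  · obtain rfl : a = 0 := by omega
    cases j <;> simp
  · have hmul : (a.choose j : ℝ) * n ^ j ≤ a ^ j * n.choose j :=
      mod_cast choose_mul_pow_le_pow_mul_choose han j
    refine le_of_mul_le_mul_right ?_ (by positivity : (0 : ℝ) < n ^ j)
    calc (a.choose j : ℝ) * n ^ j ≤ a ^ j * n.choose j := hmul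
      _ ≤ (c * n) ^ j * n.choose j := by gcongr
      _ = c ^ j * n.choose j * n ^ j := by ring

end Choose

section AvoidingSets

variable {V : Type*} [Fintype V] [DecidableEq V] {E : Finset (V × V)} {A B : Finset V}
  {k j : ℕ} {δ : ℝ}

lemma card_nonEdges_sdiff_product_le (hE : ∀ e ∈ E, e.1 ≠ e.2) (hδ : 0 ≤ δ)
    (hcard : (#E : ℝ) + Fintype.card V ≤ δ ^ 2 / 2 * Fintype.card V ^ 2)
    (hA : δ * Fintype.card V ≤ #A) (hB : δ * Fintype.card V ≤ #B) :
    (#(nonEdges E \ A ×ˢ B) : ℝ) ≤ (1 - δ ^ 2 / 2) * #(nonEdges E) := by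
  have htotal : #(nonEdges E) + #E + Fintype.card V = Fintype.card V ^ 2 := by
    rw [card_nonEdges_add hE, Nat.mul_sub_one, sq, Nat.sub_add_cancel (Nat.le_mul_self _)]
  have hdisj : #(nonEdges E \ A ×ˢ B) + #A * #B ≤ Fintype.card V ^ 2 := by
    rw [← card_product, ← card_union_of_disjoint sdiff_disjoint, sq, ← Fintype.card_prod]
    exact card_le_univ _
  have hAB : δ * Fintype.card V * (δ * Fintype.card V) ≤ #A * #B := by gcongr
  have hnon : δ ^ 2 / 2 * #(nonEdges E) ≤ δ ^ 2 / 2 * Fintype.card V ^ 2 := by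
    gcongr
    exact_mod_cast (show #(nonEdges E) ≤ Fintype.card V ^ 2 by omega)
  have htotal' : (#(nonEdges E) : ℝ) + #E + Fintype.card V = Fintype.card V ^ 2 :=
    mod_cast htotal
  have hdisj' : (#(nonEdges E \ A ×ˢ B) : ℝ) + #A * #B ≤ Fintype.card V ^ 2 := mod_cast hdisj
  linarith

lemma card_le_of_disjoint_reachSet_product [Nonempty V] {𝓧 : Finset (Finset (V × V))}
    (hE : ∀ e ∈ E, e.1 ≠ e.2) (hδ : 0 ≤ δ) (hδ1 : δ ≤ 1)
    (hcard : (#E : ℝ) + Fintype.card V ≤ δ ^ 2 / 2 * Fintype.card V ^ 2)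
    (h𝓧 : 𝓧 ⊆ powersetCard j (nonEdges E))
    (hreach : ∀ X ∈ 𝓧, ∃ T u v, #T < k ∧ δ * Fintype.card V < #(reachSet E T u) ∧
      δ * Fintype.card V < #(reachSet (reverse E) T v) ∧
      Disjoint X (reachSet E T u ×ˢ reachSet (reverse E) T v)) :
    (#𝓧 : ℝ) ≤ k * (Fintype.card V : ℝ) ^ (k - 1) * (Fintype.card V : ℝ) ^ 2 *
      (1 - δ ^ 2 / 2) ^ j * (#(nonEdges E)).choose j := by
  set R : Finset V × V × V → Finset (V × V) :=
    fun q => reachSet E q.1 q.2.1 ×ˢ reachSet (reverse E) q.1 q.2.2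
  set 𝓠 : Finset (Finset V × V × V) :=
    {q ∈ ({T | #T < k} : Finset (Finset V)) ×ˢ univ |
      δ * Fintype.card V < #(reachSet E q.1 q.2.1) ∧
      δ * Fintype.card V < #(reachSet (reverse E) q.1 q.2.2)}
  have hcover : 𝓧 ⊆ 𝓠.biUnion fun q => powersetCard j (nonEdges E \ R q) := by
    intro X hX
    obtain ⟨T, u, v, hT, hu, hv, hdisj⟩ := hreach X hX
    obtain ⟨hsub, hXj⟩ := mem_powersetCard.1 (h𝓧 hX)
    refine mem_biUnion.2 ⟨(T, u, v), mem_filter.2 ⟨by simpa using hT, hu, hv⟩, ?_⟩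
    exact mem_powersetCard.2 ⟨subset_sdiff.2 ⟨hsub, hdisj⟩, hXj⟩
  have hchoose : ∀ q ∈ 𝓠, (#(powersetCard j (nonEdges E \ R q)) : ℝ) ≤
      (1 - δ ^ 2 / 2) ^ j * (#(nonEdges E)).choose j := by
    intro q hq
    obtain ⟨-, hu, hv⟩ := mem_filter.1 hq
    rw [card_powersetCard]
    exact choose_le_pow_mul_choose (card_le_card sdiff_subset)
      (card_nonEdges_sdiff_product_le hE hδ hcard hu.le hv.le) j
  have hcard𝓠 : #𝓠 ≤ k * Fintype.card V ^ (k - 1) * Fintype.card V ^ 2 := by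
    refine (card_filter_le _ _).trans ?_
    rw [card_product, card_univ, Fintype.card_prod, ← sq]
    exact Nat.mul_le_mul_right _ (card_filter_card_lt_le V k)
  have hbase : 0 ≤ 1 - δ ^ 2 / 2 := by nlinarith
  calc (#𝓧 : ℝ) ≤ #(𝓠.biUnion fun q => powersetCard j (nonEdges E \ R q)) :=
        mod_cast card_le_card hcover
    _ ≤ ∑ q ∈ 𝓠, (#(powersetCard j (nonEdges E \ R q)) : ℝ) := mod_cast card_biUnion_le
    _ ≤ #𝓠 * ((1 - δ ^ 2 / 2) ^ j * (#(nonEdges E)).choose j) := by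
        rw [← nsmul_eq_mul]
        exact sum_le_card_nsmul _ _ _ hchoose
    _ ≤ (k * Fintype.card V ^ (k - 1) * Fintype.card V ^ 2 : ℕ) *
          ((1 - δ ^ 2 / 2) ^ j * (#(nonEdges E)).choose j) := by gcongr
    _ = _ := by
        push_cast
        ring

end AvoidingSets

section NotStronglyConnected

variable {N M k1 k2 k j : ℕ} {δ : ℝ} {E X : Finset (Fin N × Fin N)}

lemma exists_reachSet_of_not_kStronglyConnected (hkN : k < N) (hexp : Expands k δ (E ∪ X))
    (hexp' : Expands k δ (reverse (E ∪ X))) (hnot : ¬ KStronglyConnected k (E ∪ X))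
    (hdisj : Disjoint E X) (hX : #X ≤ j) (hj : (4 * j + 2 : ℝ) ≤ δ * N) :
    ∃ T u v, #T < k ∧ δ * N < #(reachSet E T u) ∧ δ * N < #(reachSet (reverse E) T v) ∧
      Disjoint X (reachSet E T u ×ˢ reachSet (reverse E) T v) := by
  simp only [KStronglyConnected, not_and, not_forall] at hnot
  obtain ⟨T, hT, u, v, hu, hv, huv⟩ := hnot hkN
  have h := exists_lt_card_reachSet_sdiff_of_notMem hexp hexp' hT hu hv
    (mt mem_reachSet.1 huv) subset_union_right hX (by rwa [Fintype.card_fin])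
  rw [union_sdiff_cancel_right hdisj, Fintype.card_fin] at h
  obtain ⟨u', v', h⟩ := h
  exact ⟨T, u', v', hT, h⟩

lemma card_le_of_expands_of_not_kStronglyConnected {𝓑 : Finset (Finset (Fin N × Fin N))} {η : ℝ}
    (hδ : 0 < δ) (hδ1 : δ ≤ 1) (hη : 0 < η) (hkN : k < N) (hj : (4 * j + 2 : ℝ) ≤ δ * N)
    (hM : (M : ℝ) + N ≤ δ ^ 2 / 2 * N ^ 2) (hjN : j ^ 2 ≤ N)
    (hjη : 8 * (k1 + k2 + 3) * j ≤ η * N) (h𝓑 : 𝓑 ⊆ dicores k1 k2 N (M + j))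
    (h : ∀ E ∈ 𝓑, Expands k δ E ∧ Expands k δ (reverse E) ∧ η * N ≤ #(surplus k1 k2 E) ∧
      ¬ KStronglyConnected k E) :
    (#𝓑 : ℝ) ≤ k * (N : ℝ) ^ (k - 1) * (N : ℝ) ^ 2 * (1 - δ ^ 2 / 2) ^ j *
      Real.exp (8 * (k1 + k2 + 3) / η) * #(dicores k1 k2 N (M + j)) := by
  have : NeZero N := ⟨by omega⟩
  have hN : (0 : ℝ) < N := Nat.cast_pos.2 (NeZero.pos N)
  have hjN' : (j : ℝ) ^ 2 ≤ N := mod_cast hjN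
  have hbase : 0 ≤ 1 - δ ^ 2 / 2 := by nlinarith
  classical
  refine card_le_of_card_filter_union_le (s := η * N / 2) (by positivity) (by positivity)
    (by linarith) ?_ h𝓑 (fun E hE => by linarith [(h E hE).2.2.1]) fun E hE => ?_
  · calc (j * (4 * (j * (k1 + k2 + 3))) : ℝ) = 4 * (k1 + k2 + 3) * j ^ 2 := by ring
      _ ≤ 4 * (k1 + k2 + 3) * N := by gcongr
      _ = 8 * (k1 + k2 + 3) / η * (η * N / 2) := by
          field_simp
          ring
  · rw [mem_dicores] at hE
    have hcount := card_le_of_disjoint_reachSet_product (k := k) (j := j) (δ := δ)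
      (𝓧 := {X ∈ powersetCard j (nonEdges E) | E ∪ X ∈ 𝓑}) hE.2.1 hδ.le hδ1
      (by rwa [hE.card_eq, Fintype.card_fin]) (filter_subset _ _) fun X hX => ?_
    · rwa [Fintype.card_fin] at hcount
    obtain ⟨hX, hEX⟩ := mem_filter.1 hX
    obtain ⟨hXE, hXj⟩ := mem_powersetCard.1 hX
    obtain ⟨hexp, hexp', -, hnot⟩ := h _ hEX
    rw [Fintype.card_fin]
    exact exists_reachSet_of_not_kStronglyConnected hkN hexp hexp' hnot
      (disjoint_of_subset_nonEdges hXE) hXj.le hj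

end NotStronglyConnected

section Rarity

variable {k1 k2 k : ℕ} {ε C1 δ η : ℝ}

lemma exists_pow_mul_pow_sqrt_le (p : ℕ) {c : ℝ} (hc : 0 ≤ c) (hc1 : c < 1) :
    ∃ A : ℝ, ∀ N : ℕ, (N : ℝ) ^ p * c ^ Nat.sqrt N ≤ A := by
  obtain ⟨A, hA⟩ := (tendsto_pow_const_mul_const_pow_of_lt_one (2 * p) hc hc1).bddAbove_range
  refine ⟨3 ^ p * A, fun N => ?_⟩
  have hN : N ≤ 3 * Nat.sqrt N ^ 2 := by
    nlinarith [Nat.sqrt_le_add N, Nat.le_self_pow two_ne_zero (Nat.sqrt N)]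
  calc (N : ℝ) ^ p * c ^ Nat.sqrt N ≤ (3 * (Nat.sqrt N : ℝ) ^ 2) ^ p * c ^ Nat.sqrt N := by
        gcongr
        exact_mod_cast hN
    _ = 3 ^ p * ((Nat.sqrt N : ℝ) ^ (2 * p) * c ^ Nat.sqrt N) := by
        rw [mul_pow, ← pow_mul, mul_assoc]
    _ ≤ 3 ^ p * A := by
        gcongr
        exact hA ⟨Nat.sqrt N, rfl⟩

lemma isRare_of_eventually_le_pow_sqrt {r p : ℕ} {P : ∀ N, Finset (Fin N × Fin N) → Prop}
    [∀ N, DecidablePred (P N)] {K c : ℝ} (hK : 0 ≤ K) (hc : 0 ≤ c) (hc1 : c < 1)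
    (h : ∀ᶠ N : ℕ in Filter.atTop, ∀ M, InRange k1 k2 ε C1 N M →
      (#{E ∈ dicores k1 k2 N M | P N E} : ℝ) ≤
        K * N ^ p * c ^ Nat.sqrt N * #(dicores k1 k2 N M)) :
    IsRare k1 k2 ε C1 r P := by
  obtain ⟨A, hA⟩ := exists_pow_mul_pow_sqrt_le (p + r) hc hc1
  refine isRare_of_eventually_le (K := K * A) ?_
  filter_upwards [h, Filter.eventually_gt_atTop 0] with N h hN M hM
  refine (h M hM).trans (mul_le_mul_of_nonneg_right ?_ (Nat.cast_nonneg _))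
  rw [le_div_iff₀ (by positivity)]
  calc K * N ^ p * c ^ Nat.sqrt N * N ^ r = K * (N ^ (p + r) * c ^ Nat.sqrt N) := by ring
    _ ≤ K * A := by
        gcongr
        exact hA N

lemma isRare_surplus_lt (k1 k2 r : ℕ) (hε : 0 < ε) (hC1 : 0 < C1) :
    IsRare k1 k2 ε C1 r fun N E => (#(surplus k1 k2 E) : ℝ) < surplusRate ε C1 / 2 * N := by
  refine isRare_of_eventually_le_pow_sqrt (p := 0) (c := 1 / 2) zero_le_one (by norm_num)
    (by norm_num) ?_
  simpa using card_filter_surplus_lt_le k1 k2 hε hC1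

lemma isRare_expands_not_kStronglyConnected (k1 k2 k r : ℕ) (C1 : ℝ) (hε : 0 < ε) (hδ : 0 < δ)
    (hδ1 : δ ≤ 1) (hη : 0 < η) :
    IsRare k1 k2 ε C1 r fun N E => Expands k δ E ∧ Expands k δ (reverse E) ∧
      η * N ≤ #(surplus k1 k2 E) ∧ ¬ KStronglyConnected k E := by
  classical
  refine isRare_of_eventually_le_pow_sqrt (p := k - 1 + 2) (c := 1 - δ ^ 2 / 2)
    (K := k * Real.exp (8 * (k1 + k2 + 3) / η)) (by positivity) (by nlinarith) (by nlinarith) ?_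
  filter_upwards [Filter.eventually_gt_atTop k, eventually_mul_sqrt_le 6 hδ,
    eventually_mul_sqrt_le (8 * (k1 + k2 + 3)) hη, eventually_mul_sqrt_le 1 hε,
    eventually_le_mul (C1 + 1) (by positivity : 0 < δ ^ 2 / 2)]
    with N hkN hδN hηN hεN hN M hM
  have hNpos : 0 < N := by omega
  have hsqrt : 1 ≤ Nat.sqrt N := Nat.sqrt_pos.2 hNpos
  have hsqrtM : Nat.sqrt N ≤ M := by
    have : (Nat.sqrt N : ℝ) ≤ M := by
      calc (Nat.sqrt N : ℝ) ≤ ε * N := by linarith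
        _ ≤ (k1 + ε) * N := by
            gcongr
            exact le_add_of_nonneg_left (Nat.cast_nonneg _)
        _ ≤ M := hM.in_le
    exact_mod_cast this
  obtain ⟨M, rfl⟩ := Nat.exists_eq_add_of_le' hsqrtM
  have hMN : (M : ℝ) + N ≤ δ ^ 2 / 2 * N ^ 2 := by
    have hle := hM.le
    push_cast at hle
    nlinarith [(Nat.cast_nonneg N : (0 : ℝ) ≤ N)]
  have hsqrt' : (1 : ℝ) ≤ Nat.sqrt N := mod_cast hsqrt
  refine (card_le_of_expands_of_not_kStronglyConnected hδ hδ1 hη hkN (j := Nat.sqrt N)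
    (by linarith) hMN (Nat.sqrt_le' N) hηN (filter_subset _ _) fun E hE =>
      (mem_filter.1 hE).2).trans_eq ?_
  rw [pow_add]
  ring

theorem isRare_not_kStronglyConnected (hk : 2 ≤ k) (hk1 : k ≤ k1) (hk2 : k ≤ k2) (hε : 0 < ε)
    (hC1 : 0 < C1) : IsRare k1 k2 ε C1 (k - 1) fun _ E => ¬ KStronglyConnected k E := by
  obtain ⟨δ₁, hδ₁, hrare₁⟩ := exists_isRare_not_expands hk hk2 hε k1 C1
  obtain ⟨δ₂, hδ₂, hrare₂⟩ := exists_isRare_not_expands hk hk1 hε k2 C1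
  have hrare := isRare_expands_not_kStronglyConnected k1 k2 k (k - 1) C1 hε
    (lt_min (lt_min hδ₁ hδ₂) one_pos) (min_le_right _ _) (half_pos (surplusRate_pos hε hC1))
  refine (((hrare₁.or hrare₂.reverse).or (isRare_surplus_lt k1 k2 _ hε hC1)).or hrare).mono
    (.of_forall fun N E hE => ?_)
  by_contra! h
  obtain ⟨⟨⟨hexp, hexp'⟩, hsurplus⟩, hnot⟩ := h
  exact hE (hnot (hexp.mono ((min_le_left _ _).trans (min_le_left _ _)))
    (hexp'.mono ((min_le_left _ _).trans (min_le_right _ _))) hsurplus)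

end Rarity

section Existence

variable {N k1 k2 K M : ℕ}

lemma card_filter_val_mem_Icc (hK : K < N) : #{t : Fin N | t.val ∈ Icc 1 K} = K := by
  rw [← card_image_of_injective _ Fin.val_injective]
  have himage : ({t : Fin N | t.val ∈ Icc 1 K} : Finset (Fin N)).image Fin.val = Icc 1 K := by
    ext i
    simp only [mem_image, mem_filter, mem_univ, true_and]
    refine ⟨?_, fun hi => ⟨⟨i, (mem_Icc.1 hi).2.trans_lt hK⟩, hi, rfl⟩⟩
    rintro ⟨t, ht, rfl⟩
    exact ht
  rw [himage, Nat.card_Icc, Nat.add_sub_cancel]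

lemma exists_indeg_eq_outdeg_eq (hK : K < N) : ∃ E : Finset (Fin N × Fin N),
    (∀ e ∈ E, e.1 ≠ e.2) ∧ ∀ v, indeg E v = K ∧ outdeg E v = K := by
  have : NeZero N := ⟨by omega⟩
  refine ⟨({e | (e.2 - e.1).val ∈ Icc 1 K} : Finset (Fin N × Fin N)), fun e he h => ?_,
    fun v => ⟨?_, ?_⟩⟩
  · simp [h] at he
  · rw [← card_filter_mk_mem_right]
    exact (card_equiv (Equiv.subLeft v) fun d => by simp).trans (card_filter_val_mem_Icc hK)
  · rw [← card_filter_mk_mem_left]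
    exact (card_equiv (Equiv.subRight v) fun d => by simp).trans (card_filter_val_mem_Icc hK)

lemma dicores_nonempty (h1 : k1 ≤ K) (h2 : k2 ≤ K) (hKN : K < N) (hKM : K * N ≤ M)
    (hMN : M + N ≤ N * N) : (dicores k1 k2 N M).Nonempty := by
  obtain ⟨E, hE, hdeg⟩ := exists_indeg_eq_outdeg_eq hKN
  have hcard : #E = K * N := by
    rw [card_eq_sum_card_fiberwise (f := Prod.fst) (t := univ) fun _ _ => mem_univ _]
    change ∑ v, outdeg E v = _
    simp [hdeg, mul_comm]
  have hsub : E ⊆ nonEdges ∅ := fun e he => mem_nonEdges.2 ⟨hE e he, notMem_empty e⟩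
  have htotal := card_nonEdges_add (E := (∅ : Finset (Fin N × Fin N))) (by simp)
  rw [card_empty, Fintype.card_fin, Nat.mul_sub_one] at htotal
  obtain ⟨E', hEE', hE', hM⟩ := exists_subsuperset_card_eq hsub (n := M) (by omega) (by omega)
  refine ⟨E', mem_dicores.2 (isDicore_iff.2 ⟨hM, fun e he => (mem_nonEdges.1 (hE' he)).1,
    fun v => ⟨?_, ?_⟩⟩)⟩
  · exact h1.trans ((hdeg v).1.ge.trans (indeg_mono hEE' v))
  · exact h2.trans ((hdeg v).2.ge.trans (outdeg_mono hEE' v))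

lemma InRange.dicores_nonempty {ε C1 : ℝ} (hM : InRange k1 k2 ε C1 N M) (hε : 0 ≤ ε)
    (hN : IsLarge k1 k2 ε C1 N) : (dicores k1 k2 N M).Nonempty := by
  have hadd := hM.add_le hN
  have hlarge := hN.add_le
  refine Dicore.dicores_nonempty (le_max_left k1 k2) (le_max_right k1 k2) (by omega) ?_ ?_
  · have hin : (k1 * N : ℝ) ≤ M :=
      le_trans (mul_le_mul_of_nonneg_right (by linarith) N.cast_nonneg) hM.in_le
    have hout : (k2 * N : ℝ) ≤ M :=
      le_trans (mul_le_mul_of_nonneg_right (by linarith) N.cast_nonneg) hM.out_le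
    rw [← Nat.mul_max_mul_right]
    exact max_le (mod_cast hin) (mod_cast hout)
  · have : (M : ℝ) + N ≤ N * N := by nlinarith
    exact_mod_cast this

end Existence

section Ratio

variable {α : Type*} {s : Finset α} {p : α → Prop} [DecidablePred p]

lemma abs_card_filter_div_card_sub_one {_ : DecidablePred fun x => ¬ p x} (hs : s.Nonempty) :
    |(#{x ∈ s | p x} : ℝ) / #s - 1| = #{x ∈ s | ¬ p x} / #s := by
  have hpos : (0 : ℝ) < #s := mod_cast card_pos.2 hs
  have hsum : (#{x ∈ s | p x} : ℝ) + #{x ∈ s | ¬ p x} = #s :=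
    mod_cast card_filter_add_card_filter_not p
  have hdiv : (#{x ∈ s | p x} : ℝ) / #s - 1 = -(#{x ∈ s | ¬ p x} / #s) := by
    rw [div_sub_one hpos.ne', ← neg_div]
    congr 1
    linarith
  rw [hdiv, abs_neg, abs_of_nonneg (by positivity)]

lemma abs_card_filter_div_card_sub_one_le_one : |(#{x ∈ s | p x} : ℝ) / #s - 1| ≤ 1 := by
  have hle : (#{x ∈ s | p x} : ℝ) / #s ≤ 1 :=
    div_le_one_of_le₀ (mod_cast card_filter_le s p) (Nat.cast_nonneg _)
  have hnonneg : (0 : ℝ) ≤ #{x ∈ s | p x} / #s := by positivity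
  rw [abs_le]
  constructor <;> linarith

lemma exists_pos_forall_le_div_pow {ι : Type*} {f : ℕ → ι → ℝ} {q : ℕ → ι → Prop} {r : ℕ} {K : ℝ}
    (hf : ∀ N i, f N i ≤ 1) (h : ∀ᶠ N : ℕ in Filter.atTop, ∀ i, q N i → f N i ≤ K / N ^ r) :
    ∃ C : ℝ, 0 < C ∧ ∀ N i, 0 < N → q N i → f N i ≤ C / N ^ r := by
  obtain ⟨N₀, hN₀⟩ := Filter.eventually_atTop.1 h
  refine ⟨max K ((N₀ : ℝ) ^ r + 1), by positivity, fun N i hN hi => ?_⟩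
  rcases le_total N₀ N with hle | hle
  · refine (hN₀ N hle i hi).trans ?_
    gcongr
    exact le_max_left _ _
  · refine (hf N i).trans ?_
    rw [one_le_div (by positivity)]
    calc (N : ℝ) ^ r ≤ N₀ ^ r := by gcongr
      _ ≤ N₀ ^ r + 1 := le_add_of_nonneg_right zero_le_one
      _ ≤ max K (N₀ ^ r + 1) := le_max_right _ _

end Ratio

section Main

variable {N M k1 k2 r : ℕ} {ε C1 : ℝ} {P : ∀ N, Finset (Fin N × Fin N) → Prop}

lemma inRange_of_max (hle : (((max k1 k2 : ℕ) : ℝ) + ε) * N ≤ M) (hM : (M : ℝ) ≤ C1 * N) :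
    InRange k1 k2 ε C1 N M := by
  refine ⟨le_trans ?_ hle, le_trans ?_ hle, hM⟩
  · gcongr
    exact le_max_left _ _
  · gcongr
    exact le_max_right _ _

lemma natCard_isDicore : Nat.card {E // IsDicore k1 k2 N M E} = #(dicores k1 k2 N M) :=
  Nat.subtype_card _ fun _ => mem_dicores

open scoped Classical in
lemma natCard_isDicore_and (p : Finset (Fin N × Fin N) → Prop) :
    Nat.card {E // IsDicore k1 k2 N M E ∧ p E} = #{E ∈ dicores k1 k2 N M | p E} :=
  Nat.subtype_card _ fun E => by rw [mem_filter, mem_dicores]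

open scoped Classical in
lemma IsRare.exists_abs_ratio_sub_one_le (h : IsRare k1 k2 ε C1 r fun N E => ¬ P N E)
    (hε : 0 < ε) : ∃ C : ℝ, 0 < C ∧ ∀ N M, 0 < N → InRange k1 k2 ε C1 N M →
      |(#{E ∈ dicores k1 k2 N M | P N E} : ℝ) / #(dicores k1 k2 N M) - 1| ≤ C / N ^ r := by
  obtain ⟨K, hK⟩ := h
  refine exists_pos_forall_le_div_pow (K := K)
    (fun _ _ => abs_card_filter_div_card_sub_one_le_one) ?_
  filter_upwards [hK, eventually_isLarge k1 k2 hε C1] with N hK hN M hM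
  have hne := hM.dicores_nonempty hε.le hN
  exact (abs_card_filter_div_card_sub_one hne).trans_le <|
    (div_le_iff₀ (mod_cast card_pos.2 hne)).2 (hK M hM)

end Main

end Dicore

open Dicore in
theorem ratio_k_strongly_connected_dicores
    (k1 k2 : ℕ) (hk1 : 2 ≤ k1) (hk2 : 2 ≤ k2) (ε C1 : ℝ) (hε : 0 < ε)
    (hC1 : ((max k1 k2 : ℕ) : ℝ) + ε < C1) :
    ∃ C : ℝ, 0 < C ∧ ∀ N M : ℕ, 0 < N → 0 < M →
      (((max k1 k2 : ℕ) : ℝ) + ε) * N ≤ M → (M : ℝ) ≤ C1 * N →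
      |(Nat.card {E : Finset (Fin N × Fin N) //
            IsDicore k1 k2 N M E ∧ KStronglyConnected (min k1 k2) E} : ℝ) /
          (Nat.card {E : Finset (Fin N × Fin N) // IsDicore k1 k2 N M E} : ℝ) - 1| ≤
        C / (N : ℝ) ^ (min k1 k2 - 1) := by
  have hC1pos : 0 < C1 := lt_of_le_of_lt (by positivity) hC1
  have hrare : IsRare k1 k2 ε C1 (min k1 k2 - 1) fun _ E => ¬ KStronglyConnected (min k1 k2) E :=
    isRare_not_kStronglyConnected (le_min hk1 hk2) (min_le_left _ _) (min_le_right _ _) hε hC1pos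
  obtain ⟨C, hC, hratio⟩ := hrare.exists_abs_ratio_sub_one_le hε
  refine ⟨C, hC, fun N M hN _ hle hM => ?_⟩
  rw [natCard_isDicore, natCard_isDicore_and]
  exact hratio N M hN (inRange_of_max hle hM)
end

section
/- Fix integers k1, k2 ≥ 2 and reals ε > 0 and C1 > max{k1,k2} + ε. Then there is a constant c0 > 0 such that for all positive integers N, M with (max{k1,k2}+ε)·N ≤ M ≤ C1·N the following holds: letting z_i, z_o > 0 be the unique roots of z_i·f_{k1−1}(z_i)/f_{k1}(z_i) = M/N and z_o·f_{k2−1}(z_o)/f_{k2}(z_o) = M/N, the number S_{N,M} of sequences x ∈ {1,…,N}^{2M} in which every i ∈ {1,…,N} occurs at least k1 times among the even-indexed entries and at least k2 times among the odd-indexed entries satisfies S_{N,M} ≥ c0 · N^{-1} · (M!)² · f_{k1}(z_i)^N · f_{k2}(z_o)^N / (z_i^M · z_o^M). -/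
/-- `fk k x = ∑_{j ≥ k} x^j / j!`, the tail of the exponential series. -/
noncomputable def fk (k : ℕ) (x : ℝ) : ℝ := ∑' n : ℕ, x ^ (n + k) / (n + k).factorial

/-- The (0-based) index of the 1-based odd position `x_{2r-1}` in a sequence of
length `2M`, for `r ∈ {1,…,M}` (given 0-based). -/
def oddIdx {M : ℕ} (r : Fin M) : Fin (2 * M) :=
  ⟨2 * r.1, by have := r.isLt; omega⟩

/-- The (0-based) index of the 1-based even position `x_{2r}` in a sequence of
length `2M`, for `r ∈ {1,…,M}` (given 0-based). -/
def evenIdx {M : ℕ} (r : Fin M) : Fin (2 * M) :=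
  ⟨2 * r.1 + 1, by have := r.isLt; omega⟩

/-- A sequence `x ∈ [N]^{2M}` is admissible if every `i ∈ [N]` occurs at least
`k1` times among the even-indexed entries `x_2, x_4, …, x_{2M}` and at least
`k2` times among the odd-indexed entries `x_1, x_3, …, x_{2M-1}`. -/
def Admissible (k1 k2 N M : ℕ) (x : Fin (2 * M) → Fin N) : Prop :=
  ∀ i : Fin N,
    k1 ≤ (Finset.univ.filter (fun r : Fin M => x (evenIdx r) = i)).card ∧
    k2 ≤ (Finset.univ.filter (fun r : Fin M => x (oddIdx r) = i)).card

/-!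
A function `p : Fin M → Fin N` with all fibers of size at least `k` is counted by `M!` times the
coefficient of `x ^ M` in `f_k ^ N`, that is, of `x ^ L` in `F ^ N`, where `F(x) = f_k(x) / x ^ k`
and `L = M - k N`. The sequences counted by the theorem are pairs of such functions, so each factor
needs a lower bound for a coefficient within a factor `√N` of the saddle point value
`F(z) ^ N / z ^ L`.

No local limit theorem is necessary. The coefficients `b n` of `F ^ N` are log-concave, because
`2 × 2` total positivity of Toeplitz matrices passes to products. Hence for the tilt
`w = b (L - 1) / b L` the weights `b n * w ^ n` are maximal at `n = L`. Their total mass is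
`F(w) ^ N` and their variance is `O(N)`, so by Chebyshev's inequality `b L * w ^ L` is at least a
constant times `F(w) ^ N / √N`. Finally `F(w) ^ N / w ^ L ≥ F(z) ^ N / z ^ L`, since the equation
defining `z` says that `z` minimizes `x ↦ F(x) ^ N / x ^ L`. The constants are uniform because `w`
is bounded: `F ≤ (k + 1) F'` coefficientwise, which gives `w ≤ (k + 1) L / N`.
-/

open scoped PowerSeries

section Counting

open Finset PowerSeries
open scoped Nat

variable {α ι : Type*} [Fintype α] [Fintype ι] [DecidableEq ι]

theorem sum_card_fibers_eq_card (p : α → ι) : ∑ i, #{a | p a = i} = Fintype.card α := by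
  rw [← card_univ, card_eq_sum_card_fiberwise (f := p) (t := univ) (by simp)]

variable [DecidableEq α]

theorem card_functions_fibers_eq_multinomial (l : ι → ℕ) (hl : ∑ i, l i = Fintype.card α) :
    #{p : α → ι | ∀ i, #{a | p a = i} = l i} = Nat.multinomial univ l := by
  let d : ι →₀ ℕ := Finsupp.equivFunOnFinite.symm l
  have hmonomial (p : α → ι) : ∏ a, (MvPolynomial.X (p a) : MvPolynomial ι ℕ) =
      MvPolynomial.monomial (∑ a, Finsupp.single (p a) 1) 1 := by
    rw [MvPolynomial.monomial_sum_one]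
    rfl
  have hfibers (p : α → ι) :
      ∑ a, Finsupp.single (p a) 1 = d ↔ ∀ i, #{a | p a = i} = l i := by
    simp [d, Finsupp.ext_iff, Finsupp.finsetSum_apply, Finsupp.single_apply]
  have hexpand : MvPolynomial.coeff d
      ((∑ i, (MvPolynomial.X i : MvPolynomial ι ℕ)) ^ Fintype.card α) =
        #{p : α → ι | ∀ i, #{a | p a = i} = l i} := by
    rw [← card_univ, ← prod_const, prod_univ_sum, Fintype.piFinset_univ, MvPolynomial.coeff_sum]
    simp_rw [hmonomial, MvPolynomial.coeff_monomial, hfibers]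
    simp
  rw [← hexpand, MvPolynomial.coeff_sum_X_pow_of_fintype, if_pos, Nat.cast_id]
  · exact (Finsupp.multinomial_of_support_subset (subset_univ _)).symm
  · simpa [Finsupp.sum_fintype, d] using hl

theorem card_functions_fibers_eq_factorial_mul_coeff_prod (K : Type*) [Field K] [CharZero K]
    (P : ι → ℕ → Prop) [∀ i, DecidablePred (P i)] :
    (#{p : α → ι | ∀ i, P i #{a | p a = i}} : K) = (Fintype.card α)! *
      coeff (Fintype.card α) (∏ i, PowerSeries.mk fun j => if P i j then (1 / j ! : K) else 0) := by
  rw [coeff_prod, mul_sum, card_eq_sum_card_fiberwise (t := finsuppAntidiag univ (Fintype.card α))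
    (f := fun p => Finsupp.equivFunOnFinite.symm fun i => #{a | p a = i})
    (by simp [Set.MapsTo, sum_card_fibers_eq_card])]
  push_cast
  refine sum_congr rfl fun l hl => ?_
  rw [mem_finsuppAntidiag] at hl
  simp only [coeff_mk, filter_filter, Finsupp.ext_iff, Finsupp.equivFunOnFinite_symm_apply_apply]
  by_cases h : ∀ i, P i (l i)
  · have hcard : #{p : α → ι | (∀ i, P i #{a | p a = i}) ∧ ∀ i, #{a | p a = i} = l i} =
        Nat.multinomial univ l := by
      rw [← card_functions_fibers_eq_multinomial (α := α) l hl.1]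
      exact congrArg card (filter_congr fun p _ => and_iff_right_of_imp fun hp i => hp i ▸ h i)
    have hfactorial : ((Fintype.card α)! : K) = (∏ i, (l i)! : K) * Nat.multinomial univ l := by
      exact_mod_cast hl.1 ▸ (Nat.multinomial_spec univ l).symm
    have hne : (∏ i, (l i)! : K) ≠ 0 :=
      prod_ne_zero_iff.2 fun i _ => Nat.cast_ne_zero.2 (Nat.factorial_ne_zero _)
    simp only [hcard, h, if_true, hfactorial, one_div, prod_inv_distrib]
    field_simp
  · obtain ⟨i, hi⟩ := not_forall.1 h
    rw [prod_eq_zero (mem_univ i) (if_neg hi), mul_zero, Nat.cast_eq_zero, card_eq_zero,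
      filter_eq_empty_iff]
    exact fun p _ hp => hi (hp.2 i ▸ hp.1 i)

/-- The power series of `f_k(x) / x ^ k`. Dividing out `x ^ k` makes all coefficients positive. -/
noncomputable def tailSeries (k : ℕ) : ℝ⟦X⟧ :=
  PowerSeries.mk fun n => 1 / ((n + k)! : ℝ)

theorem coeff_tailSeries (k n : ℕ) : coeff n (tailSeries k) = 1 / ((n + k)! : ℝ) :=
  coeff_mk _ _

theorem coeff_tailSeries_pos (k n : ℕ) : 0 < coeff n (tailSeries k) := by
  rw [coeff_tailSeries]
  positivity

theorem X_pow_mul_tailSeries (k : ℕ) :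
    X ^ k * tailSeries k = PowerSeries.mk fun j => if k ≤ j then 1 / (j ! : ℝ) else 0 := by
  ext j
  rw [coeff_X_pow_mul', coeff_mk]
  split_ifs with h
  · rw [coeff_tailSeries, Nat.sub_add_cancel h]
  · rfl

theorem card_functions_le_fibers_eq_factorial_mul_coeff {k L : ℕ}
    (hcard : Fintype.card α = L + k * Fintype.card ι) :
    (#{p : α → ι | ∀ i, k ≤ #{a | p a = i}} : ℝ) =
      (Fintype.card α)! * coeff L (tailSeries k ^ Fintype.card ι) := by
  rw [card_functions_fibers_eq_factorial_mul_coeff_prod ℝ fun _ j => k ≤ j, prod_const, card_univ,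
    ← X_pow_mul_tailSeries, mul_pow, ← pow_mul, hcard, coeff_X_pow_mul]

end Counting

section Splitting

open Finset

theorem bijective_sumElim_evenIdx_oddIdx (M : ℕ) :
    Function.Bijective (Sum.elim evenIdx oddIdx : Fin M ⊕ Fin M → Fin (2 * M)) := by
  refine ⟨?_, fun j => ?_⟩
  · rintro (a | a) (b | b) h <;> simp only [Sum.elim_inl, Sum.elim_inr, evenIdx, oddIdx,
      Fin.mk.injEq] at h <;> grind
  · rcases Nat.even_or_odd' j.1 with ⟨r, hr | hr⟩
    · exact ⟨.inr ⟨r, by omega⟩, Fin.ext hr.symm⟩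
    · exact ⟨.inl ⟨r, by omega⟩, Fin.ext hr.symm⟩

theorem card_admissible (k1 k2 N M : ℕ) :
    Nat.card {x : Fin (2 * M) → Fin N // Admissible k1 k2 N M x} =
      #{p : Fin M → Fin N | ∀ i, k1 ≤ #{r | p r = i}} *
        #{p : Fin M → Fin N | ∀ i, k2 ≤ #{r | p r = i}} := by
  let split : (Fin (2 * M) → Fin N) ≃ (Fin M → Fin N) × (Fin M → Fin N) :=
    ((Equiv.ofBijective _ (bijective_sumElim_evenIdx_oddIdx M)).arrowCongr (.refl _)).symm.trans
      (.sumArrowEquivProdArrow _ _ _)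
  rw [← card_product, ← Fintype.card_coe, ← Nat.card_eq_fintype_card]
  refine Nat.card_congr (split.subtypeEquiv fun x => ?_)
  simp only [Admissible, forall_and, mem_product, mem_filter, mem_univ, true_and]
  rfl

end Splitting

section TotalPositivity

open Finset PowerSeries

variable {R : Type*} [CommRing R] [LinearOrder R] [IsStrictOrderedRing R]

/-- The entry `(r, i)` of the lower triangular Toeplitz matrix of the coefficients of `φ`.
Products of these matrices correspond to products of power series. -/
noncomputable def toeplitz (φ : R⟦X⟧) (r i : ℕ) : R :=
  if i ≤ r then coeff (r - i) φ else 0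

/-- All `2 × 2` minors of the Toeplitz matrix of `φ` are nonnegative. For nonnegative coefficients
this is log-concavity without internal zeros, in a form that passes to products. -/
def IsTotallyPositiveTwo (φ : R⟦X⟧) : Prop :=
  ∀ ⦃r s i j⦄, r ≤ s → i ≤ j →
    toeplitz φ r j * toeplitz φ s i ≤ toeplitz φ r i * toeplitz φ s j

omit [LinearOrder R] [IsStrictOrderedRing R] in
theorem toeplitz_mul (φ ψ : R⟦X⟧) {r K : ℕ} (c : ℕ) (hr : r < K) :
    toeplitz (φ * ψ) r c = ∑ i ∈ range K, toeplitz φ r i * toeplitz ψ i c := by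
  have hzero : ∀ i ∈ range K, i ∉ Ico c (r + 1) → toeplitz φ r i * toeplitz ψ i c = 0 := by
    intro i _ hi
    unfold toeplitz
    grind
  rw [← sum_subset (fun i hi => by grind) hzero]
  rcases le_or_gt c r with hc | hc
  · rw [sum_Ico_eq_sum_range, toeplitz, if_pos hc, mul_comm φ, coeff_mul,
      Nat.sum_antidiagonal_eq_sum_range_succ (fun a b => coeff a ψ * coeff b φ),
      Nat.succ_sub hc]
    refine sum_congr rfl fun a ha => ?_
    rw [mem_range] at ha
    rw [toeplitz, toeplitz, if_pos (by omega), if_pos (by omega), mul_comm]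
    congr 3 <;> omega
  · rw [Ico_eq_empty (by omega), sum_empty, toeplitz, if_neg (by omega)]

/-- Symmetrizing the double sum exhibits the difference of the two sides as a sum of products of
two minors (the Cauchy–Binet formula). -/
theorem sum_mul_sum_le_sum_mul_sum_of_minors {ι : Type*} [LinearOrder ι] (s : Finset ι)
    {u v x y : ι → R} (huv : ∀ i j, i ≤ j → u j * v i ≤ u i * v j)
    (hxy : ∀ i j, i ≤ j → y i * x j ≤ x i * y j) :
    (∑ i ∈ s, u i * y i) * ∑ i ∈ s, v i * x i ≤ (∑ i ∈ s, u i * x i) * ∑ i ∈ s, v i * y i := by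
  let D (i j : ι) : R := u i * x i * (v j * y j) - u i * y i * (v j * x j)
  have hfactor (i j : ι) : D i j + D j i = (u i * v j - u j * v i) * (x i * y j - y i * x j) := by
    ring
  have hminors (i j : ι) : 0 ≤ D i j + D j i := by
    rw [hfactor]
    rcases le_total i j with hij | hij
    · exact mul_nonneg (sub_nonneg.2 (huv i j hij)) (sub_nonneg.2 (hxy i j hij))
    · refine mul_nonneg_of_nonpos_of_nonpos ?_ ?_
      · linarith [huv j i hij]
      · linarith [hxy j i hij]
  have hsymm : 2 * ∑ i ∈ s, ∑ j ∈ s, D i j = ∑ i ∈ s, ∑ j ∈ s, (D i j + D j i) := by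
    simp_rw [sum_add_distrib]
    rw [sum_comm (f := fun i j => D j i), two_mul]
  have hnonneg : 0 ≤ ∑ i ∈ s, ∑ j ∈ s, (D i j + D j i) :=
    sum_nonneg fun i _ => sum_nonneg fun j _ => hminors i j
  rw [← sub_nonneg, sum_mul_sum, sum_mul_sum]
  simp_rw [← sum_sub_distrib]
  linarith

theorem IsTotallyPositiveTwo.mul {φ ψ : R⟦X⟧} (hφ : IsTotallyPositiveTwo φ)
    (hψ : IsTotallyPositiveTwo ψ) : IsTotallyPositiveTwo (φ * ψ) := by
  intro r s c d hrs hcd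
  have hr : r < s + 1 := by omega
  rw [toeplitz_mul φ ψ _ hr, toeplitz_mul φ ψ _ hr, toeplitz_mul φ ψ _ s.lt_succ_self,
    toeplitz_mul φ ψ _ s.lt_succ_self]
  exact sum_mul_sum_le_sum_mul_sum_of_minors _ (fun i j hij => hφ hrs hij)
    fun i j hij => hψ hij hcd

theorem isTotallyPositiveTwo_one : IsTotallyPositiveTwo (1 : R⟦X⟧) := by
  intro r s i j hrs hij
  have hone (r i : ℕ) : toeplitz (1 : R⟦X⟧) r i = if r = i then 1 else 0 := by
    simp only [toeplitz, coeff_one]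
    grind
  simp only [hone]
  split_ifs <;> first | omega | simp

theorem IsTotallyPositiveTwo.pow {φ : R⟦X⟧} (hφ : IsTotallyPositiveTwo φ) (N : ℕ) :
    IsTotallyPositiveTwo (φ ^ N) := by
  induction N with
  | zero => simpa using isTotallyPositiveTwo_one
  | succ N ih => exact pow_succ φ N ▸ ih.mul hφ

omit [IsStrictOrderedRing R] in
theorem IsTotallyPositiveTwo.coeff_mul_coeff_succ_le {φ : R⟦X⟧} (hφ : IsTotallyPositiveTwo φ)
    {m n : ℕ} (hmn : m ≤ n) :
    coeff m φ * coeff (n + 1) φ ≤ coeff (m + 1) φ * coeff n φ := by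
  simpa [toeplitz] using hφ (Nat.succ_le_succ hmn) zero_le_one

theorem le_of_mul_succ_le_succ_mul_of_eq_succ {p : ℕ → R} {L : ℕ} (hp : ∀ n, 0 < p n)
    (hlc : ∀ m n, m ≤ n → p m * p (n + 1) ≤ p (m + 1) * p n) (hL : p L = p (L + 1)) (n : ℕ) :
    p n ≤ p L := by
  rcases le_total n L with hn | hn
  · refine Nat.decreasingInduction' (P := fun n => p n ≤ p L) (fun m hm _ ih => ?_) hn le_rfl
    exact (le_of_mul_le_mul_right (hL ▸ hlc m L hm.le) (hp L)).trans ih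
  · induction n, hn using Nat.le_induction with
    | base => exact le_rfl
    | succ n hn ih =>
      refine le_trans (le_of_mul_le_mul_left ?_ (hp L)) ih
      simpa only [← hL] using hlc L n hn

theorem IsTotallyPositiveTwo.coeff_mul_pow_le {K : Type*} [Field K] [LinearOrder K]
    [IsStrictOrderedRing K] {φ : K⟦X⟧} (hφ : IsTotallyPositiveTwo φ)
    (hpos : ∀ n, 0 < coeff n φ) (L n : ℕ) :
    coeff n φ * (coeff L φ / coeff (L + 1) φ) ^ n ≤
      coeff (L + 1) φ * (coeff L φ / coeff (L + 1) φ) ^ (L + 1) := by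
  set w := coeff L φ / coeff (L + 1) φ with hw_def
  have hw : 0 < w := div_pos (hpos _) (hpos _)
  have hL : coeff L φ * w ^ L = coeff (L + 1) φ * w ^ (L + 1) := by
    rw [pow_succ', ← mul_assoc, hw_def, mul_div_cancel₀ _ (hpos _).ne']
  rw [← hL]
  refine le_of_mul_succ_le_succ_mul_of_eq_succ (p := fun n => coeff n φ * w ^ n)
    (fun n => mul_pos (hpos n) (pow_pos hw n)) (fun m n hmn => ?_) hL n
  calc coeff m φ * w ^ m * (coeff (n + 1) φ * w ^ (n + 1))
      = coeff m φ * coeff (n + 1) φ * w ^ (m + n + 1) := by ring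
    _ ≤ coeff (m + 1) φ * coeff n φ * w ^ (m + n + 1) := by
      gcongr ?_ * _
      exact hφ.coeff_mul_coeff_succ_le hmn
    _ = coeff (m + 1) φ * w ^ (m + 1) * (coeff n φ * w ^ n) := by ring

end TotalPositivity

section Coefficients

open Finset PowerSeries

variable {R : Type*} [CommRing R] [LinearOrder R] [IsStrictOrderedRing R] {φ : R⟦X⟧}

theorem coeff_pow_nonneg (hφ : ∀ n, 0 ≤ coeff n φ) (N n : ℕ) : 0 ≤ coeff n (φ ^ N) := by
  rw [coeff_pow]
  exact sum_nonneg fun l _ => prod_nonneg fun i _ => hφ _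

theorem coeff_pow_pos (hφ : ∀ n, 0 < coeff n φ) {N : ℕ} (hN : N ≠ 0) (n : ℕ) :
    0 < coeff n (φ ^ N) := by
  induction N, Nat.one_le_iff_ne_zero.2 hN using Nat.le_induction generalizing n with
  | base => simpa using hφ n
  | succ N hN ih =>
    rw [pow_succ, coeff_mul]
    exact sum_pos (fun x _ => mul_pos (ih (by omega) _) (hφ _)) ⟨(0, n), by simp⟩

theorem mul_coeff_pow_le_mul_coeff_derivative_pow {c : R} (hφ : ∀ n, 0 ≤ coeff n φ)
    (hc : ∀ n, coeff n φ ≤ c * coeff n (d⁄dX R φ)) (N n : ℕ) :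
    N * coeff n (φ ^ N) ≤ c * coeff n (d⁄dX R (φ ^ N)) := by
  rcases N with _ | N
  · simp
  have hderiv : coeff n (d⁄dX R (φ ^ (N + 1))) =
      (N + 1 : ℕ) * ∑ x ∈ antidiagonal n, coeff x.1 (φ ^ N) * coeff x.2 (d⁄dX R φ) := by
    rw [derivative_pow, Nat.add_sub_cancel, mul_assoc, ← nsmul_eq_mul, map_nsmul, nsmul_eq_mul,
      coeff_mul]
  rw [hderiv, pow_succ, coeff_mul, mul_left_comm, mul_sum (a := c)]
  refine mul_le_mul_of_nonneg_left (sum_le_sum fun x _ => ?_) (Nat.cast_nonneg _)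
  rw [mul_left_comm]
  exact mul_le_mul_of_nonneg_left (hc _) (coeff_pow_nonneg hφ N _)

end Coefficients

section Moments

open Finset PowerSeries

/-- The real weights `coeff n φ` on `ℕ` have total mass `a`, mean `μ` and variance `v`. The weights
need not be normalized, so that products of power series correspond to convolutions. -/
structure HasMoments (φ : ℝ⟦X⟧) (a μ v : ℝ) : Prop where
  mass : HasSum (fun n => coeff n φ) a
  centered_first : HasSum (fun n : ℕ => (n - μ) * coeff n φ) 0
  centered_second : HasSum (fun n : ℕ => (n - μ) ^ 2 * coeff n φ) (v * a)

theorem hasSum_sum_mul_antidiagonal {f g : ℕ → ℝ} {a b : ℝ} (hf : HasSum f a) (hg : HasSum g b) :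
    HasSum (fun n => ∑ x ∈ antidiagonal n, f x.1 * g x.2) (a * b) := by
  have hsummable :=
    (summable_norm_sum_mul_antidiagonal_of_summable_norm hf.summable.norm hg.summable.norm).of_norm
  rw [← hf.tsum_eq, ← hg.tsum_eq, tsum_mul_tsum_eq_tsum_sum_antidiagonal_of_summable_norm
    hf.summable.norm hg.summable.norm]
  exact hsummable.hasSum

theorem hasMoments_one : HasMoments (1 : ℝ⟦X⟧) 1 0 0 := by
  have hsingle (f : ℕ → ℝ) : HasSum (fun n => f n * coeff n (1 : ℝ⟦X⟧)) (f 0) := by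
    simpa using hasSum_single (f := fun n => f n * coeff n (1 : ℝ⟦X⟧)) 0
      fun n hn => by simp [coeff_one, hn]
  refine ⟨?_, ?_, ?_⟩
  · simpa using hsingle 1
  · simpa using hsingle fun n => n - 0
  · convert hsingle fun n => (n - 0) ^ 2 using 1
    simp

theorem HasMoments.mul {φ ψ : ℝ⟦X⟧} {a b μ ν v w : ℝ} (hφ : HasMoments φ a μ v)
    (hψ : HasMoments ψ b ν w) : HasMoments (φ * ψ) (a * b) (μ + ν) (v + w) := by
  have hcentered {n : ℕ} {x : ℕ × ℕ} (hx : x ∈ antidiagonal n) :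
      (n : ℝ) - (μ + ν) = (x.1 - μ) + (x.2 - ν) := by
    rw [← mem_antidiagonal.1 hx]
    push_cast
    ring
  refine ⟨?_, ?_, ?_⟩
  · simpa only [coeff_mul] using hasSum_sum_mul_antidiagonal hφ.mass hψ.mass
  · convert (hasSum_sum_mul_antidiagonal hφ.centered_first hψ.mass).add
      (hasSum_sum_mul_antidiagonal hφ.mass hψ.centered_first) using 1
    · ext n
      rw [coeff_mul, mul_sum, ← sum_add_distrib]
      refine sum_congr rfl fun x hx => ?_
      rw [hcentered hx]
      ring
    · ring
  · convert ((hasSum_sum_mul_antidiagonal hφ.centered_second hψ.mass).add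
      ((hasSum_sum_mul_antidiagonal hφ.centered_first hψ.centered_first).mul_left 2)).add
      (hasSum_sum_mul_antidiagonal hφ.mass hψ.centered_second) using 1
    · ext n
      rw [coeff_mul, mul_sum, mul_sum, ← sum_add_distrib, ← sum_add_distrib]
      refine sum_congr rfl fun x hx => ?_
      rw [hcentered hx]
      ring
    · ring

theorem HasMoments.pow {φ : ℝ⟦X⟧} {a μ v : ℝ} (hφ : HasMoments φ a μ v) (N : ℕ) :
    HasMoments (φ ^ N) (a ^ N) (N * μ) (N * v) := by
  induction N with
  | zero => simpa using hasMoments_one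
  | succ N ih =>
    convert ih.mul hφ using 1 <;> push_cast <;> ring

theorem HasMoments.one_sub_div_sq_mul_le_sum {φ : ℝ⟦X⟧} {a μ v r : ℝ} (hφ : HasMoments φ a μ v)
    (hnonneg : ∀ n, 0 ≤ coeff n φ) (hr : 0 < r) {s : Finset ℕ}
    (hs : ∀ n : ℕ, |(n : ℝ) - μ| < r → n ∈ s) : (1 - v / r ^ 2) * a ≤ ∑ n ∈ s, coeff n φ := by
  have hsum : HasSum (fun n : ℕ => ((n - μ) ^ 2 / r ^ 2 - 1) * coeff n φ) (v / r ^ 2 * a - a) := by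
    simpa only [sub_mul, one_mul, div_mul_eq_mul_div] using
      (hφ.centered_second.div_const (r ^ 2)).sub hφ.mass
  have hle : ∑ n ∈ s, -coeff n φ ≤ ∑ n ∈ s, ((n - μ) ^ 2 / r ^ 2 - 1) * coeff n φ := by
    refine sum_le_sum fun n _ => ?_
    have : 0 ≤ (n - μ) ^ 2 / r ^ 2 * coeff n φ := mul_nonneg (by positivity) (hnonneg n)
    linarith
  have htail : ∑ n ∈ s, ((n - μ) ^ 2 / r ^ 2 - 1) * coeff n φ ≤ v / r ^ 2 * a - a := by
    refine sum_le_hasSum s (fun n hn => mul_nonneg ?_ (hnonneg n)) hsum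
    have hfar : r ≤ |(n : ℝ) - μ| := not_lt.1 (mt (hs n) hn)
    rw [sub_nonneg, one_le_div (by positivity), ← sq_abs ((n : ℝ) - μ)]
    gcongr
  rw [sum_neg_distrib] at hle
  linarith

theorem card_Icc_ceil_floor_le {x y : ℝ} (hxy : x ≤ y) :
    (#(Icc ⌈x⌉₊ ⌊y⌋₊) : ℝ) ≤ y - x + 1 := by
  rw [Nat.card_Icc]
  rcases lt_or_ge y 0 with hy | hy
  · have hcard : ((⌊y⌋₊ + 1 - ⌈x⌉₊ : ℕ) : ℝ) ≤ 1 := by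
      rw [Nat.floor_of_nonpos hy.le]
      exact_mod_cast tsub_le_self
    linarith
  · rw [Nat.cast_sub, Nat.cast_succ]
    · linarith [Nat.le_ceil x, Nat.floor_le hy]
    · exact Nat.ceil_le.2 (hxy.trans (Nat.lt_succ_floor y).le)

theorem HasMoments.one_sub_div_sq_mul_le {φ : ℝ⟦X⟧} {a μ v r P : ℝ} (hφ : HasMoments φ a μ v)
    (hnonneg : ∀ n, 0 ≤ coeff n φ) (hr : 0 < r) (hP : ∀ n, coeff n φ ≤ P) :
    (1 - v / r ^ 2) * a ≤ (2 * r + 1) * P := by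
  let s := Icc ⌈μ - r⌉₊ ⌊μ + r⌋₊
  have hs (n : ℕ) (hn : |(n : ℝ) - μ| < r) : n ∈ s := by
    rw [abs_lt] at hn
    exact mem_Icc.2 ⟨Nat.ceil_le.2 (by linarith), Nat.le_floor (by linarith)⟩
  have hcard : (#s : ℝ) ≤ 2 * r + 1 :=
    (card_Icc_ceil_floor_le (by linarith)).trans_eq (by ring)
  calc (1 - v / r ^ 2) * a ≤ ∑ n ∈ s, coeff n φ :=
        hφ.one_sub_div_sq_mul_le_sum hnonneg hr hs
    _ ≤ #s * P := by simpa using sum_le_card_nsmul s _ P fun n _ => hP n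
    _ ≤ (2 * r + 1) * P := by
      gcongr
      exact (hnonneg 0).trans (hP 0)

theorem HasMoments.pow_le {φ : ℝ⟦X⟧} {a μ v V P : ℝ} (hφ : HasMoments φ a μ v)
    (hnonneg : ∀ n, 0 ≤ coeff n φ) (hvV : v ≤ V) (hV : 1 ≤ V) {N : ℕ} (hN : 0 < N)
    (hP : ∀ n, coeff n (φ ^ N) ≤ P) : a ^ N ≤ 7 * √V * √N * P := by
  have hN1 : (1 : ℝ) ≤ N := by exact_mod_cast hN
  have ha : 0 ≤ a := hφ.mass.nonneg hnonneg
  have hsqrt : 1 ≤ √V * √N := one_le_mul_of_one_le_of_one_le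
    (Real.one_le_sqrt.2 hV) (Real.one_le_sqrt.2 hN1)
  have hsq : (2 * (√V * √N)) ^ 2 = 4 * (V * N) := by
    rw [mul_pow, mul_pow, Real.sq_sqrt (by linarith), Real.sq_sqrt (by linarith)]
    norm_num
  have hvar : N * v / (2 * (√V * √N)) ^ 2 ≤ 1 / 4 := by
    rw [hsq, div_le_iff₀ (by positivity)]
    nlinarith
  have hP0 : 0 ≤ P := (coeff_pow_nonneg hnonneg N 0).trans (hP 0)
  have hmass : 3 / 4 * a ^ N ≤ 5 * (√V * √N) * P :=
    calc 3 / 4 * a ^ N ≤ (1 - N * v / (2 * (√V * √N)) ^ 2) * a ^ N := by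
          gcongr
          linarith
      _ ≤ (2 * (2 * (√V * √N)) + 1) * P :=
        (hφ.pow N).one_sub_div_sq_mul_le (coeff_pow_nonneg hnonneg N) (by linarith) hP
      _ ≤ 5 * (√V * √N) * P := by
        gcongr
        linarith
  nlinarith [mul_nonneg (zero_le_one.trans hsqrt) hP0]

end Moments

section EntireSeries

open PowerSeries

/-- The power series `φ` converges everywhere. -/
def IsEntire (φ : ℝ⟦X⟧) : Prop :=
  ∀ z : ℝ, Summable fun n => coeff n φ * z ^ n

/-- The value at `z` of the function defined by `φ`, with junk value `0` where `φ` diverges. -/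
noncomputable def seriesSum (φ : ℝ⟦X⟧) (z : ℝ) : ℝ :=
  ∑' n, coeff n φ * z ^ n

/-- The Euler operator `x d/dx`, whose iterates produce the moments of the coefficients. -/
noncomputable def eulerOp (φ : ℝ⟦X⟧) : ℝ⟦X⟧ :=
  PowerSeries.mk fun n => n * coeff n φ

/-- The logarithmic derivative `z φ'(z) / φ(z)`: the mean of the probability distribution on `ℕ`
with weights proportional to `coeff n φ * z ^ n`. -/
noncomputable def seriesMean (φ : ℝ⟦X⟧) (z : ℝ) : ℝ :=
  seriesSum (eulerOp φ) z / seriesSum φ z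

variable {φ : ℝ⟦X⟧}

theorem coeff_eulerOp (φ : ℝ⟦X⟧) (n : ℕ) : coeff n (eulerOp φ) = n * coeff n φ :=
  coeff_mk _ _

theorem coeff_eulerOp_nonneg (hnonneg : ∀ n, 0 ≤ coeff n φ) (n : ℕ) : 0 ≤ coeff n (eulerOp φ) := by
  rw [coeff_eulerOp]
  exact mul_nonneg n.cast_nonneg (hnonneg n)

theorem isEntire_eulerOp (hφ : IsEntire φ) : IsEntire (eulerOp φ) := by
  intro z
  refine (hφ (2 * z)).norm.of_norm_bounded fun n => ?_
  calc ‖coeff n (eulerOp φ) * z ^ n‖ = n * ‖coeff n φ * z ^ n‖ := by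
        rw [coeff_eulerOp, mul_assoc, norm_mul, Real.norm_natCast]
    _ ≤ 2 ^ n * ‖coeff n φ * z ^ n‖ := by
      gcongr
      exact_mod_cast n.lt_two_pow_self.le
    _ = ‖coeff n φ * (2 * z) ^ n‖ := by
      rw [mul_pow, mul_left_comm, norm_mul (2 ^ n), norm_pow, Real.norm_two]

namespace IsEntire

theorem hasSum (hφ : IsEntire φ) (z : ℝ) : HasSum (fun n => coeff n φ * z ^ n) (seriesSum φ z) :=
  (hφ z).hasSum

theorem hasMoments (hφ : IsEntire φ) {z : ℝ} (hz : seriesSum φ z ≠ 0) :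
    HasMoments (rescale z φ) (seriesSum φ z) (seriesMean φ z)
      (seriesSum (eulerOp (eulerOp φ)) z / seriesSum φ z - seriesMean φ z ^ 2) := by
  have hmass := hφ.hasSum z
  have hfirst := (isEntire_eulerOp hφ).hasSum z
  have hsecond := (isEntire_eulerOp (isEntire_eulerOp hφ)).hasSum z
  have hmean : seriesSum (eulerOp φ) z = seriesMean φ z * seriesSum φ z :=
    (div_mul_cancel₀ _ hz).symm
  simp only [coeff_eulerOp] at hfirst hsecond
  refine ⟨?_, ?_, ?_⟩ <;> simp only [coeff_rescale]
  · simpa only [mul_comm] using hmass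
  · convert hfirst.add (hmass.mul_left (-seriesMean φ z)) using 1
    · ext n
      ring
    · rw [hmean]
      ring
  · convert (hsecond.add (hfirst.mul_left (-(2 * seriesMean φ z)))).add
      (hmass.mul_left (seriesMean φ z ^ 2)) using 1
    · ext n
      ring
    · rw [hmean, sub_mul, div_mul_cancel₀ _ hz]
      ring

theorem coeff_zero_le_seriesSum (hφ : IsEntire φ) (hnonneg : ∀ n, 0 ≤ coeff n φ) {z : ℝ}
    (hz : 0 ≤ z) : coeff 0 φ ≤ seriesSum φ z := by
  simpa using le_hasSum (hφ.hasSum z) 0 fun n _ => mul_nonneg (hnonneg n) (pow_nonneg hz n)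

theorem seriesSum_mono (hφ : IsEntire φ) (hnonneg : ∀ n, 0 ≤ coeff n φ) {w z : ℝ} (hw : 0 ≤ w)
    (hwz : w ≤ z) : seriesSum φ w ≤ seriesSum φ z :=
  hasSum_le (fun n => mul_le_mul_of_nonneg_left (pow_le_pow_left₀ hw hwz n) (hnonneg n))
    (hφ.hasSum w) (hφ.hasSum z)

theorem seriesSum_pos (hφ : IsEntire φ) (hpos : ∀ n, 0 < coeff n φ) {z : ℝ} (hz : 0 ≤ z) :
    0 < seriesSum φ z :=
  (hpos 0).trans_le (hφ.coeff_zero_le_seriesSum (fun n => (hpos n).le) hz)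

theorem seriesMean_pos (hφ : IsEntire φ) (hpos : ∀ n, 0 < coeff n φ) {z : ℝ} (hz : 0 < z) :
    0 < seriesMean φ z := by
  refine div_pos ?_ (hφ.seriesSum_pos hpos hz.le)
  have hterm (n : ℕ) : 0 ≤ coeff n (eulerOp φ) * z ^ n :=
    mul_nonneg (coeff_eulerOp_nonneg (fun n => (hpos n).le) n) (pow_nonneg hz.le n)
  refine ((isEntire_eulerOp hφ) z).tsum_pos hterm 1 ?_
  simpa [coeff_eulerOp] using mul_pos (hpos 1) hz

theorem exists_seriesSum_pow_le (hφ : IsEntire φ) (hnonneg : ∀ n, 0 ≤ coeff n φ)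
    (hzero : 0 < coeff 0 φ) (R : ℝ) :
    ∃ A > 0, ∀ w, 0 ≤ w → w ≤ R → ∀ N : ℕ, 0 < N → ∀ P, (∀ n, coeff n (φ ^ N) * w ^ n ≤ P) →
      seriesSum φ w ^ N ≤ A * √N * P := by
  let V := max 1 (seriesSum (eulerOp (eulerOp φ)) R / coeff 0 φ)
  have hV : 1 ≤ V := le_max_left _ _
  refine ⟨7 * √V, by positivity, fun w hw hwR N hN P hP => ?_⟩
  have hφ₂ := isEntire_eulerOp (isEntire_eulerOp hφ)
  have hnonneg₂ := coeff_eulerOp_nonneg (coeff_eulerOp_nonneg hnonneg)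
  have hsum : coeff 0 φ ≤ seriesSum φ w := hφ.coeff_zero_le_seriesSum hnonneg hw
  have hsecond : 0 ≤ seriesSum (eulerOp (eulerOp φ)) w :=
    (hnonneg₂ 0).trans (hφ₂.coeff_zero_le_seriesSum hnonneg₂ hw)
  have hvariance : seriesSum (eulerOp (eulerOp φ)) w / seriesSum φ w -
      seriesMean φ w ^ 2 ≤ V :=
    calc _ ≤ seriesSum (eulerOp (eulerOp φ)) w / seriesSum φ w :=
          sub_le_self _ (sq_nonneg _)
      _ ≤ seriesSum (eulerOp (eulerOp φ)) R / coeff 0 φ := by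
        gcongr
        · exact hsecond.trans (hφ₂.seriesSum_mono hnonneg₂ hw hwR)
        · exact hφ₂.seriesSum_mono hnonneg₂ hw hwR
      _ ≤ V := le_max_right _ _
  refine (hφ.hasMoments (hzero.trans_le hsum).ne').pow_le (fun n => ?_) hvariance hV hN fun n => ?_
  · rw [coeff_rescale]
    exact mul_nonneg (pow_nonneg hw n) (hnonneg n)
  · rw [← map_pow, coeff_rescale, mul_comm]
    exact hP n

/-- Jensen's inequality: `x ^ n` lies above the tangent at the mean of the convex function
`t ↦ x ^ t`, where `x = w / z`. -/
theorem rpow_seriesMean_mul_seriesSum_le (hφ : IsEntire φ) (hnonneg : ∀ n, 0 ≤ coeff n φ)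
    {w z : ℝ} (hw : 0 < w) (hz : 0 < z) (hne : seriesSum φ z ≠ 0) :
    (w / z) ^ seriesMean φ z * seriesSum φ z ≤ seriesSum φ w := by
  set μ := seriesMean φ z
  have hx : 0 < w / z := div_pos hw hz
  have htangent (n : ℕ) : (w / z) ^ μ * (1 + (n - μ) * Real.log (w / z)) ≤ (w / z) ^ n := by
    rw [← Real.rpow_natCast, ← add_sub_cancel μ (n : ℝ), Real.rpow_add hx, add_sub_cancel_left,
      Real.rpow_def_of_pos hx (n - μ), mul_comm (Real.log _) ((n : ℝ) - μ), add_comm]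
    exact mul_le_mul_of_nonneg_left (Real.add_one_le_exp _) (Real.rpow_nonneg hx.le μ)
  have hmoments := hφ.hasMoments hne
  have hsum := (hmoments.mass.add (hmoments.centered_first.mul_left (Real.log (w / z)))).mul_left
    ((w / z) ^ μ)
  rw [mul_zero, add_zero] at hsum
  refine hasSum_le (fun n => ?_) hsum (hφ.hasSum w)
  rw [coeff_rescale]
  calc (w / z) ^ μ * (z ^ n * coeff n φ + Real.log (w / z) * ((n - μ) * (z ^ n * coeff n φ)))
      = (w / z) ^ μ * (1 + (n - μ) * Real.log (w / z)) * (coeff n φ * z ^ n) := by ring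
    _ ≤ (w / z) ^ n * (coeff n φ * z ^ n) :=
      mul_le_mul_of_nonneg_right (htangent n) (mul_nonneg (hnonneg n) (pow_nonneg hz.le n))
    _ = coeff n φ * w ^ n := by
      rw [div_pow, mul_left_comm, div_mul_cancel₀ _ (pow_ne_zero n hz.ne')]

theorem pow_mul_seriesSum_pow_le (hφ : IsEntire φ) (hnonneg : ∀ n, 0 ≤ coeff n φ) {w z : ℝ}
    (hw : 0 < w) (hz : 0 < z) (hsum : 0 < seriesSum φ z) {N L : ℕ} (hN : 0 < N)
    (hmean : seriesMean φ z = L / N) :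
    (w / z) ^ L * seriesSum φ z ^ N ≤ seriesSum φ w ^ N := by
  have hx : 0 ≤ w / z := (div_pos hw hz).le
  have hroot : ((w / z) ^ seriesMean φ z) ^ N = (w / z) ^ L := by
    rw [hmean, ← Real.rpow_mul_natCast hx, div_mul_cancel₀ _ (Nat.cast_ne_zero.2 hN.ne'),
      Real.rpow_natCast]
  rw [← hroot, ← mul_pow]
  exact pow_le_pow_left₀ (mul_nonneg (Real.rpow_nonneg hx _) hsum.le)
    (hφ.rpow_seriesMean_mul_seriesSum_le hnonneg hw hz hsum.ne') N

end IsEntire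

theorem coeff_pow_div_coeff_succ_pow_le {c : ℝ} (hpos : ∀ n, 0 < coeff n φ)
    (hc : ∀ n, coeff n φ ≤ c * coeff n (d⁄dX ℝ φ)) {N : ℕ} (hN : 0 < N) (L : ℕ) :
    coeff L (φ ^ N) / coeff (L + 1) (φ ^ N) ≤ c * (((L + 1 : ℕ) : ℝ) / N) := by
  have hratio := mul_coeff_pow_le_mul_coeff_derivative_pow (fun n => (hpos n).le) hc N L
  rw [coeff_derivative] at hratio
  rw [← mul_div_assoc, div_le_div_iff₀ (coeff_pow_pos hpos hN.ne' _) (by exact_mod_cast hN)]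
  push_cast
  linarith

theorem IsTotallyPositiveTwo.exists_seriesSum_pow_le (hTP : IsTotallyPositiveTwo φ)
    (hφ : IsEntire φ) (hpos : ∀ n, 0 < coeff n φ) {c : ℝ}
    (hc : ∀ n, coeff n φ ≤ c * coeff n (d⁄dX ℝ φ)) (C : ℝ) :
    ∃ A > 0, ∀ N L : ℕ, 0 < N → (L : ℝ) / N ≤ C → ∀ z, 0 < z → seriesMean φ z = L / N →
      seriesSum φ z ^ N ≤ A * √N * (coeff L (φ ^ N) * z ^ L) := by
  have hnonneg (n : ℕ) : 0 ≤ coeff n φ := (hpos n).le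
  have hc0 : 0 ≤ c := by
    have hderiv : 0 < coeff 0 (d⁄dX ℝ φ) := by simpa [coeff_derivative] using hpos 1
    exact nonneg_of_mul_nonneg_left ((hnonneg 0).trans (hc 0)) hderiv
  obtain ⟨A, hA, hmass⟩ := hφ.exists_seriesSum_pow_le hnonneg (hpos 0) (c * C)
  refine ⟨A, hA, fun N L hN hLC z hz hmean => ?_⟩
  have hL : L ≠ 0 := by
    rintro rfl
    simpa [hmean] using hφ.seriesMean_pos hpos hz
  obtain ⟨L, rfl⟩ := Nat.exists_eq_succ_of_ne_zero hL
  have hpow : ∀ n, 0 < coeff n (φ ^ N) := coeff_pow_pos hpos hN.ne'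
  set w := coeff L (φ ^ N) / coeff (L + 1) (φ ^ N)
  have hw : 0 < w := div_pos (hpow L) (hpow (L + 1))
  have hwC : w ≤ c * C :=
    (coeff_pow_div_coeff_succ_pow_le hpos hc hN L).trans (mul_le_mul_of_nonneg_left hLC hc0)
  have hmode : seriesSum φ w ^ N ≤ A * √N * (coeff (L + 1) (φ ^ N) * w ^ (L + 1)) :=
    hmass w hw.le hwC N hN _ ((hTP.pow N).coeff_mul_pow_le hpow L)
  have hsaddle : (w / z) ^ (L + 1) * seriesSum φ z ^ N ≤ seriesSum φ w ^ N :=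
    hφ.pow_mul_seriesSum_pow_le hnonneg hw hz (hφ.seriesSum_pos hpos hz.le) hN hmean
  have hcancel : (w / z) ^ (L + 1) * z ^ (L + 1) = w ^ (L + 1) := by
    rw [← mul_pow, div_mul_cancel₀ _ hz.ne']
  refine le_of_mul_le_mul_left ?_ (pow_pos (div_pos hw hz) (L + 1))
  calc (w / z) ^ (L + 1) * seriesSum φ z ^ N
      ≤ A * √N * (coeff (L + 1) (φ ^ N) * w ^ (L + 1)) := hsaddle.trans hmode
    _ = (w / z) ^ (L + 1) * (A * √N * (coeff (L + 1) (φ ^ N) * z ^ (L + 1))) := by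
      rw [← hcancel]
      ring

end EntireSeries

section TailSeries

open Finset PowerSeries

theorem factorial_add_mul_factorial_add_le (a p q : ℕ) :
    (a + p).factorial * (a + q).factorial ≤ a.factorial * (a + p + q).factorial := by
  rw [← Nat.factorial_mul_ascFactorial a q, ← Nat.factorial_mul_ascFactorial (a + p) q,
    mul_left_comm]
  gcongr
  omega

theorem isTotallyPositiveTwo_tailSeries (k : ℕ) : IsTotallyPositiveTwo (tailSeries k) := by
  intro r s i j hrs hij
  have hnonneg (r i : ℕ) : 0 ≤ toeplitz (tailSeries k) r i := by
    rw [toeplitz]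
    split_ifs
    exacts [(coeff_tailSeries_pos _ _).le, le_rfl]
  rcases lt_or_ge r j with hrj | hjr
  · rw [toeplitz, if_neg (not_le.2 hrj), zero_mul]
    exact mul_nonneg (hnonneg r i) (hnonneg s j)
  · obtain ⟨p, rfl⟩ := Nat.exists_eq_add_of_le hij
    obtain ⟨t, rfl⟩ := Nat.exists_eq_add_of_le hjr
    obtain ⟨q, rfl⟩ := Nat.exists_eq_add_of_le hrs
    have hfactorial := factorial_add_mul_factorial_add_le (t + k) p q
    simp only [toeplitz, coeff_tailSeries]
    rw [if_pos (by omega), if_pos (by omega), if_pos (by omega), if_pos (by omega),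
      show i + p + t - (i + p) + k = t + k by omega,
      show i + p + t + q - i + k = t + k + p + q by omega,
      show i + p + t - i + k = t + k + p by omega,
      show i + p + t + q - (i + p) + k = t + k + q by omega,
      one_div_mul_one_div, one_div_mul_one_div]
    exact one_div_le_one_div_of_le (by positivity) (by exact_mod_cast hfactorial)

theorem isEntire_tailSeries (k : ℕ) : IsEntire (tailSeries k) := by
  intro z
  refine (Real.summable_pow_div_factorial |z|).of_norm_bounded fun n => ?_
  rw [coeff_tailSeries, norm_mul, norm_pow, Real.norm_eq_abs z, Real.norm_of_nonneg (by positivity),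
    one_div_mul_eq_div]
  gcongr
  omega

theorem coeff_tailSeries_le (k n : ℕ) :
    coeff n (tailSeries k) ≤ (k + 1) * coeff n (d⁄dX ℝ (tailSeries k)) := by
  have hsub : (k + 1) * (1 / ((n + k + 1 : ℕ) * (n + k).factorial : ℝ) * (n + 1)) -
      1 / (n + k).factorial = n * k / ((n + k + 1 : ℕ) * (n + k).factorial) := by
    field_simp
    push_cast
    ring
  rw [coeff_derivative, coeff_tailSeries, coeff_tailSeries, Nat.succ_add, Nat.factorial_succ,
    Nat.cast_mul, ← sub_nonneg, hsub]
  positivity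

theorem fk_eq_pow_mul_seriesSum (k : ℕ) (z : ℝ) :
    fk k z = z ^ k * seriesSum (tailSeries k) z := by
  rw [fk, seriesSum, ← tsum_mul_left]
  refine tsum_congr fun n => ?_
  rw [coeff_tailSeries, pow_add]
  ring

theorem fk_nonneg (k : ℕ) {z : ℝ} (hz : 0 ≤ z) : 0 ≤ fk k z :=
  tsum_nonneg fun n => by positivity

theorem fk_pow_div_pow_add (k L N : ℕ) {z : ℝ} (hz : z ≠ 0) :
    fk k z ^ N / z ^ (L + k * N) = seriesSum (tailSeries k) z ^ N / z ^ L := by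
  rw [fk_eq_pow_mul_seriesSum, mul_pow, ← pow_mul, pow_add, mul_comm (z ^ L),
    mul_div_mul_left _ _ (pow_ne_zero _ hz)]

theorem mul_fk_div_fk_succ (k : ℕ) {z : ℝ} (hz : 0 < z) :
    z * fk k z / fk (k + 1) z = (k + 1 : ℕ) + seriesMean (tailSeries (k + 1)) z := by
  have hne : seriesSum (tailSeries (k + 1)) z ≠ 0 :=
    ((isEntire_tailSeries _).seriesSum_pos (coeff_tailSeries_pos _) hz.le).ne'
  have hsum : seriesSum (tailSeries k) z = (k + 1 : ℕ) * seriesSum (tailSeries (k + 1)) z +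
      seriesSum (eulerOp (tailSeries (k + 1))) z := by
    have hentire := isEntire_tailSeries (k + 1)
    rw [seriesSum, seriesSum, seriesSum, ← tsum_mul_left,
      ← ((hentire z).mul_left _).tsum_add (isEntire_eulerOp hentire z)]
    refine tsum_congr fun n => ?_
    rw [coeff_eulerOp, coeff_tailSeries, coeff_tailSeries, ← add_assoc, Nat.factorial_succ]
    push_cast
    field_simp
    ring
  rw [fk_eq_pow_mul_seriesSum, fk_eq_pow_mul_seriesSum, hsum, seriesMean, pow_succ']
  field_simp

theorem exists_fk_pow_le_card_functions {k : ℕ} (hk : 0 < k) (C : ℝ) :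
    ∃ A > 0, ∀ N M : ℕ, 0 < N → (M : ℝ) ≤ C * N → ∀ z, 0 < z →
      z * fk (k - 1) z / fk k z = M / N →
      M.factorial * fk k z ^ N / z ^ M ≤
        A * √N * #{p : Fin M → Fin N | ∀ i, k ≤ #{r | p r = i}} := by
  obtain ⟨k, rfl⟩ := Nat.exists_eq_add_one.2 hk
  have hentire := isEntire_tailSeries (k + 1)
  have hpos := coeff_tailSeries_pos (k + 1)
  obtain ⟨A, hA, hbound⟩ := (isTotallyPositiveTwo_tailSeries (k + 1)).exists_seriesSum_pow_le
    hentire hpos (coeff_tailSeries_le (k + 1)) C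
  refine ⟨A, hA, fun N M hN hMC z hz hroot => ?_⟩
  have hN' : (0 : ℝ) < N := by exact_mod_cast hN
  rw [Nat.add_sub_cancel, mul_fk_div_fk_succ k hz] at hroot
  have hkM : (k + 1) * N ≤ M := by
    have hmean := hentire.seriesMean_pos hpos hz
    have hle : ((k + 1 : ℕ) : ℝ) ≤ M / N := by linarith
    rw [le_div_iff₀ hN'] at hle
    exact_mod_cast hle
  obtain ⟨L, rfl⟩ := Nat.exists_eq_add_of_le' hkM
  have hmean : seriesMean (tailSeries (k + 1)) z = L / N := by
    rw [eq_sub_of_add_eq' hroot]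
    push_cast
    field_simp
    ring
  have hLC : (L : ℝ) / N ≤ C := by
    rw [div_le_iff₀ hN']
    refine le_trans ?_ hMC
    exact_mod_cast Nat.le_add_right _ _
  have hcount : (#{p : Fin (L + (k + 1) * N) → Fin N | ∀ i, k + 1 ≤ #{r | p r = i}} : ℝ) =
      (L + (k + 1) * N).factorial * coeff L (tailSeries (k + 1) ^ N) := by
    convert card_functions_le_fibers_eq_factorial_mul_coeff (α := Fin (L + (k + 1) * N))
      (ι := Fin N) (k := k + 1) (L := L) (by simp) <;> simp
  rw [hcount, mul_div_assoc, fk_pow_div_pow_add _ _ _ hz.ne', mul_left_comm]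
  gcongr
  rw [div_le_iff₀ (by positivity), mul_assoc]
  exact hbound N L hN hLC z hz hmean

end TailSeries

open Finset in
theorem admissible_sequences_lower_bound_general (k1 k2 : ℕ) (hk1 : 0 < k1) (hk2 : 0 < k2) (C : ℝ) :
    ∃ c0 : ℝ, 0 < c0 ∧ ∀ N M : ℕ, 0 < N → (M : ℝ) ≤ C * N →
      ∀ zi zo : ℝ, 0 < zi → 0 < zo →
        zi * fk (k1 - 1) zi / fk k1 zi = (M : ℝ) / N →
        zo * fk (k2 - 1) zo / fk k2 zo = (M : ℝ) / N →
        c0 * (N : ℝ)⁻¹ * (M.factorial : ℝ) ^ 2 * fk k1 zi ^ N * fk k2 zo ^ N /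
            (zi ^ M * zo ^ M) ≤
          (Nat.card {x : Fin (2 * M) → Fin N // Admissible k1 k2 N M x} : ℝ) := by
  obtain ⟨A₁, hA₁, hbound₁⟩ := exists_fk_pow_le_card_functions hk1 C
  obtain ⟨A₂, hA₂, hbound₂⟩ := exists_fk_pow_le_card_functions hk2 C
  refine ⟨(A₁ * A₂)⁻¹, by positivity, fun N M hN hMC zi zo hzi hzo hrooti hrooto => ?_⟩
  have hN' : (0 : ℝ) < N := by exact_mod_cast hN
  have hfk : 0 ≤ fk k2 zo := fk_nonneg k2 hzo.le
  rw [card_admissible, Nat.cast_mul]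
  set S₁ : ℕ := #{p : Fin M → Fin N | ∀ i, k1 ≤ #{r | p r = i}}
  set S₂ : ℕ := #{p : Fin M → Fin N | ∀ i, k2 ≤ #{r | p r = i}}
  calc _ = (A₁ * A₂ * N)⁻¹ *
        ((M.factorial * fk k1 zi ^ N / zi ^ M) * (M.factorial * fk k2 zo ^ N / zo ^ M)) := by
        field_simp
    _ ≤ (A₁ * A₂ * N)⁻¹ * ((A₁ * √N * S₁) * (A₂ * √N * S₂)) := by
        gcongr
        · exact hbound₁ N M hN hMC zi hzi hrooti
        · exact hbound₂ N M hN hMC zo hzo hrooto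
    _ = (S₁ : ℝ) * S₂ := by
        field_simp
        rw [Real.sq_sqrt hN'.le]

theorem admissible_sequences_lower_bound
    (k1 k2 : ℕ) (hk1 : 2 ≤ k1) (hk2 : 2 ≤ k2) (ε C1 : ℝ) (hε : 0 < ε)
    (hC1 : ((max k1 k2 : ℕ) : ℝ) + ε < C1) :
    ∃ c0 : ℝ, 0 < c0 ∧ ∀ N M : ℕ, 0 < N → 0 < M →
      (((max k1 k2 : ℕ) : ℝ) + ε) * N ≤ M → (M : ℝ) ≤ C1 * N →
      ∀ zi zo : ℝ, 0 < zi → 0 < zo →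
        zi * fk (k1 - 1) zi / fk k1 zi = (M : ℝ) / N →
        zo * fk (k2 - 1) zo / fk k2 zo = (M : ℝ) / N →
        c0 * (N : ℝ)⁻¹ * (M.factorial : ℝ) ^ 2 * fk k1 zi ^ N * fk k2 zo ^ N /
            (zi ^ M * zo ^ M) ≤
          (Nat.card {x : Fin (2 * M) → Fin N // Admissible k1 k2 N M x} : ℝ) := by
  obtain ⟨c0, hc0, hbound⟩ :=
    admissible_sequences_lower_bound_general k1 k2 (by omega) (by omega) C1
  exact ⟨c0, hc0, fun N M hN _ _ => hbound N M hN⟩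
end

section
/- For every integer k ≥ 1 and every real x > 0 one has the identity f_{k−1}(x)/f_k(x) = 1 + ( ∑_{j≥k} ((k−1)!/j!) · x^{j−k+1} )^{-1}; consequently the function x ↦ f_{k−1}(x)/f_k(x) is strictly decreasing on (0,∞), i.e. the logarithmic derivative of f_k is strictly decreasing, so f_k is strictly log-concave on (0,∞). -/
/-! Dividing `f_k` by the leading term `x ^ (k - 1) / (k - 1)!` of `f_{k-1}` leaves a power series
`g` with positive coefficients and no constant term. Since `f_{k-1}` is that leading term plus
`f_k`, the ratio `f_{k-1} / f_k` equals `1 + 1 / g`, which decreases because `g` increases; and it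
is the logarithmic derivative of `f_k` because `f_k' = f_{k-1}`. -/

open Set
open scoped Nat

theorem strictMonoOn_tsum {ι α β : Type*} [Preorder α] [AddCommGroup β] [PartialOrder β]
    [IsOrderedAddMonoid β] [TopologicalSpace β] [IsTopologicalAddGroup β] [OrderClosedTopology β]
    {f : ι → α → β} {s : Set α}
    (hsum : ∀ x ∈ s, Summable fun i => f i x) (hmono : ∀ i, MonotoneOn (f i) s)
    {i₀ : ι} (hstrict : StrictMonoOn (f i₀) s) :
    StrictMonoOn (fun x => ∑' i, f i x) s := fun x hx y hy hxy =>
  Summable.tsum_lt_tsum (fun i => hmono i hx hy hxy.le) (hstrict hx hy hxy) (hsum x hx) (hsum y hy)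

theorem strictConcaveOn_log_of_strictAntiOn_logDeriv {f : ℝ → ℝ} {s : Set ℝ} (hs : Convex ℝ s)
    (hf : ContinuousOn f s) (hf' : DifferentiableOn ℝ f (interior s)) (hne : ∀ x ∈ s, f x ≠ 0)
    (hanti : StrictAntiOn (logDeriv f) (interior s)) :
    StrictConcaveOn ℝ s fun x => Real.log (f x) := by
  refine StrictAntiOn.strictConcaveOn_of_deriv hs (hf.log hne) (hanti.congr fun x hx => ?_)
  have hdiff : DifferentiableAt ℝ f x := hf'.differentiableAt (isOpen_interior.mem_nhds hx)
  exact (Real.deriv_log_comp_eq_logDeriv hdiff (hne x (interior_subset hx))).symm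

theorem hasDerivAt_pow_succ_div_factorial {𝕜 : Type*} [NontriviallyNormedField 𝕜] [CharZero 𝕜]
    (k : ℕ) (x : 𝕜) : HasDerivAt (fun y : 𝕜 => y ^ (k + 1) / (k + 1)!) (x ^ k / k !) x := by
  refine ((hasDerivAt_pow (k + 1) x).div_const ((k + 1)! : 𝕜)).congr_deriv ?_
  rw [Nat.factorial_succ, Nat.cast_mul, Nat.add_sub_cancel,
    mul_div_mul_left _ _ (Nat.cast_ne_zero.2 k.succ_ne_zero)]

theorem summable_fk (k : ℕ) (x : ℝ) : Summable fun n : ℕ => x ^ (n + k) / (n + k)! :=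
  (summable_nat_add_iff k).2 (Real.summable_pow_div_factorial x)

theorem fk_pos (k : ℕ) {x : ℝ} (hx : 0 < x) : 0 < fk k x :=
  (summable_fk k x).tsum_pos (fun _ => by positivity) 0 (by positivity)

theorem fk_zero : fk 0 = Real.exp := by
  funext x
  simp [fk, Real.exp_eq_exp_ℝ, NormedSpace.exp_eq_tsum_div]

theorem fk_eq_pow_div_factorial_add_fk_succ (k : ℕ) (x : ℝ) :
    fk k x = x ^ k / k ! + fk (k + 1) x := by
  simp only [fk, (summable_fk k x).tsum_eq_zero_add, zero_add, add_right_comm _ 1 k, ← add_assoc]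

theorem fk_succ_eq_sub (k : ℕ) : fk (k + 1) = fun x => fk k x - x ^ k / k ! :=
  funext fun x => eq_sub_of_add_eq' (fk_eq_pow_div_factorial_add_fk_succ k x).symm

theorem hasDerivAt_fk_succ (k : ℕ) (x : ℝ) : HasDerivAt (fk (k + 1)) (fk k x) x := by
  induction k with
  | zero => simpa [fk_succ_eq_sub, fk_zero] using (Real.hasDerivAt_exp x).sub_const 1
  | succ k ih =>
    rw [fk_succ_eq_sub (k + 1), congrFun (fk_succ_eq_sub k) x]
    exact ih.sub (hasDerivAt_pow_succ_div_factorial k x)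

theorem logDeriv_fk_succ (k : ℕ) : logDeriv (fk (k + 1)) = fun x => fk k x / fk (k + 1) x :=
  funext fun x => by rw [logDeriv_apply, (hasDerivAt_fk_succ k x).deriv]

/-- The tail `fk (k + 1) x` measured in units of `x ^ k / k !`, the leading term of `fk k x`:
the series `∑_{j > k} (k! / j!) x^(j-k)`, indexed by `n = j - k - 1`. -/
noncomputable def normalizedTail (k : ℕ) (x : ℝ) : ℝ :=
  ∑' n : ℕ, (k ! : ℝ) / (n + (k + 1))! * x ^ (n + 1)

theorem pow_div_factorial_mul_normalizedTail_term (k n : ℕ) (x : ℝ) :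
    x ^ k / k ! * ((k ! : ℝ) / (n + (k + 1))! * x ^ (n + 1)) =
      x ^ (n + (k + 1)) / (n + (k + 1))! := by
  field_simp
  ring

theorem fk_succ_eq_mul_normalizedTail (k : ℕ) (x : ℝ) :
    fk (k + 1) x = x ^ k / k ! * normalizedTail k x := by
  simp only [fk, normalizedTail, ← tsum_mul_left, pow_div_factorial_mul_normalizedTail_term]

theorem summable_normalizedTail (k : ℕ) (x : ℝ) :
    Summable fun n : ℕ => (k ! : ℝ) / (n + (k + 1))! * x ^ (n + 1) := by
  rcases eq_or_ne x 0 with rfl | hx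
  · simp
  · have hlead : x ^ k / k ! ≠ 0 := by positivity
    rw [← summable_mul_left_iff hlead]
    simpa only [pow_div_factorial_mul_normalizedTail_term] using summable_fk (k + 1) x

theorem normalizedTail_pos (k : ℕ) {x : ℝ} (hx : 0 < x) : 0 < normalizedTail k x :=
  (summable_normalizedTail k x).tsum_pos (fun _ => by positivity) 0 (by positivity)

theorem strictMonoOn_normalizedTail (k : ℕ) : StrictMonoOn (normalizedTail k) (Ici 0) := by
  have hterm (n : ℕ) :
      StrictMonoOn (fun x : ℝ => (k ! : ℝ) / (n + (k + 1))! * x ^ (n + 1)) (Ici 0) := by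
    intro x (hx : 0 ≤ x) y _ hxy
    dsimp only
    gcongr
  exact strictMonoOn_tsum (fun x _ => summable_normalizedTail k x)
    (fun n => (hterm n).monotoneOn) (hterm 0)

theorem fk_div_fk_succ (k : ℕ) {x : ℝ} (hx : fk (k + 1) x ≠ 0) :
    fk k x / fk (k + 1) x = 1 + (normalizedTail k x)⁻¹ := by
  have hlead : x ^ k / k ! ≠ 0 := left_ne_zero_of_mul (fk_succ_eq_mul_normalizedTail k x ▸ hx)
  calc fk k x / fk (k + 1) x
      = 1 + x ^ k / k ! / fk (k + 1) x := by
        rw [fk_eq_pow_div_factorial_add_fk_succ k x, add_div, div_self hx, add_comm]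
    _ = 1 + (normalizedTail k x)⁻¹ := by
        rw [fk_succ_eq_mul_normalizedTail, div_mul_cancel_left₀ hlead]

theorem strictAntiOn_fk_div_fk_succ (k : ℕ) :
    StrictAntiOn (fun x : ℝ => fk k x / fk (k + 1) x) (Ioi 0) := by
  have hinv : StrictAntiOn (fun x => 1 + (normalizedTail k x)⁻¹) (Ioi 0) := fun x hx y hy hxy =>
    add_lt_add_right (inv_strictAnti₀ (normalizedTail_pos k hx)
      (strictMonoOn_normalizedTail k (Ioi_subset_Ici_self hx) (Ioi_subset_Ici_self hy) hxy)) 1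
  exact hinv.congr fun x hx => (fk_div_fk_succ k (fk_pos (k + 1) hx).ne').symm

theorem strictConcaveOn_log_fk_succ (k : ℕ) :
    StrictConcaveOn ℝ (Ioi 0) fun x : ℝ => Real.log (fk (k + 1) x) := by
  have hdiff : Differentiable ℝ (fk (k + 1)) := fun x => (hasDerivAt_fk_succ k x).differentiableAt
  refine strictConcaveOn_log_of_strictAntiOn_logDeriv (convex_Ioi 0) hdiff.continuous.continuousOn
    hdiff.differentiableOn (fun x hx => (fk_pos (k + 1) hx).ne') ?_
  rw [interior_Ioi, logDeriv_fk_succ]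
  exact strictAntiOn_fk_div_fk_succ k

theorem fk_ratio_identity_and_log_concavity (k : ℕ) (hk : 1 ≤ k) :
    (∀ x : ℝ, 0 < x →
      fk (k - 1) x / fk k x =
        1 + (∑' n : ℕ, ((k - 1).factorial : ℝ) / (n + k).factorial * x ^ (n + 1))⁻¹) ∧
    StrictAntiOn (fun x : ℝ => fk (k - 1) x / fk k x) (Set.Ioi 0) ∧
    StrictConcaveOn ℝ (Set.Ioi 0) (fun x : ℝ => Real.log (fk k x)) := by
  obtain ⟨m, rfl⟩ := Nat.exists_eq_add_of_le' hk
  exact ⟨fun x hx => fk_div_fk_succ m (fk_pos (m + 1) hx).ne', strictAntiOn_fk_div_fk_succ m,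
    strictConcaveOn_log_fk_succ m⟩
end
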